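/- arXiv:1503.05863 — 2 statements merged into one kernel-verified Lean document; each statement's English description precedes it below -/
import Mathlib

section
/- Let d ≥ 1, 2 ≤ p < ∞, and k = 2d(1/2 − 1/p). There exists a constant C > 0 such that for every 0 < ℏ ≤ 1 and every Schwartz function f on ℝ^d: ‖V_g(D_{ℏ^{−1/2}} f)‖_{L^p(ℝ^{2d})} ≤ C·ℏ^{d(1/2−1/p)/2}·‖f‖_{L^p(ℝ^d)} and ‖(1−ℏΔ)^{−k/2} f‖_{L^p(ℝ^d)} ≤ C·ℏ^{d(1/p−1/2)/2}·‖V_g(D_{ℏ^{−1/2}} f)‖_{L^p(ℝ^{2d})}. -/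
open MeasureTheory Complex Real
open scoped ENNReal RealInnerProductSpace

noncomputable section

abbrev E (d : ℕ) : Type := EuclideanSpace ℝ (Fin d)

/-- Phase space `ℝ^{2d} = ℝ^d × ℝ^d`. -/
abbrev P (d : ℕ) : Type := E d × E d

/-- The complex conjugate of the wave packet `π(z)g`, Gaussian window `g(y)=exp(-|y|²/2)`. -/
def pkbar (d : ℕ) (z : P d) (y : E d) : ℂ :=
  Complex.exp (-Complex.I * (⟪y, z.2⟫ : ℂ)) * Real.exp (-‖y - z.1‖ ^ 2 / 2)

/-- The short-time Fourier transform with Gaussian window. -/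
def stft (d : ℕ) (u : E d → ℂ) (z : P d) : ℂ := ∫ y, u y * pkbar d z y

/-- The Fourier transform `ℱu(ξ) = ∫ exp(-i x·ξ) u(x) dx`. -/
def FT (d : ℕ) (u : E d → ℂ) (ξ : E d) : ℂ :=
  ∫ x, Complex.exp (-Complex.I * (⟪x, ξ⟫ : ℂ)) * u x

/-- The semiclassical Bessel potential `(1-ℏΔ)^{k/2} u = ℱ⁻¹((1+ℏ|ξ|²)^{k/2} ℱu)`. -/
def besselh (d : ℕ) (h k : ℝ) (u : E d → ℂ) (x : E d) : ℂ :=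
  (((2 * π) ^ d : ℝ) : ℂ)⁻¹ *
    ∫ ξ, Complex.exp (Complex.I * (⟪x, ξ⟫ : ℂ)) *
      (((1 + h * ‖ξ‖ ^ 2) ^ (k / 2) : ℝ) : ℂ) * FT d u ξ

/-- The dilation `D_{ℏ^{-1/2}} u (x) = ℏ^{d/4}·u(ℏ^{1/2} x)`. -/
def dil (d : ℕ) (h : ℝ) (u : E d → ℂ) (x : E d) : ℂ :=
  (h ^ ((d : ℝ) / 4) : ℝ) * u ((h ^ ((1 : ℝ) / 2) : ℝ) • x)

theorem integral_cexp_inner_mul_gaussian (d : ℕ) {b : ℝ} (hb : 0 < b) (y : E d) :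
    ∫ ξ : E d, Complex.exp (Complex.I * (⟪y, ξ⟫ : ℂ)) * (Real.exp (-b * ‖ξ‖ ^ 2) : ℂ) =
      (((π / b) ^ ((d : ℝ) / 2) * Real.exp (-(1 / (4 * b)) * ‖y‖ ^ 2) : ℝ) : ℂ) := by
  have h := GaussianFourier.integral_cexp_neg_mul_sq_norm_add (V := E d) (b := (b : ℂ))
    (by simpa using hb) Complex.I y
  have e : (fun ξ : E d => Complex.exp (Complex.I * (⟪y, ξ⟫ : ℂ)) *
      (Real.exp (-b * ‖ξ‖ ^ 2) : ℂ)) =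
      fun ξ : E d => Complex.exp (-(b : ℂ) * ‖ξ‖ ^ 2 + Complex.I * (⟪y, ξ⟫ : ℂ)) := by
    ext ξ
    push_cast
    rw [← Complex.exp_add]
    ring_nf
  rw [e, h, finrank_euclideanSpace_fin]
  have hp : (0 : ℝ) ≤ π / b := by positivity
  push_cast
  rw [Complex.ofReal_cpow hp]
  push_cast
  congr 2
  rw [Complex.I_sq]
  ring

theorem integral_gaussian_mul_gaussian (d : ℕ) {a b : ℝ} (ha : 0 < a) (hb : 0 < b)
    (y y' : E d) :
    ∫ x : E d, Real.exp (-b * ‖y - x‖ ^ 2) * Real.exp (-a * ‖y' - x‖ ^ 2) =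
      (π / (a + b)) ^ ((d : ℝ) / 2) * Real.exp (-(a * b / (a + b)) * ‖y - y'‖ ^ 2) := by
  have hab : 0 < a + b := by positivity
  rw [← integral_add_right_eq_self _ y']
  have h := GaussianFourier.integral_cexp_neg_mul_sq_norm_add (V := E d) (b := ((a + b : ℝ) : ℂ))
    (by simpa using hab) ((2 * b : ℝ) : ℂ) (y - y')
  have e : (fun x : E d => Real.exp (-b * ‖y - (x + y')‖ ^ 2) *
      Real.exp (-a * ‖y' - (x + y')‖ ^ 2)) =
      fun x : E d => Real.exp (-b * ‖y - y'‖ ^ 2) *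
        Real.exp (-(a + b) * ‖x‖ ^ 2 + 2 * b * ⟪y - y', x⟫) := by
    ext x
    rw [← Real.exp_add, ← Real.exp_add]
    have h1 : y - (x + y') = (y - y') - x := by abel
    have h2 : y' - (x + y') = -x := by abel
    rw [h1, h2, norm_neg, norm_sub_sq_real]
    ring_nf
  rw [e, integral_const_mul]
  apply Complex.ofReal_injective
  have hp : (0 : ℝ) ≤ π / (a + b) := by positivity
  rw [Complex.ofReal_mul, ← integral_complex_ofReal]
  have e2 : (fun x : E d => ((Real.exp (-(a + b) * ‖x‖ ^ 2 + 2 * b * ⟪y - y', x⟫) : ℝ) : ℂ)) =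
    fun x : E d => Complex.exp (-((a + b : ℝ) : ℂ) * ‖x‖ ^ 2 +
      ((2 * b : ℝ) : ℂ) * (⟪y - y', x⟫ : ℂ)) := by
    ext x
    push_cast
    ring_nf
  rw [e2, h, finrank_euclideanSpace_fin]
  push_cast
  rw [Complex.ofReal_cpow hp]
  push_cast
  rw [mul_left_comm, ← Complex.exp_add]
  congr 2
  have : (a : ℂ) + b ≠ 0 := by exact_mod_cast hab.ne'
  field_simp
  ring

theorem integrable_gaussian (d : ℕ) {b : ℝ} (hb : 0 < b) :
    Integrable fun x : E d => Real.exp (-b * ‖x‖ ^ 2) := by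
  have h := (GaussianFourier.integrable_cexp_neg_mul_sq_norm_add (V := E d) (b := (b : ℂ))
    (by simpa using hb) 0 0).norm
  refine h.congr (.of_forall fun x => ?_)
  simp only [Complex.norm_exp]
  congr 1
  simp [← Complex.ofReal_pow]

theorem lintegral_gaussian (d : ℕ) {b : ℝ} (hb : 0 < b) :
    ∫⁻ x : E d, ENNReal.ofReal (Real.exp (-b * ‖x‖ ^ 2)) =
      ENNReal.ofReal ((π / b) ^ ((d : ℝ) / 2)) := by
  rw [← ofReal_integral_eq_lintegral_ofReal (integrable_gaussian d hb)
    (.of_forall fun x => (Real.exp_pos _).le), GaussianFourier.integral_rexp_neg_mul_sq_norm hb,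
    finrank_euclideanSpace_fin]

/-- The Fourier integral `∫ exp(i y·ξ) h(y) dy`, with the positive sign in the phase. -/
def ft (d : ℕ) (h : E d → ℂ) (ξ : E d) : ℂ :=
  ∫ y, Complex.exp (Complex.I * (⟪y, ξ⟫ : ℂ)) * h y

theorem norm_cexp_I_mul_real (t : ℝ) : ‖Complex.exp (Complex.I * (t : ℂ))‖ = 1 := by
  rw [mul_comm]; exact Complex.norm_exp_ofReal_mul_I t

theorem integrable_cexp_mul {d : ℕ} {h : E d → ℂ} (hh : Integrable h) (ξ : E d) :
    Integrable fun y => Complex.exp (Complex.I * (⟪y, ξ⟫ : ℂ)) * h y := by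
  refine hh.mono ((by fun_prop : Continuous fun y : E d =>
    Complex.exp (Complex.I * (⟪y, ξ⟫ : ℂ))).aestronglyMeasurable.mul hh.1) (.of_forall fun y => ?_)
  rw [norm_mul, norm_cexp_I_mul_real, one_mul]

theorem integral_ft_mul_ft_neg_mul_gaussian {d : ℕ} {h₁ h₂ : E d → ℂ} (hh₁ : Integrable h₁)
    (hh₂ : Integrable h₂) {ε : ℝ} (hε : 0 < ε) :
    ∫ ξ : E d, ft d h₁ ξ * ft d h₂ (-ξ) * (Real.exp (-ε * ‖ξ‖ ^ 2) : ℂ) =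
      ∫ q : E d × E d, h₁ q.1 * h₂ q.2 *
        (((π / ε) ^ ((d : ℝ) / 2) * Real.exp (-(1 / (4 * ε)) * ‖q.1 - q.2‖ ^ 2) : ℝ) : ℂ) := by
  have key : ∀ (ξ : E d) (q : E d × E d),
      (Complex.exp (Complex.I * (⟪q.1, ξ⟫ : ℂ)) * h₁ q.1) *
        (Complex.exp (Complex.I * (⟪q.2, -ξ⟫ : ℂ)) * h₂ q.2) * (Real.exp (-ε * ‖ξ‖ ^ 2) : ℂ) =
      h₁ q.1 * h₂ q.2 * (Complex.exp (Complex.I * (⟪q.1 - q.2, ξ⟫ : ℂ)) *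
        (Real.exp (-ε * ‖ξ‖ ^ 2) : ℂ)) := by
    intro ξ q
    rw [inner_neg_right, inner_sub_left]
    push_cast
    rw [mul_sub, mul_neg, sub_eq_add_neg, Complex.exp_add]
    ring
  have e : ∀ ξ : E d, ft d h₁ ξ * ft d h₂ (-ξ) * (Real.exp (-ε * ‖ξ‖ ^ 2) : ℂ) =
      ∫ q : E d × E d, h₁ q.1 * h₂ q.2 * (Complex.exp (Complex.I * (⟪q.1 - q.2, ξ⟫ : ℂ)) *
        (Real.exp (-ε * ‖ξ‖ ^ 2) : ℂ)) := by
    intro ξ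
    rw [ft, ft, ← integral_prod_mul, ← integral_mul_const]
    exact integral_congr_ae (.of_forall fun q => key ξ q)
  simp_rw [e]
  rw [integral_integral_swap]
  · refine integral_congr_ae (.of_forall fun q => ?_)
    simp only
    rw [integral_const_mul, integral_cexp_inner_mul_gaussian d hε]
  · have hg := (integrable_gaussian d hε).mul_prod (hh₁.mul_prod hh₂).norm
    refine hg.mono ?_ (.of_forall fun z => ?_)
    · refine ((hh₁.mul_prod hh₂).1.comp_snd (μ := volume)).mul (Continuous.aestronglyMeasurable ?_)
      fun_prop
    · simp only [Function.uncurry, norm_mul, norm_norm, Complex.norm_real, norm_cexp_I_mul_real,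
        one_mul]
      rw [mul_comm]

theorem norm_ft_neg_star {d : ℕ} (h : E d → ℂ) (ξ : E d) :
    ft d (fun y => (starRingEnd ℂ) (h y)) (-ξ) = (starRingEnd ℂ) (ft d h ξ) := by
  rw [ft, ft, ← integral_conj]
  refine integral_congr_ae (.of_forall fun y => ?_)
  simp only [map_mul, ← Complex.exp_conj, Complex.conj_I, Complex.conj_ofReal, inner_neg_right]
  push_cast
  ring_nf

theorem continuous_ft {d : ℕ} {h : E d → ℂ} (hh : Integrable h) : Continuous (ft d h) := by
  refine continuous_of_dominated (bound := fun y => ‖h y‖)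
    (fun ξ => (integrable_cexp_mul hh ξ).1) (fun ξ => .of_forall fun y => ?_) hh.norm
    (.of_forall fun y => by fun_prop)
  rw [norm_mul, norm_cexp_I_mul_real, one_mul]

theorem norm_ft_le {d : ℕ} (h : E d → ℂ) (ξ : E d) : ‖ft d h ξ‖ ≤ ∫ y, ‖h y‖ := by
  refine (norm_integral_le_integral_norm _).trans (le_of_eq ?_)
  simp_rw [norm_mul, norm_cexp_I_mul_real, one_mul]

theorem lintegral_shift_gaussian (d : ℕ) {b : ℝ} (hb : 0 < b) (y : E d) :
    ∫⁻ x : E d, ENNReal.ofReal (Real.exp (-b * ‖y - x‖ ^ 2)) =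
      ENNReal.ofReal ((π / b) ^ ((d : ℝ) / 2)) := by
  rw [← lintegral_gaussian d hb]
  exact lintegral_sub_left_eq_self (fun x : E d => ENNReal.ofReal (Real.exp (-b * ‖x‖ ^ 2))) y

theorem lintegral_sq_ft_mul_gaussian_le {d : ℕ} {h : E d → ℂ} (hh : Integrable h) {ε : ℝ}
    (hε : 0 < ε) :
    ∫⁻ ξ : E d, ‖ft d h ξ‖ₑ ^ 2 * ENNReal.ofReal (Real.exp (-ε * ‖ξ‖ ^ 2)) ≤
      ENNReal.ofReal ((2 * π) ^ d) * ∫⁻ y, ‖h y‖ₑ ^ 2 := by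
  have h2 : Integrable fun y => (starRingEnd ℂ) (h y) := by
    simpa using! (Complex.conjCLE.toContinuousLinearMap.integrable_comp hh)
  have hQ := integral_ft_mul_ft_neg_mul_gaussian hh h2 hε
  set c : ℝ := (π / ε) ^ ((d : ℝ) / 2) with hc
  have hc0 : 0 ≤ c := by positivity
  have hb : 0 < 1 / (4 * ε) := by positivity
  have hint : Integrable fun ξ : E d => ‖ft d h ξ‖ ^ 2 * Real.exp (-ε * ‖ξ‖ ^ 2) := by
    refine (integrable_gaussian d hε).bdd_mul (c := (∫ y, ‖h y‖) ^ 2)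
      (((continuous_ft hh).norm.pow 2).aestronglyMeasurable) (.of_forall fun ξ => ?_)
    rw [norm_pow, norm_norm]
    gcongr
    exact norm_ft_le h ξ
  have e1 : ∫⁻ ξ : E d, ‖ft d h ξ‖ₑ ^ 2 * ENNReal.ofReal (Real.exp (-ε * ‖ξ‖ ^ 2)) =
      ‖∫ ξ : E d, ft d h ξ * ft d (fun y => (starRingEnd ℂ) (h y)) (-ξ) *
        (Real.exp (-ε * ‖ξ‖ ^ 2) : ℂ)‖ₑ := by
    have : ∀ ξ : E d, ft d h ξ * ft d (fun y => (starRingEnd ℂ) (h y)) (-ξ) *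
        (Real.exp (-ε * ‖ξ‖ ^ 2) : ℂ) = ((‖ft d h ξ‖ ^ 2 * Real.exp (-ε * ‖ξ‖ ^ 2) : ℝ) : ℂ) := by
      intro ξ
      rw [norm_ft_neg_star, Complex.mul_conj, Complex.normSq_eq_norm_sq]
      push_cast; rfl
    simp_rw [this]
    rw [integral_complex_ofReal, ← ofReal_norm, Complex.norm_real, Real.norm_of_nonneg
      (integral_nonneg fun ξ => by positivity), ofReal_integral_eq_lintegral_ofReal hint
      (.of_forall fun ξ => by positivity)]
    refine lintegral_congr fun ξ => ?_
    rw [ENNReal.ofReal_mul (by positivity), ENNReal.ofReal_pow (norm_nonneg _),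
      ofReal_norm]
  rw [e1, hQ]
  refine (enorm_integral_le_lintegral_enorm _).trans ?_
  set K : E d → E d → ℝ≥0∞ := fun y y' =>
    ENNReal.ofReal (Real.exp (-(1 / (4 * ε)) * ‖y - y'‖ ^ 2)) with hK
  have hKm : Measurable (Function.uncurry K) := by
    simp only [hK, Function.uncurry_def]; fun_prop
  have hKi : ∀ y, ∫⁻ y', K y y' = ENNReal.ofReal ((π / (1 / (4 * ε))) ^ ((d : ℝ) / 2)) :=
    fun y => lintegral_shift_gaussian d hb y
  have hm : AEMeasurable (fun y => ‖h y‖ₑ ^ 2) := hh.1.enorm.pow_const 2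
  have ptw : ∀ q : E d × E d, ‖h q.1 * (starRingEnd ℂ) (h q.2) *
      ((c * Real.exp (-(1 / (4 * ε)) * ‖q.1 - q.2‖ ^ 2) : ℝ) : ℂ)‖ₑ ≤
      ENNReal.ofReal (c / 2) * (‖h q.1‖ₑ ^ 2 * K q.1 q.2) +
      ENNReal.ofReal (c / 2) * (‖h q.2‖ₑ ^ 2 * K q.1 q.2) := by
    intro q
    rw [← mul_add, ← add_mul, ← ofReal_norm, ← ofReal_norm (h q.1),
      ← ofReal_norm (h q.2), ← ENNReal.ofReal_pow (norm_nonneg _),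
      ← ENNReal.ofReal_pow (norm_nonneg _), ← ENNReal.ofReal_add (by positivity) (by positivity),
      hK, ← ENNReal.ofReal_mul (by positivity), ← ENNReal.ofReal_mul (by positivity)]
    apply ENNReal.ofReal_le_ofReal
    rw [norm_mul, norm_mul, Complex.norm_real, RCLike.norm_conj, Real.norm_of_nonneg
      (by positivity)]
    have : 0 ≤ c * Real.exp (-(1 / (4 * ε)) * ‖q.1 - q.2‖ ^ 2) := by positivity
    nlinarith [mul_nonneg this (sq_nonneg (‖h q.1‖ - ‖h q.2‖))]
  refine (lintegral_mono ptw).trans ?_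
  have m1 : AEMeasurable (fun q : E d × E d => ‖h q.1‖ₑ ^ 2 * K q.1 q.2) (volume.prod volume) :=
    (hm.comp_quasiMeasurePreserving Measure.quasiMeasurePreserving_fst).mul hKm.aemeasurable
  have m2 : AEMeasurable (fun q : E d × E d => ‖h q.2‖ₑ ^ 2 * K q.1 q.2) (volume.prod volume) :=
    (hm.comp_quasiMeasurePreserving Measure.quasiMeasurePreserving_snd).mul hKm.aemeasurable
  rw [Measure.volume_eq_prod, lintegral_add_left' (m1.const_mul _), lintegral_const_mul'' _ m1,
    lintegral_const_mul'' _ m2, lintegral_prod _ m1, lintegral_prod_symm _ m2]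
  have i1 : ∀ y, ∫⁻ y', ‖h y‖ₑ ^ 2 * K y y' =
      ‖h y‖ₑ ^ 2 * ENNReal.ofReal ((π / (1 / (4 * ε))) ^ ((d : ℝ) / 2)) := by
    intro y
    rw [lintegral_const_mul _ (by simp only [hK]; fun_prop), hKi]
  have i2 : ∀ y', ∫⁻ y, ‖h y'‖ₑ ^ 2 * K y y' =
      ‖h y'‖ₑ ^ 2 * ENNReal.ofReal ((π / (1 / (4 * ε))) ^ ((d : ℝ) / 2)) := by
    intro y
    rw [lintegral_const_mul _ (by simp only [hK]; fun_prop), ← hKi y]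
    simp only [hK, norm_sub_rev]
  simp_rw [i1, i2]
  rw [lintegral_mul_const'' _ hm, ← two_mul, ← mul_assoc, mul_comm (∫⁻ y, ‖h y‖ₑ ^ 2), ← mul_assoc]
  gcongr
  have e2 : (2 : ℝ≥0∞) = ENNReal.ofReal 2 := by simp
  rw [e2, ← ENNReal.ofReal_mul (by positivity), ← ENNReal.ofReal_mul (by positivity)]
  apply le_of_eq
  congr 1
  have : 2 * (c / 2) = c := by ring
  rw [this, hc, ← Real.mul_rpow (by positivity) (by positivity)]
  have : π / ε * (π / (1 / (4 * ε))) = (2 * π) ^ (2 : ℝ) := by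
    rw [Real.rpow_two]; field_simp; ring
  rw [this, ← Real.rpow_mul (by positivity), ← Real.rpow_natCast]
  congr 1
  ring

/-- The Bessel inequality for the Fourier transform of an integrable function. -/
theorem lintegral_sq_ft_le {d : ℕ} {h : E d → ℂ} (hh : Integrable h) :
    ∫⁻ ξ : E d, ‖ft d h ξ‖ₑ ^ 2 ≤ ENNReal.ofReal ((2 * π) ^ d) * ∫⁻ y, ‖h y‖ₑ ^ 2 := by
  have hm : Measurable fun ξ => ‖ft d h ξ‖ₑ := (continuous_ft hh).enorm.measurable
  have hl : ∀ ξ : E d, ‖ft d h ξ‖ₑ ^ 2 = Filter.liminf (fun n : ℕ => ‖ft d h ξ‖ₑ ^ 2 *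
      ENNReal.ofReal (Real.exp (-(1 / ((n : ℝ) + 1)) * ‖ξ‖ ^ 2))) Filter.atTop := by
    intro ξ
    refine (Filter.Tendsto.liminf_eq ?_).symm
    have h1 : Filter.Tendsto (fun n : ℕ => Real.exp (-(1 / ((n : ℝ) + 1)) * ‖ξ‖ ^ 2))
        Filter.atTop (nhds 1) := by
      have := (tendsto_one_div_add_atTop_nhds_zero_nat (𝕜 := ℝ)).neg.mul_const (‖ξ‖ ^ 2)
      simpa [Function.comp_def] using (Real.continuous_exp.tendsto _).comp this
    have h2 := ENNReal.Tendsto.const_mul (a := ‖ft d h ξ‖ₑ ^ 2)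
      ((ENNReal.continuous_ofReal.tendsto _).comp h1) (Or.inl (by simp))
    simpa using! h2
  rw [lintegral_congr hl]
  refine (lintegral_liminf_le fun n => by fun_prop).trans ?_
  refine Filter.liminf_le_of_le (by isBoundedDefault) fun b hb => ?_
  obtain ⟨n, hn⟩ := hb.exists
  exact hn.trans (lintegral_sq_ft_mul_gaussian_le hh (by positivity))

/-- The Fourier integral of `φ` localized near `z.1` by the Gaussian `exp(-b|y|²)`. -/
def locFT (d : ℕ) (b : ℝ) (φ : E d → ℂ) (z : P d) : ℂ :=
  ft d (fun y => φ y * (Real.exp (-b * ‖y - z.1‖ ^ 2) : ℂ)) z.2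

theorem stft_eq_locFT (d : ℕ) (u : E d → ℂ) (x ξ : E d) :
    stft d u (x, ξ) = locFT d (1 / 2) u (x, -ξ) := by
  refine integral_congr_ae (.of_forall fun y => ?_)
  simp only [pkbar, inner_neg_right]
  push_cast
  ring_nf

theorem measurable_locFT {d : ℕ} {b : ℝ} {φ : E d → ℂ} (hφ : Measurable φ) :
    Measurable (locFT d b φ) := by
  have : StronglyMeasurable fun q : P d × E d => Complex.exp (Complex.I * (⟪q.2, q.1.2⟫ : ℂ)) *
      (φ q.2 * (Real.exp (-b * ‖q.2 - q.1.1‖ ^ 2) : ℂ)) := by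
    apply Measurable.stronglyMeasurable
    fun_prop
  exact this.integral_prod_right'.measurable

theorem measurable_stft {d : ℕ} {u : E d → ℂ} (hu : Measurable u) : Measurable (stft d u) := by
  have : stft d u = fun z => locFT d (1 / 2) u (z.1, -z.2) := by
    ext ⟨x, ξ⟩; exact stft_eq_locFT d u x ξ
  rw [this]
  exact (measurable_locFT hu).comp (by fun_prop)

theorem exp_neg_mul_norm_sq_le_one {d : ℕ} {b : ℝ} (hb : 0 < b) (y : E d) :
    Real.exp (-b * ‖y‖ ^ 2) ≤ 1 := by
  rw [Real.exp_le_one_iff]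
  have : 0 ≤ b * ‖y‖ ^ 2 := by positivity
  linarith

theorem integrable_mul_gaussian {d : ℕ} {u : E d → ℂ} (hu : Integrable u) {b : ℝ} (hb : 0 < b)
    (x : E d) : Integrable fun y => u y * (Real.exp (-b * ‖y - x‖ ^ 2) : ℂ) := by
  refine hu.mul_bdd (c := 1) (Continuous.aestronglyMeasurable (by fun_prop))
    (.of_forall fun y => ?_)
  rw [Complex.norm_real, Real.norm_of_nonneg (Real.exp_pos _).le]
  exact exp_neg_mul_norm_sq_le_one hb _

theorem enorm_mul_gaussian {d : ℕ} (u : E d → ℂ) (b : ℝ) (x y : E d) :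
    ‖u y * (Real.exp (-b * ‖y - x‖ ^ 2) : ℂ)‖ₑ =
      ‖u y‖ₑ * ENNReal.ofReal (Real.exp (-b * ‖y - x‖ ^ 2)) := by
  rw [enorm_mul, ← ofReal_norm (_ : ℂ), ← ofReal_norm (_ : ℂ), Complex.norm_real,
    Real.norm_of_nonneg (Real.exp_pos _).le]

theorem lintegral_rpow_stft_fiber_le {d : ℕ} {p : ℝ} (hp : 2 ≤ p) {u : E d → ℂ}
    (hu : Integrable u) (m : ℝ≥0∞) (hm : m = ENNReal.ofReal ((π / (1 / 2)) ^ ((d : ℝ) / 2)))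
    (x : E d) :
    ∫⁻ ξ, ‖stft d u (x, ξ)‖ₑ ^ p ≤ ENNReal.ofReal ((2 * π) ^ d) *
      ((m ^ (1 / 1 - 1 / p)) ^ (p - 2) * (m ^ (1 / 2 - 1 / p)) ^ (2 : ℝ)) *
      ∫⁻ y, ‖u y‖ₑ ^ p * ENNReal.ofReal (Real.exp (-(1 / 2) * ‖y - x‖ ^ 2)) := by
  set G : E d → ℝ≥0∞ := fun y => ENNReal.ofReal (Real.exp (-(1 / 2) * ‖y - x‖ ^ 2)) with hG
  have hGm : Measurable G := by simp only [hG]; fun_prop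
  have hG1 : ∀ y, G y ≤ 1 := fun y => by
    simpa only [hG, ENNReal.ofReal_le_one] using
      exp_neg_mul_norm_sq_le_one (b := 1 / 2) (by norm_num) (y - x)
  set ν : Measure (E d) := volume.withDensity G with hν
  have hν1 : ν Set.univ = m := by
    rw [hν, withDensity_apply _ MeasurableSet.univ, Measure.restrict_univ, hm,
      ← lintegral_shift_gaussian d (by norm_num) x]
    simp only [hG, norm_sub_rev]
  have huν : AEStronglyMeasurable u ν := hu.1.mono_ac (withDensity_absolutelyContinuous _ _)
  have hA : ∀ q : ℝ, 0 < q → eLpNorm' u q ν = (∫⁻ y, ‖u y‖ₑ ^ q * G y) ^ (1 / q) := by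
    intro q hq
    rw [eLpNorm', hν, lintegral_withDensity_eq_lintegral_mul₀ hGm.aemeasurable
      (hu.1.enorm.pow_const q)]
    simp only [Pi.mul_apply, mul_comm]
  set h : E d → ℂ := fun y => u y * (Real.exp (-(1 / 2) * ‖y - x‖ ^ 2) : ℂ) with hh
  have hhi : Integrable h := integrable_mul_gaussian hu (by norm_num) x
  have hhe : ∀ y, ‖h y‖ₑ = ‖u y‖ₑ * G y := fun y => enorm_mul_gaussian u _ x y
  have hsup : ∀ ξ, ‖ft d h ξ‖ₑ ≤ eLpNorm' u 1 ν := by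
    intro ξ
    rw [hA 1 one_pos]
    refine (enorm_integral_le_lintegral_enorm _).trans (le_of_eq ?_)
    simp only [ENNReal.rpow_one, div_one]
    refine lintegral_congr fun y => ?_
    rw [← hhe, enorm_mul, ← ofReal_norm (Complex.exp _), norm_cexp_I_mul_real]
    simp
  have h2 : ∫⁻ ξ, ‖ft d h ξ‖ₑ ^ 2 ≤
      ENNReal.ofReal ((2 * π) ^ d) * (eLpNorm' u 2 ν) ^ (2 : ℝ) := by
    refine (lintegral_sq_ft_le hhi).trans ?_
    rw [hA 2 two_pos, ← ENNReal.rpow_mul]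
    norm_num
    gcongr with y
    rw [hhe, mul_pow, sq (G y)]
    gcongr
    exact mul_le_of_le_one_left zero_le (hG1 y)
  have hle1 := eLpNorm'_le_eLpNorm'_mul_rpow_measure_univ (μ := ν) one_pos (by linarith : 1 ≤ p) huν
  have hle2 := eLpNorm'_le_eLpNorm'_mul_rpow_measure_univ (μ := ν) two_pos hp huν
  rw [hν1] at hle1 hle2
  calc ∫⁻ ξ, ‖stft d u (x, ξ)‖ₑ ^ p = ∫⁻ ξ, ‖ft d h (-ξ)‖ₑ ^ p := by
        simp_rw [stft_eq_locFT]; rfl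
    _ = ∫⁻ ξ, ‖ft d h ξ‖ₑ ^ p := lintegral_neg_eq_self (fun ξ => ‖ft d h ξ‖ₑ ^ p)
    _ ≤ ∫⁻ ξ, (eLpNorm' u 1 ν) ^ (p - 2) * ‖ft d h ξ‖ₑ ^ 2 := by
        refine lintegral_mono fun ξ => ?_
        have : ‖ft d h ξ‖ₑ ^ p = ‖ft d h ξ‖ₑ ^ (p - 2) * ‖ft d h ξ‖ₑ ^ 2 := by
          rw [← ENNReal.rpow_natCast, ← ENNReal.rpow_add_of_nonneg _ _ (by linarith) (by norm_num)]
          norm_num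
        rw [this]
        exact mul_le_mul' (ENNReal.rpow_le_rpow (hsup ξ) (by linarith)) le_rfl
    _ = (eLpNorm' u 1 ν) ^ (p - 2) * ∫⁻ ξ, ‖ft d h ξ‖ₑ ^ 2 :=
        lintegral_const_mul _ ((continuous_ft hhi).enorm.measurable.pow_const 2)
    _ ≤ (eLpNorm' u p ν * m ^ (1 / 1 - 1 / p)) ^ (p - 2) * (ENNReal.ofReal ((2 * π) ^ d) *
          (eLpNorm' u p ν * m ^ (1 / 2 - 1 / p)) ^ (2 : ℝ)) := by
        refine mul_le_mul' (ENNReal.rpow_le_rpow hle1 (by linarith)) (h2.trans ?_)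
        gcongr
    _ = ENNReal.ofReal ((2 * π) ^ d) *
      ((m ^ (1 / 1 - 1 / p)) ^ (p - 2) * (m ^ (1 / 2 - 1 / p)) ^ (2 : ℝ)) *
        (eLpNorm' u p ν) ^ p := by
        rw [ENNReal.mul_rpow_of_nonneg _ _ (by linarith), ENNReal.mul_rpow_of_nonneg _ _
          (by norm_num)]
        have : (eLpNorm' u p ν) ^ p = (eLpNorm' u p ν) ^ (p - 2) * (eLpNorm' u p ν) ^ (2 : ℝ) := by
          rw [← ENNReal.rpow_add_of_nonneg _ _ (by linarith) (by norm_num)]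
          norm_num
        rw [this]
        ring
    _ = _ := by
        rw [hA p (by linarith), ← ENNReal.rpow_mul (∫⁻ y, ‖u y‖ₑ ^ p * G y),
          one_div_mul_cancel (by linarith), ENNReal.rpow_one]

/-- The short-time Fourier transform maps `L^p(ℝ^d)` to `L^p(ℝ^{2d})` for `2 ≤ p < ∞`. -/
theorem lintegral_rpow_stft_le (d : ℕ) {p : ℝ} (hp : 2 ≤ p) :
    ∃ C : ℝ≥0∞, C ≠ ∞ ∧ ∀ u : E d → ℂ, Measurable u → Integrable u →
      ∫⁻ z : P d, ‖stft d u z‖ₑ ^ p ≤ C * ∫⁻ y, ‖u y‖ₑ ^ p := by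
  set m := ENNReal.ofReal ((π / (1 / 2)) ^ ((d : ℝ) / 2)) with hm
  set D := ENNReal.ofReal ((2 * π) ^ d) *
      ((m ^ (1 / 1 - 1 / p)) ^ (p - 2) * (m ^ (1 / 2 - 1 / p)) ^ (2 : ℝ)) with hD
  have h1 : 1 / p ≤ 1 / 2 := one_div_le_one_div_of_le two_pos hp
  have hmt : m ≠ ∞ := ENNReal.ofReal_ne_top
  refine ⟨D * m, ?_, fun u hu hui => ?_⟩
  · refine ENNReal.mul_ne_top (ENNReal.mul_ne_top ENNReal.ofReal_ne_top
      (ENNReal.mul_ne_top ?_ ?_)) hmt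
    · exact ENNReal.rpow_ne_top_of_nonneg (by linarith)
        (ENNReal.rpow_ne_top_of_nonneg (by linarith) hmt)
    · exact ENNReal.rpow_ne_top_of_nonneg (by norm_num)
        (ENNReal.rpow_ne_top_of_nonneg (by linarith) hmt)
  have hsm : AEMeasurable (fun z : P d => ‖stft d u z‖ₑ ^ p) (volume.prod volume) :=
    ((measurable_stft hu).enorm.pow_const p).aemeasurable
  rw [Measure.volume_eq_prod, lintegral_prod _ hsm]
  refine (lintegral_mono fun x => lintegral_rpow_stft_fiber_le hp hui m hm x).trans ?_
  rw [← hD, lintegral_const_mul _ (Measurable.lintegral_prod_right (by fun_prop)),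
    lintegral_lintegral_swap
    (Measurable.aemeasurable (by fun_prop)), mul_assoc D]
  refine mul_le_mul' le_rfl ?_
  rw [← lintegral_const_mul _ (by fun_prop)]
  refine lintegral_mono fun y => ?_
  rw [lintegral_const_mul _ (by fun_prop), lintegral_shift_gaussian d (by norm_num) y, mul_comm]

/-- The measure `|ξ|^{-2d} dξ` on `ℝ^d`. -/
def invNormMeasure (d : ℕ) : Measure (E d) :=
  volume.withDensity fun ξ : E d => ENNReal.ofReal (‖ξ‖ ^ (-(2 * d : ℝ)))

theorem invNormMeasure_one_lt_norm_ne_top {d : ℕ} (hd : 1 ≤ d) :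
    invNormMeasure d {ξ | 1 < ‖ξ‖} ≠ ∞ := by
  have hd' : (1 : ℝ) ≤ d := by exact_mod_cast hd
  have hms : MeasurableSet {ξ : E d | 1 < ‖ξ‖} := measurableSet_lt measurable_const measurable_norm
  rw [invNormMeasure, withDensity_apply _ hms]
  have hfin := finite_integral_one_add_norm (μ := (volume : Measure (E d))) (r := 2 * d)
    (by rw [finrank_euclideanSpace_fin]; linarith)
  refine ne_top_of_le_ne_top (ENNReal.mul_ne_top (ENNReal.ofReal_ne_top (r := 2 ^ (2 * d : ℝ)))
    hfin.ne) ?_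
  rw [← lintegral_const_mul _ (by fun_prop)]
  refine (setLIntegral_mono' hms fun ξ hξ => ?_).trans (setLIntegral_le_lintegral _ _)
  have hξ' : 1 < ‖ξ‖ := hξ
  rw [← ENNReal.ofReal_mul (by positivity)]
  apply ENNReal.ofReal_le_ofReal
  have h1 : (2 * ‖ξ‖) ^ (-(2 * d : ℝ)) ≤ (1 + ‖ξ‖) ^ (-(2 * d : ℝ)) :=
    Real.rpow_le_rpow_of_nonpos (by positivity) (by linarith) (by linarith)
  rw [Real.mul_rpow two_pos.le (norm_nonneg _), Real.rpow_neg two_pos.le] at h1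
  rwa [← inv_mul_le_iff₀ (by positivity)]

theorem invNormMeasure_lt_norm_pow_le {d : ℕ} (hd : 1 ≤ d) {a : ℝ} (ha : 0 < a) :
    invNormMeasure d {ξ | a < ‖ξ‖ ^ d} ≤
      ENNReal.ofReal (1 / a) * invNormMeasure d {ξ | 1 < ‖ξ‖} := by
  set R : ℝ := a ^ (1 / (d : ℝ)) with hR
  have hd0 : (d : ℝ) ≠ 0 := by positivity
  have hR0 : 0 < R := by positivity
  have hRd : R ^ d = a := by
    rw [hR, ← Real.rpow_natCast, ← Real.rpow_mul ha.le, one_div_mul_cancel hd0, Real.rpow_one]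
  have hset : {ξ : E d | a < ‖ξ‖ ^ d} = {ξ | R < ‖ξ‖} := by
    ext ξ
    simp only [Set.mem_ofPred_eq]
    rw [← hRd, pow_lt_pow_iff_left₀ hR0.le (norm_nonneg _) (by omega)]
  have hms : ∀ R : ℝ, MeasurableSet {ξ : E d | R < ‖ξ‖} := fun R =>
    measurableSet_lt measurable_const measurable_norm
  rw [hset, invNormMeasure, withDensity_apply _ (hms R), withDensity_apply _ (hms 1),
    ← lintegral_indicator (hms R), ← lintegral_indicator (hms 1)]
  have hmap := Measure.map_addHaar_smul (volume : Measure (E d)) (inv_pos.2 hR0).ne'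
  rw [finrank_euclideanSpace_fin] at hmap
  set f : E d → ℝ≥0∞ :=
    {ξ : E d | 1 < ‖ξ‖}.indicator fun ξ => ENNReal.ofReal (‖ξ‖ ^ (-(2 * d : ℝ))) with hf
  have hfm : Measurable f := Measurable.indicator (by fun_prop) (hms 1)
  have e1 : ∫⁻ ξ, f (R⁻¹ • ξ) = ENNReal.ofReal a * ∫⁻ ξ, f ξ := by
    rw [← lintegral_map hfm (by fun_prop : Measurable fun ξ : E d => R⁻¹ • ξ), hmap,
      lintegral_smul_measure, smul_eq_mul, inv_pow, inv_inv, hRd, abs_of_pos ha]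
  have e2 : ∀ ξ : E d, {ξ : E d | R < ‖ξ‖}.indicator
      (fun ξ => ENNReal.ofReal (‖ξ‖ ^ (-(2 * d : ℝ)))) ξ =
      ENNReal.ofReal ((1 / a) ^ 2) * f (R⁻¹ • ξ) := by
    intro ξ
    have hn : ‖R⁻¹ • ξ‖ = R⁻¹ * ‖ξ‖ := by
      rw [norm_smul, Real.norm_of_nonneg (inv_nonneg.2 hR0.le)]
    have hiff : 1 < R⁻¹ * ‖ξ‖ ↔ R < ‖ξ‖ := by
      rw [inv_mul_eq_div, one_lt_div hR0]
    simp only [hf, Set.indicator, Set.mem_ofPred_eq, hn, hiff]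
    split_ifs with h
    · rw [← ENNReal.ofReal_mul (by positivity)]
      congr 1
      rw [Real.mul_rpow (by positivity) (by positivity), ← mul_assoc]
      have : (R⁻¹) ^ (-(2 * d : ℝ)) = a ^ 2 := by
        rw [Real.rpow_neg (by positivity), Real.inv_rpow hR0.le, inv_inv, mul_comm, Real.rpow_mul
          hR0.le, Real.rpow_natCast, hRd, Real.rpow_two]
      rw [this, one_div, inv_pow, inv_mul_cancel₀ (by positivity), one_mul]
    · simp
  simp_rw [e2]
  rw [lintegral_const_mul _ (by fun_prop : Measurable fun ξ => f (R⁻¹ • ξ)), e1, ← mul_assoc,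
    ← ENNReal.ofReal_mul (by positivity)]
  apply le_of_eq
  congr 2
  field_simp

theorem invNormMeasure_lt_le {d : ℕ} (hd : 1 ≤ d) {h : E d → ℂ} (hm : Measurable h)
    (hh : Integrable h) {s : ℝ} (hs : 0 < s) :
    invNormMeasure d {ξ | s < ‖ξ‖ ^ d * ‖ft d h ξ‖} ≤
      invNormMeasure d {ξ | 1 < ‖ξ‖} * (ENNReal.ofReal (2 / s) *
        ∫⁻ y, if s < ‖h y‖ then ‖h y‖ₑ else 0) +
      ENNReal.ofReal ((2 * π) ^ d) * (ENNReal.ofReal (4 / s ^ 2) *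
        ∫⁻ y, if s < ‖h y‖ then 0 else ‖h y‖ₑ ^ 2) := by
  set h₁ : E d → ℂ := fun y => if s < ‖h y‖ then h y else 0 with hh₁
  set h₂ : E d → ℂ := fun y => if s < ‖h y‖ then 0 else h y with hh₂
  have hms : MeasurableSet {y | s < ‖h y‖} := measurableSet_lt measurable_const hm.norm
  have m₁ : Measurable h₁ := Measurable.ite hms hm measurable_const
  have m₂ : Measurable h₂ := Measurable.ite hms measurable_const hm
  have i₁ : Integrable h₁ := hh.mono m₁.aestronglyMeasurable (.of_forall fun y => by
    simp only [hh₁]; split_ifs <;> simp)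
  have i₂ : Integrable h₂ := hh.mono m₂.aestronglyMeasurable (.of_forall fun y => by
    simp only [hh₂]; split_ifs <;> simp)
  have hadd : ∀ ξ, ft d h ξ = ft d h₁ ξ + ft d h₂ ξ := by
    intro ξ
    rw [ft, ft, ft, ← integral_add (integrable_cexp_mul i₁ ξ) (integrable_cexp_mul i₂ ξ)]
    refine integral_congr_ae (.of_forall fun y => ?_)
    simp only [hh₁, hh₂]
    split_ifs <;> simp
  have hsub : {ξ | s < ‖ξ‖ ^ d * ‖ft d h ξ‖} ⊆ {ξ | s / 2 < ‖ξ‖ ^ d * ‖ft d h₁ ξ‖} ∪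
      {ξ | s / 2 ≤ ‖ξ‖ ^ d * ‖ft d h₂ ξ‖} := by
    intro ξ hξ
    simp only [Set.mem_union, Set.mem_ofPred_eq] at hξ ⊢
    by_contra! hcon
    have h1 : ‖ξ‖ ^ d * ‖ft d h ξ‖ ≤ ‖ξ‖ ^ d * ‖ft d h₁ ξ‖ + ‖ξ‖ ^ d * ‖ft d h₂ ξ‖ := by
      rw [hadd, ← mul_add]
      gcongr
      exact norm_add_le _ _
    linarith [hcon.1, hcon.2]
  refine (measure_mono hsub).trans ((measure_union_le _ _).trans (add_le_add ?_ ?_))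
  · set A : ℝ := ∫ y, ‖h₁ y‖ with hA
    have hAe : ∫⁻ y, (if s < ‖h y‖ then ‖h y‖ₑ else 0) = ENNReal.ofReal A := by
      rw [hA, ofReal_integral_norm_eq_lintegral_enorm i₁]
      refine lintegral_congr fun y => ?_
      simp only [hh₁]
      split_ifs <;> simp
    rw [hAe]
    rcases (integral_nonneg fun y => norm_nonneg (h₁ y) : 0 ≤ A).eq_or_lt with hA0 | hA0
    · have : {ξ | s / 2 < ‖ξ‖ ^ d * ‖ft d h₁ ξ‖} = ∅ := by
        ext ξ
        have h0 : ‖ft d h₁ ξ‖ = 0 :=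
          le_antisymm ((norm_ft_le h₁ ξ).trans hA0.symm.le) (norm_nonneg _)
        simp only [Set.mem_ofPred_eq, h0, mul_zero, Set.mem_empty_iff_false, iff_false]
        linarith
      rw [this]; simp
    · have hsub2 : {ξ | s / 2 < ‖ξ‖ ^ d * ‖ft d h₁ ξ‖} ⊆ {ξ : E d | s / (2 * A) < ‖ξ‖ ^ d} := by
        intro ξ hξ
        simp only [Set.mem_ofPred_eq] at hξ ⊢
        have : ‖ξ‖ ^ d * ‖ft d h₁ ξ‖ ≤ ‖ξ‖ ^ d * A := by
          gcongr; exact norm_ft_le h₁ ξ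
        rw [div_lt_iff₀ (by positivity)]
        linarith
      refine (measure_mono hsub2).trans ((invNormMeasure_lt_norm_pow_le hd
        (by positivity)).trans (le_of_eq ?_))
      rw [mul_comm, ← ENNReal.ofReal_mul (by positivity)]
      congr 2
      field_simp
  · have hft : Measurable fun ξ => ‖ft d h₂ ξ‖ₑ ^ 2 :=
      (continuous_ft i₂).enorm.measurable.pow_const 2
    set f : E d → ℝ≥0∞ := fun ξ => ENNReal.ofReal (‖ξ‖ ^ (2 * d)) * ‖ft d h₂ ξ‖ₑ ^ 2 with hf
    have hfm : Measurable f := by fun_prop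
    have hset : {ξ | s / 2 ≤ ‖ξ‖ ^ d * ‖ft d h₂ ξ‖} ⊆ {ξ | ENNReal.ofReal ((s / 2) ^ 2) ≤ f ξ} := by
      intro ξ hξ
      simp only [Set.mem_ofPred_eq, hf] at hξ ⊢
      rw [← ofReal_norm, ← ENNReal.ofReal_pow (norm_nonneg _), ← ENNReal.ofReal_mul (by positivity)]
      apply ENNReal.ofReal_le_ofReal
      calc (s / 2) ^ 2 ≤ (‖ξ‖ ^ d * ‖ft d h₂ ξ‖) ^ 2 := by gcongr
        _ = _ := by ring
    have hche := mul_meas_ge_le_lintegral (μ := invNormMeasure d) hfm (ENNReal.ofReal ((s / 2) ^ 2))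
    have hint : ∫⁻ ξ, f ξ ∂(invNormMeasure d) ≤ ENNReal.ofReal ((2 * π) ^ d) *
        ∫⁻ y, if s < ‖h y‖ then 0 else ‖h y‖ₑ ^ 2 := by
      rw [invNormMeasure, lintegral_withDensity_eq_lintegral_mul _ (by fun_prop) hfm]
      calc _ ≤ ∫⁻ ξ, ‖ft d h₂ ξ‖ₑ ^ 2 := by
            refine lintegral_mono fun ξ => ?_
            simp only [Pi.mul_apply, hf]
            rw [← mul_assoc, ← ENNReal.ofReal_mul (by positivity)]
            refine mul_le_of_le_one_left zero_le ?_
            rw [ENNReal.ofReal_le_one, Real.rpow_neg (norm_nonneg _)]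
            have : ‖ξ‖ ^ (2 * d : ℝ) = ‖ξ‖ ^ (2 * d) := by
              rw [← Real.rpow_natCast]; push_cast; rfl
            rw [this]
            exact inv_mul_le_one
        _ ≤ _ := lintegral_sq_ft_le i₂
        _ = _ := by
            congr 1
            refine lintegral_congr fun y => ?_
            simp only [hh₂]
            split_ifs <;> simp
    have hinv : ENNReal.ofReal (4 / s ^ 2) * ENNReal.ofReal ((s / 2) ^ 2) = 1 := by
      rw [← ENNReal.ofReal_mul (by positivity)]
      have : 4 / s ^ 2 * (s / 2) ^ 2 = 1 := by field_simp; norm_num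
      rw [this, ENNReal.ofReal_one]
    calc invNormMeasure d {ξ | s / 2 ≤ ‖ξ‖ ^ d * ‖ft d h₂ ξ‖}
        ≤ invNormMeasure d {ξ | ENNReal.ofReal ((s / 2) ^ 2) ≤ f ξ} := measure_mono hset
      _ = ENNReal.ofReal (4 / s ^ 2) * (ENNReal.ofReal ((s / 2) ^ 2) *
          invNormMeasure d {ξ | ENNReal.ofReal ((s / 2) ^ 2) ≤ f ξ}) := by
          rw [← mul_assoc, hinv, one_mul]
      _ ≤ ENNReal.ofReal (4 / s ^ 2) * (ENNReal.ofReal ((2 * π) ^ d) *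
        ∫⁻ y, if s < ‖h y‖ then 0 else ‖h y‖ₑ ^ 2) := by
          exact mul_le_mul' le_rfl (hche.trans hint)
      _ = _ := by ring

theorem lintegral_Ioi_rpow_of_lt_le {c q : ℝ} (hc : 0 < c) (hq : -1 < q) :
    ∫⁻ s in Set.Ioi (0 : ℝ), (if s < c then ENNReal.ofReal (s ^ q) else 0) ≤
      ENNReal.ofReal (c ^ (q + 1) / (q + 1)) := by
  have h1 : ∫⁻ s in Set.Ioi (0 : ℝ), (if s < c then ENNReal.ofReal (s ^ q) else 0) ≤
      ∫⁻ s in Set.Ioc (0 : ℝ) c, ENNReal.ofReal (s ^ q) := by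
    rw [← lintegral_indicator measurableSet_Ioi, ← lintegral_indicator measurableSet_Ioc]
    refine lintegral_mono fun s => ?_
    simp only [Set.indicator, Set.mem_Ioi, Set.mem_Ioc]
    split_ifs <;> first | exact le_rfl | exact zero_le | (exfalso; grind)
  refine h1.trans (le_of_eq ?_)
  have hi : IntegrableOn (fun s : ℝ => s ^ q) (Set.Ioc 0 c) :=
    (intervalIntegrable_iff_integrableOn_Ioc_of_le hc.le).1
      (intervalIntegral.intervalIntegrable_rpow' hq)
  rw [← ofReal_integral_eq_lintegral_ofReal hi ((ae_restrict_iff' measurableSet_Ioc).2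
    (.of_forall fun s hs => Real.rpow_nonneg hs.1.le _)), ← intervalIntegral.integral_of_le hc.le,
    integral_rpow (Or.inl hq), Real.zero_rpow (by linarith), sub_zero]

theorem lintegral_Ioi_rpow_of_ge_le {c q : ℝ} (hc : 0 < c) (hq : q < -1) :
    ∫⁻ s in Set.Ioi (0 : ℝ), (if s < c then 0 else ENNReal.ofReal (s ^ q)) ≤
      ENNReal.ofReal (-c ^ (q + 1) / (q + 1)) := by
  have h1 : ∫⁻ s in Set.Ioi (0 : ℝ), (if s < c then 0 else ENNReal.ofReal (s ^ q)) ≤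
      ∫⁻ s in Set.Ici c, ENNReal.ofReal (s ^ q) := by
    rw [← lintegral_indicator measurableSet_Ioi, ← lintegral_indicator measurableSet_Ici]
    refine lintegral_mono fun s => ?_
    simp only [Set.indicator, Set.mem_Ioi, Set.mem_Ici]
    split_ifs <;> first | exact le_rfl | exact zero_le | (exfalso; grind)
  refine h1.trans (le_of_eq ?_)
  rw [setLIntegral_congr Ioi_ae_eq_Ici.symm, ← ofReal_integral_eq_lintegral_ofReal
    (integrableOn_Ioi_rpow_of_lt hq hc) ((ae_restrict_iff' measurableSet_Ioi).2
    (.of_forall fun s hs => Real.rpow_nonneg (hc.trans hs).le _)), integral_Ioi_rpow_of_lt hq hc]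

/-- The Paley inequality for the Fourier transform. -/
theorem lintegral_rpow_ft_mul_norm_rpow_le {d : ℕ} (hd : 1 ≤ d) {r : ℝ} (hr₁ : 1 < r)
    (hr₂ : r < 2) :
    ∃ C : ℝ≥0∞, C ≠ ∞ ∧ ∀ h : E d → ℂ, Measurable h → Integrable h →
      ∫⁻ ξ, ‖ft d h ξ‖ₑ ^ r * ENNReal.ofReal (‖ξ‖ ^ (d * (r - 2) : ℝ)) ≤
        C * ∫⁻ y, ‖h y‖ₑ ^ r := by
  have hd' : (1 : ℝ) ≤ d := by exact_mod_cast hd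
  set K := invNormMeasure d {ξ | 1 < ‖ξ‖} with hK
  have hKt : K ≠ ∞ := invNormMeasure_one_lt_norm_ne_top hd
  set L := ENNReal.ofReal ((2 * π) ^ d) with hL
  refine ⟨ENNReal.ofReal r * (K * ENNReal.ofReal (2 / (r - 1)) + L * ENNReal.ofReal (4 / (2 - r))),
    by finiteness, fun h hm hh => ?_⟩
  set F : E d → ℝ := fun ξ => ‖ξ‖ ^ d * ‖ft d h ξ‖ with hF
  have hFm : Measurable F := by
    have := (continuous_ft hh).norm.measurable
    fun_prop
  have hF0 : ∀ ξ, 0 ≤ F ξ := fun ξ => by positivity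
  have e1 : ∫⁻ ξ, ‖ft d h ξ‖ₑ ^ r * ENNReal.ofReal (‖ξ‖ ^ (d * (r - 2) : ℝ)) =
      ∫⁻ ξ, ENNReal.ofReal (F ξ ^ r) ∂(invNormMeasure d) := by
    rw [invNormMeasure, lintegral_withDensity_eq_lintegral_mul _ (by fun_prop) (by fun_prop)]
    refine lintegral_congr fun ξ => ?_
    simp only [Pi.mul_apply, hF]
    rw [← ofReal_norm, ENNReal.ofReal_rpow_of_nonneg (norm_nonneg _) (by linarith),
      ← ENNReal.ofReal_mul (by positivity), ← ENNReal.ofReal_mul (by positivity)]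
    congr 1
    rcases (norm_nonneg ξ).eq_or_lt with h0 | h0
    · rw [← h0, Real.zero_rpow (by nlinarith), Real.zero_rpow (by linarith)]
      ring
    · rw [Real.mul_rpow (by positivity) (norm_nonneg _), ← mul_assoc, ← Real.rpow_natCast,
        ← Real.rpow_mul h0.le, ← Real.rpow_add h0, mul_comm]
      congr 2
      ring
  rw [e1, lintegral_rpow_eq_lintegral_meas_lt_mul _ (.of_forall hF0) hFm.aemeasurable
    (by linarith), mul_assoc]
  refine mul_le_mul' le_rfl ?_
  set A : ℝ → E d → ℝ≥0∞ := fun s y => ENNReal.ofReal (s ^ (r - 1)) * (ENNReal.ofReal (2 / s) *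
    if s < ‖h y‖ then ‖h y‖ₑ else 0) with hA
  set B : ℝ → E d → ℝ≥0∞ := fun s y => ENNReal.ofReal (s ^ (r - 1)) * (ENNReal.ofReal (4 / s ^ 2) *
    if s < ‖h y‖ then 0 else ‖h y‖ₑ ^ 2) with hB
  have hset : MeasurableSet {q : ℝ × E d | q.1 < ‖h q.2‖} :=
    measurableSet_lt measurable_fst (hm.norm.comp measurable_snd)
  have me : Measurable fun q : ℝ × E d => ‖h q.2‖ₑ := hm.enorm.comp measurable_snd
  have mA0 : Measurable fun q : ℝ × E d => if q.1 < ‖h q.2‖ then ‖h q.2‖ₑ else 0 :=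
    Measurable.ite hset me measurable_const
  have mB0 : Measurable fun q : ℝ × E d => if q.1 < ‖h q.2‖ then 0 else ‖h q.2‖ₑ ^ 2 :=
    Measurable.ite hset measurable_const (me.pow_const 2)
  have mA : Measurable (Function.uncurry A) := by
    simp only [hA, Function.uncurry_def]; fun_prop
  have mB : Measurable (Function.uncurry B) := by
    simp only [hB, Function.uncurry_def]; fun_prop
  have iA : Measurable fun s => ∫⁻ y, A s y := mA.lintegral_prod_right'
  have iB : Measurable fun s => ∫⁻ y, B s y := mB.lintegral_prod_right'
  have step : ∀ s ∈ Set.Ioi (0 : ℝ), invNormMeasure d {ξ | s < F ξ} * ENNReal.ofReal (s ^ (r - 1)) ≤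
      K * (∫⁻ y, A s y) + L * ∫⁻ y, B s y := by
    intro s hs
    have m1 : Measurable fun y => if s < ‖h y‖ then ‖h y‖ₑ else 0 :=
      mA0.comp (measurable_const.prodMk measurable_id)
    have m2 : Measurable fun y => if s < ‖h y‖ then 0 else ‖h y‖ₑ ^ 2 :=
      mB0.comp (measurable_const.prodMk measurable_id)
    refine (mul_le_mul' (invNormMeasure_lt_le hd hm hh hs) le_rfl).trans (le_of_eq ?_)
    simp only [hA, hB]
    rw [lintegral_const_mul _ (m1.const_mul _), lintegral_const_mul _ m1,
      lintegral_const_mul _ (m2.const_mul _), lintegral_const_mul _ m2]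
    ring
  have hAy : ∀ y, ∫⁻ s in Set.Ioi 0, A s y ≤ ENNReal.ofReal (2 / (r - 1)) * ‖h y‖ₑ ^ r := by
    intro y
    rcases (norm_nonneg (h y)).eq_or_lt with h0 | h0
    · have : ∀ s, A s y = 0 := fun s => by
        simp [hA, norm_eq_zero.1 h0.symm]
      simp [this]
    have hq : ∀ s ∈ Set.Ioi (0 : ℝ), A s y = (ENNReal.ofReal 2 * ‖h y‖ₑ) *
        if s < ‖h y‖ then ENNReal.ofReal (s ^ (r - 2)) else 0 := by
      intro s hs
      have hs' : (0 : ℝ) < s := hs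
      simp only [hA]
      split_ifs
      · have : s ^ (r - 1) * (2 / s) = 2 * s ^ (r - 2) := by
          have : r - 1 = (r - 2) + 1 := by ring
          rw [this, Real.rpow_add_one hs'.ne']
          field_simp
        rw [← mul_assoc, ← ENNReal.ofReal_mul (by positivity), this, ENNReal.ofReal_mul two_pos.le]
        ring
      · simp
    rw [setLIntegral_congr_fun measurableSet_Ioi hq, lintegral_const_mul' _ _ (by finiteness)]
    refine (mul_le_mul' le_rfl (lintegral_Ioi_rpow_of_lt_le h0 (by linarith))).trans (le_of_eq ?_)
    rw [← ofReal_norm, ← ENNReal.ofReal_mul two_pos.le, ← ENNReal.ofReal_mul (by positivity),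
      ENNReal.ofReal_rpow_of_pos h0, ← ENNReal.ofReal_mul (by
        have : 0 < r - 1 := by linarith
        positivity)]
    congr 1
    have e : r = (r - 2 + 1) + 1 := by ring
    have e' : ‖h y‖ ^ r = ‖h y‖ ^ (r - 2 + 1) * ‖h y‖ := by
      conv_lhs => rw [e, Real.rpow_add_one h0.ne']
    rw [e']
    have : r - 2 + 1 = r - 1 := by ring
    rw [this]
    ring
  have hBy : ∀ y, ∫⁻ s in Set.Ioi 0, B s y ≤ ENNReal.ofReal (4 / (2 - r)) * ‖h y‖ₑ ^ r := by
    intro y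
    rcases (norm_nonneg (h y)).eq_or_lt with h0 | h0
    · have : ∀ s, B s y = 0 := fun s => by
        simp [hB, norm_eq_zero.1 h0.symm]
      simp [this]
    have hq : ∀ s ∈ Set.Ioi (0 : ℝ), B s y = (ENNReal.ofReal 4 * ‖h y‖ₑ ^ 2) *
        if s < ‖h y‖ then 0 else ENNReal.ofReal (s ^ (r - 3)) := by
      intro s hs
      have hs' : (0 : ℝ) < s := hs
      simp only [hB]
      split_ifs
      · simp
      · have : s ^ (r - 1) * (4 / s ^ 2) = 4 * s ^ (r - 3) := by
          have : r - 1 = (r - 3) + (2 : ℕ) := by push_cast; ring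
          rw [this, Real.rpow_add_natCast hs'.ne']
          field_simp
        rw [← mul_assoc, ← ENNReal.ofReal_mul (by positivity), this, ENNReal.ofReal_mul (by
          norm_num)]
        ring
    rw [setLIntegral_congr_fun measurableSet_Ioi hq, lintegral_const_mul' _ _ (by finiteness)]
    refine (mul_le_mul' le_rfl (lintegral_Ioi_rpow_of_ge_le h0 (by linarith))).trans (le_of_eq ?_)
    rw [← ofReal_norm, ← ENNReal.ofReal_pow h0.le, ← ENNReal.ofReal_mul (by norm_num),
      ← ENNReal.ofReal_mul (by positivity), ENNReal.ofReal_rpow_of_pos h0, ← ENNReal.ofReal_mul (by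
        have : 0 < 2 - r := by linarith
        positivity)]
    congr 1
    have e : r = (r - 3 + 1) + (2 : ℕ) := by push_cast; ring
    have e' : ‖h y‖ ^ r = ‖h y‖ ^ (r - 3 + 1) * ‖h y‖ ^ 2 := by
      conv_lhs => rw [e, Real.rpow_add_natCast h0.ne']
    rw [e']
    have e3 : r - 3 + 1 = -(2 - r) := by ring
    rw [e3, neg_div_neg_eq]
    ring
  have mh : Measurable fun y => ‖h y‖ₑ ^ r := hm.enorm.pow_const r
  calc ∫⁻ s in Set.Ioi (0 : ℝ), invNormMeasure d {ξ | s < F ξ} * ENNReal.ofReal (s ^ (r - 1))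
      ≤ ∫⁻ s in Set.Ioi (0 : ℝ), (K * (∫⁻ y, A s y) + L * ∫⁻ y, B s y) :=
        setLIntegral_mono' measurableSet_Ioi step
    _ = K * (∫⁻ s in Set.Ioi (0 : ℝ), ∫⁻ y, A s y) + L * ∫⁻ s in Set.Ioi (0 : ℝ), ∫⁻ y, B s y := by
        rw [lintegral_add_left (iA.const_mul K), lintegral_const_mul _ iA,
          lintegral_const_mul _ iB]
    _ = K * (∫⁻ y, ∫⁻ s in Set.Ioi (0 : ℝ), A s y) + L * ∫⁻ y, ∫⁻ s in Set.Ioi (0 : ℝ), B s y := by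
        rw [lintegral_lintegral_swap mA.aemeasurable, lintegral_lintegral_swap mB.aemeasurable]
    _ ≤ K * (∫⁻ y, ENNReal.ofReal (2 / (r - 1)) * ‖h y‖ₑ ^ r) +
        L * ∫⁻ y, ENNReal.ofReal (4 / (2 - r)) * ‖h y‖ₑ ^ r := by
        gcongr with y y
        · exact hAy y
        · exact hBy y
    _ = _ := by
        rw [lintegral_const_mul _ mh, lintegral_const_mul _ mh]
        ring

/-- The heat semigroup `exp(tΔ)` as a Fourier multiplier. -/
def heat (d : ℕ) (t : ℝ) (u : E d → ℂ) (x : E d) : ℂ :=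
  (((2 * π) ^ d : ℝ) : ℂ)⁻¹ *
    ∫ ξ, Complex.exp (Complex.I * (⟪x, ξ⟫ : ℂ)) * (Real.exp (-t * ‖ξ‖ ^ 2) : ℂ) * FT d u ξ

theorem heat_eq_integral_gaussian {d : ℕ} {t : ℝ} (ht : 0 < t) {u : E d → ℂ} (hu : Integrable u)
    (x : E d) :
    heat d t u x = (((2 * π) ^ d : ℝ) : ℂ)⁻¹ * (((π / t) ^ ((d : ℝ) / 2) : ℝ) : ℂ) *
      ∫ y, u y * (Real.exp (-(1 / (4 * t)) * ‖x - y‖ ^ 2) : ℂ) := by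
  have hi : Integrable (Function.uncurry fun (ξ y : E d) =>
      (Complex.exp (Complex.I * (⟪x, ξ⟫ : ℂ)) * (Real.exp (-t * ‖ξ‖ ^ 2) : ℂ)) *
        (Complex.exp (-Complex.I * (⟪y, ξ⟫ : ℂ)) * u y)) (volume.prod volume) := by
    have h0 : Integrable (fun q : E d × E d => (Real.exp (-t * ‖q.1‖ ^ 2) : ℂ) * u q.2)
        (volume.prod volume) := (integrable_gaussian d ht).ofReal.mul_prod hu
    have h1 : AEStronglyMeasurable (fun q : E d × E d => Complex.exp (Complex.I * (⟪x, q.1⟫ : ℂ)) *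
      Complex.exp (-Complex.I * (⟪q.2, q.1⟫ : ℂ))) (volume.prod volume) :=
      Continuous.aestronglyMeasurable (by fun_prop)
    refine (h0.bdd_mul (c := 1) h1 (.of_forall fun q => ?_)).congr (.of_forall fun q => ?_)
    · have e : -Complex.I * (⟪q.2, q.1⟫ : ℂ) = Complex.I * ((-⟪q.2, q.1⟫ : ℝ) : ℂ) := by
        push_cast; ring
      rw [norm_mul, norm_cexp_I_mul_real, e, norm_cexp_I_mul_real, one_mul]
    · simp only [Function.uncurry]; ring
  rw [heat, mul_assoc]
  congr 1
  calc ∫ ξ, Complex.exp (Complex.I * (⟪x, ξ⟫ : ℂ)) * (Real.exp (-t * ‖ξ‖ ^ 2) : ℂ) * FT d u ξ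
      = ∫ ξ, ∫ y, (Complex.exp (Complex.I * (⟪x, ξ⟫ : ℂ)) * (Real.exp (-t * ‖ξ‖ ^ 2) : ℂ)) *
        (Complex.exp (-Complex.I * (⟪y, ξ⟫ : ℂ)) * u y) := by
        simp_rw [integral_const_mul]; rfl
    _ = ∫ y, ∫ ξ, (Complex.exp (Complex.I * (⟪x, ξ⟫ : ℂ)) * (Real.exp (-t * ‖ξ‖ ^ 2) : ℂ)) *
        (Complex.exp (-Complex.I * (⟪y, ξ⟫ : ℂ)) * u y) := integral_integral_swap hi
    _ = ∫ y, (((π / t) ^ ((d : ℝ) / 2) : ℝ) : ℂ) *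
        (u y * (Real.exp (-(1 / (4 * t)) * ‖x - y‖ ^ 2) : ℂ)) := by
        refine integral_congr_ae (.of_forall fun y => ?_)
        simp only
        have e : ∀ ξ, (Complex.exp (Complex.I * (⟪x, ξ⟫ : ℂ)) * (Real.exp (-t * ‖ξ‖ ^ 2) : ℂ)) *
            (Complex.exp (-Complex.I * (⟪y, ξ⟫ : ℂ)) * u y) =
            u y * (Complex.exp (Complex.I * (⟪x - y, ξ⟫ : ℂ)) * (Real.exp (-t * ‖ξ‖ ^ 2) : ℂ)) := by
          intro ξ
          rw [inner_sub_left, Complex.ofReal_sub, mul_sub, sub_eq_add_neg, Complex.exp_add, neg_mul]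
          ring_nf
        simp_rw [e]
        rw [integral_const_mul, integral_cexp_inner_mul_gaussian d ht]
        push_cast
        ring
    _ = _ := integral_const_mul _ _

theorem lintegral_gaussian_shift (d : ℕ) {b : ℝ} (hb : 0 < b) (y : E d) :
    ∫⁻ x : E d, ENNReal.ofReal (Real.exp (-b * ‖x - y‖ ^ 2)) =
      ENNReal.ofReal ((π / b) ^ ((d : ℝ) / 2)) := by
  simp_rw [norm_sub_rev _ y]
  exact lintegral_shift_gaussian d hb y

theorem integrable_mul_mul_gaussian_sub {d : ℕ} {φ u : E d → ℂ} (hφ : Measurable φ) {M : ℝ}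
    (hM : ∀ y, ‖φ y‖ ≤ M) (hum : Measurable u) (hu : Integrable u) {s : ℝ} (hs : 0 < s) :
    Integrable fun q : E d × E d => φ q.1 * u q.2 * (Real.exp (-s * ‖q.1 - q.2‖ ^ 2) : ℂ) := by
  have hm : Measurable fun q : E d × E d =>
      φ q.1 * u q.2 * (Real.exp (-s * ‖q.1 - q.2‖ ^ 2) : ℂ) := by fun_prop
  refine ⟨hm.aestronglyMeasurable, ?_⟩
  rw [hasFiniteIntegral_iff_enorm, Measure.volume_eq_prod, lintegral_prod_symm _ (by fun_prop)]
  calc ∫⁻ y, ∫⁻ x, ‖φ x * u y * (Real.exp (-s * ‖x - y‖ ^ 2) : ℂ)‖ₑ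
      ≤ ∫⁻ y, ∫⁻ x, (ENNReal.ofReal M * ‖u y‖ₑ) *
          ENNReal.ofReal (Real.exp (-s * ‖x - y‖ ^ 2)) := by
        refine lintegral_mono fun y => lintegral_mono fun x => ?_
        rw [enorm_mul, enorm_mul, ← ofReal_norm (_ : ℂ), ← ofReal_norm (Complex.ofReal _),
          Complex.norm_real, Real.norm_of_nonneg (Real.exp_pos _).le]
        refine mul_le_mul' (mul_le_mul' (ENNReal.ofReal_le_ofReal (hM x)) le_rfl) le_rfl
    _ = ∫⁻ y, (ENNReal.ofReal M * ENNReal.ofReal ((π / s) ^ ((d : ℝ) / 2))) * ‖u y‖ₑ := by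
        refine lintegral_congr fun y => ?_
        rw [lintegral_const_mul _ (by fun_prop), lintegral_gaussian_shift d hs]
        ring
    _ = (ENNReal.ofReal M * ENNReal.ofReal ((π / s) ^ ((d : ℝ) / 2))) * ∫⁻ y, ‖u y‖ₑ :=
        lintegral_const_mul _ (by fun_prop)
    _ < ∞ := ENNReal.mul_lt_top (by finiteness) hu.2

theorem integrable_of_bounded_mul_gaussian {d : ℕ} {φ : E d → ℂ} (hφ : Measurable φ) {M : ℝ}
    (hM : ∀ y, ‖φ y‖ ≤ M) {b : ℝ} (hb : 0 < b) (x : E d) :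
    Integrable fun y => φ y * (Real.exp (-b * ‖y - x‖ ^ 2) : ℂ) :=
  ((integrable_gaussian d hb).comp_sub_right x).ofReal.bdd_mul hφ.aestronglyMeasurable
    (.of_forall hM)

theorem enorm_integral_mul_gaussian_le {d : ℕ} {φ u : E d → ℂ} (hφ : Measurable φ) {M : ℝ}
    (hM : ∀ y, ‖φ y‖ ≤ M) (hum : Measurable u) (hu : Integrable u) {b s : ℝ} (hb : 0 < b)
    (hs : 0 < s) :
    ENNReal.ofReal ((π / s) ^ ((d : ℝ) / 2) * (π / (1 / 2 + b)) ^ ((d : ℝ) / 2)) *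
      ‖∫ q : E d × E d, φ q.1 * u q.2 *
        (Real.exp (-(b / (1 + 2 * b) + 1 / (4 * s)) * ‖q.1 - q.2‖ ^ 2) : ℂ)‖ₑ ≤
      ∫⁻ z : P d, ‖locFT d b φ z‖ₑ * ‖stft d u z‖ₑ *
        ENNReal.ofReal (Real.exp (-s * ‖z.2‖ ^ 2)) := by
  set c := (π / s) ^ ((d : ℝ) / 2) with hc
  set c' := (π / (1 / 2 + b)) ^ ((d : ℝ) / 2) with hc'
  have hs4 : 0 < 1 / (4 * s) := by positivity
  set k : E d × E d → ℂ := fun q => φ q.1 * u q.2 *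
    (Real.exp (-(1 / (4 * s)) * ‖q.1 - q.2‖ ^ 2) : ℂ) with hk
  have ki : Integrable k := integrable_mul_mul_gaussian_sub hφ hM hum hu hs4
  have km : Measurable k := by simp only [hk]; fun_prop
  set J : E d → E d × E d → ℂ := fun x q =>
    (((Real.exp (-b * ‖q.1 - x‖ ^ 2) * Real.exp (-(1 / 2) * ‖q.2 - x‖ ^ 2) : ℝ) : ℂ)) * k q with hJ
  have hJm : Measurable (Function.uncurry J) := by
    simp only [hJ, Function.uncurry_def]; fun_prop
  have hJi : Integrable (Function.uncurry J) (volume.prod volume) := by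
    refine ⟨hJm.aestronglyMeasurable, ?_⟩
    rw [hasFiniteIntegral_iff_enorm, lintegral_prod_symm _ (by fun_prop)]
    calc ∫⁻ q, ∫⁻ x, ‖J x q‖ₑ
        ≤ ∫⁻ q : E d × E d, ∫⁻ x, ‖k q‖ₑ *
            ENNReal.ofReal (Real.exp (-(1 / 2) * ‖q.2 - x‖ ^ 2)) := by
          refine lintegral_mono fun q => lintegral_mono fun x => ?_
          simp only [hJ]
          rw [enorm_mul, mul_comm, ← ofReal_norm (Complex.ofReal _),
            Complex.norm_real, Real.norm_of_nonneg (by positivity)]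
          refine mul_le_mul' le_rfl (ENNReal.ofReal_le_ofReal ?_)
          exact mul_le_of_le_one_left (Real.exp_pos _).le (exp_neg_mul_norm_sq_le_one hb _)
      _ = ∫⁻ q, ENNReal.ofReal ((π / (1 / 2)) ^ ((d : ℝ) / 2)) * ‖k q‖ₑ := by
          refine lintegral_congr fun q => ?_
          rw [lintegral_const_mul _ (by fun_prop), lintegral_shift_gaussian d (by norm_num), mul_comm]
      _ = ENNReal.ofReal ((π / (1 / 2)) ^ ((d : ℝ) / 2)) * ∫⁻ q, ‖k q‖ₑ :=
          lintegral_const_mul _ (by fun_prop)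
      _ < ∞ := ENNReal.mul_lt_top (by finiteness) ki.2
  have fib : ∀ x, ∫ ξ, locFT d b φ (x, ξ) * stft d u (x, ξ) * (Real.exp (-s * ‖ξ‖ ^ 2) : ℂ) =
      (c : ℂ) * ∫ q, J x q := by
    intro x
    simp_rw [stft_eq_locFT, locFT]
    rw [integral_ft_mul_ft_neg_mul_gaussian (integrable_of_bounded_mul_gaussian hφ hM hb x)
      (integrable_mul_gaussian hu (by norm_num) x) hs, ← integral_const_mul]
    refine integral_congr_ae (.of_forall fun q => ?_)
    simp only [hJ, hk, ← hc]
    push_cast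
    ring
  have tot : ∫ x, ∫ q, J x q = (c' : ℂ) * ∫ q : E d × E d, φ q.1 * u q.2 *
        (Real.exp (-(b / (1 + 2 * b) + 1 / (4 * s)) * ‖q.1 - q.2‖ ^ 2) : ℂ) := by
    rw [integral_integral_swap hJi, ← integral_const_mul]
    refine integral_congr_ae (.of_forall fun q => ?_)
    simp only [hJ]
    rw [integral_mul_const, integral_complex_ofReal,
      integral_gaussian_mul_gaussian d (by norm_num : (0 : ℝ) < 1 / 2) hb]
    simp only [hk, ← hc']
    have e : -(b / (1 + 2 * b) + 1 / (4 * s)) * ‖q.1 - q.2‖ ^ 2 =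
      -(1 / 2 * b / (1 / 2 + b)) * ‖q.1 - q.2‖ ^ 2 + -(1 / (4 * s)) * ‖q.1 - q.2‖ ^ 2 := by
      field_simp
      ring
    rw [e, Real.exp_add]
    push_cast
    ring
  have e2 : ENNReal.ofReal (c * c') * ‖∫ q : E d × E d, φ q.1 * u q.2 *
        (Real.exp (-(b / (1 + 2 * b) + 1 / (4 * s)) * ‖q.1 - q.2‖ ^ 2) : ℂ)‖ₑ =
      ‖∫ x, (c : ℂ) * ∫ q, J x q‖ₑ := by
    rw [integral_const_mul, tot, enorm_mul, enorm_mul, ← ofReal_norm (Complex.ofReal c),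
      ← ofReal_norm (Complex.ofReal c'), Complex.norm_real, Complex.norm_real,
      Real.norm_of_nonneg (by positivity), Real.norm_of_nonneg (by positivity),
      ENNReal.ofReal_mul (by positivity), mul_assoc]
  have mS := measurable_stft hum
  have mL := measurable_locFT (b := b) hφ
  rw [e2, Measure.volume_eq_prod, lintegral_prod _ (by fun_prop)]
  refine (enorm_integral_le_lintegral_enorm _).trans (lintegral_mono fun x => ?_)
  rw [← Measure.volume_eq_prod, ← fib]
  refine (enorm_integral_le_lintegral_enorm _).trans (lintegral_mono fun ξ => ?_)
  rw [enorm_mul, enorm_mul, ← ofReal_norm (Complex.ofReal _), Complex.norm_real,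
    Real.norm_of_nonneg (Real.exp_pos _).le]

/-- The pairing of a bounded function with the heat flow of `u` is controlled by the
localized Fourier transforms. -/
theorem enorm_integral_mul_heat_le {d : ℕ} {φ u : E d → ℂ} (hφ : Measurable φ) {M : ℝ}
    (hM : ∀ y, ‖φ y‖ ≤ M) (hum : Measurable u) (hu : Integrable u) {b s t : ℝ} (hb : 0 < b)
    (hb' : b ≤ 1 / 2) (hs : 0 < s) (ht : 0 < t) (hst : s ≤ 2 * t)
    (h : 1 / (4 * t) = b / (1 + 2 * b) + 1 / (4 * s)) :
    ‖∫ y, φ y * heat d t u y‖ₑ ≤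
      ∫⁻ z : P d, ‖locFT d b φ z‖ₑ * ‖stft d u z‖ₑ *
        ENNReal.ofReal (Real.exp (-s * ‖z.2‖ ^ 2)) := by
  have ht4 : 0 < 1 / (4 * t) := by positivity
  refine le_trans ?_ (enorm_integral_mul_gaussian_le hφ hM hum hu hb hs)
  rw [← h]
  have e : ∫ y, φ y * heat d t u y = ((((2 * π) ^ d)⁻¹ * (π / t) ^ ((d : ℝ) / 2) : ℝ) : ℂ) *
      ∫ q : E d × E d, φ q.1 * u q.2 *
        (Real.exp (-(1 / (4 * t)) * ‖q.1 - q.2‖ ^ 2) : ℂ) := by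
    rw [Measure.volume_eq_prod, integral_prod _ (integrable_mul_mul_gaussian_sub hφ hM hum hu ht4),
      ← integral_const_mul]
    refine integral_congr_ae (.of_forall fun y => ?_)
    simp only [heat_eq_integral_gaussian ht hu, mul_assoc (φ y)]
    rw [integral_const_mul]
    push_cast
    ring
  rw [e, enorm_mul]
  refine mul_le_mul' ?_ le_rfl
  rw [← ofReal_norm, Complex.norm_real, Real.norm_of_nonneg (by positivity)]
  refine ENNReal.ofReal_le_ofReal ?_
  have e3 : ((2 * π) ^ d)⁻¹ = (1 / (4 * π ^ 2)) ^ ((d : ℝ) / 2) := by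
    have : (1 / (4 * π ^ 2)) = ((2 * π)⁻¹) ^ (2 : ℝ) := by
      rw [Real.rpow_two]; field_simp; norm_num
    rw [this, ← Real.rpow_mul (by positivity), mul_div_cancel₀ _ two_ne_zero, Real.rpow_natCast,
      inv_pow]
  rw [e3, ← Real.mul_rpow (by positivity) (by positivity),
    ← Real.mul_rpow (by positivity) (by positivity)]
  refine Real.rpow_le_rpow (by positivity) ?_ (by positivity)
  rw [div_mul_div_comm, div_mul_div_comm, div_le_div_iff₀ (by positivity) (by positivity)]
  have hπ : 1 ≤ π := by linarith [Real.pi_gt_three]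
  have h1 : s * (1 / 2 + b) ≤ 2 * t * 1 := by
    apply mul_le_mul hst (by linarith) (by positivity) (by positivity)
  calc 1 * π * (s * (1 / 2 + b)) ≤ 1 * π * (2 * t * 1) := by gcongr
    _ = π * 1 * 1 * 1 * (2 * t) := by ring
    _ ≤ π * π * π * π * (4 * t) := by gcongr; norm_num
    _ = _ := by ring

theorem FT_eq_ft_neg (d : ℕ) (u : E d → ℂ) (ξ : E d) : FT d u ξ = ft d u (-ξ) := by
  refine integral_congr_ae (.of_forall fun y => ?_)
  simp only [inner_neg_right]
  push_cast
  ring_nf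

theorem continuous_FT {d : ℕ} {u : E d → ℂ} (hu : Integrable u) : Continuous (FT d u) := by
  have : FT d u = fun ξ => ft d u (-ξ) := by ext ξ; exact FT_eq_ft_neg d u ξ
  rw [this]
  exact (continuous_ft hu).comp continuous_neg

/-- The density of the Gamma distribution of shape `a`. -/
def gammaWeight (a t : ℝ) : ℝ := t ^ (a - 1) * Real.exp (-t) / Real.Gamma a

theorem gammaWeight_nonneg {a t : ℝ} (ha : 0 < a) (ht : 0 < t) : 0 ≤ gammaWeight a t := by
  have := Real.Gamma_pos_of_pos ha
  unfold gammaWeight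
  positivity

theorem measurable_gammaWeight (a : ℝ) : Measurable (gammaWeight a) := by
  unfold gammaWeight; fun_prop

theorem integrableOn_gammaWeight {a : ℝ} (ha : 0 < a) :
    IntegrableOn (gammaWeight a) (Set.Ioi 0) := by
  refine ((Real.GammaIntegral_convergent ha).div_const (Real.Gamma a)).congr
    (.of_forall fun t => ?_)
  simp only [gammaWeight]
  ring

theorem integral_gammaWeight_mul_exp {a : ℝ} (ha : 0 < a) {x : ℝ} (hx : 0 ≤ x) :
    ∫ t in Set.Ioi (0 : ℝ), gammaWeight a t * Real.exp (-t * x) = (1 + x) ^ (-a) := by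
  have h := Real.integral_rpow_mul_exp_neg_mul_Ioi ha (by linarith : 0 < 1 + x)
  have hG := (Real.Gamma_pos_of_pos ha).ne'
  have e : ∀ t : ℝ, gammaWeight a t * Real.exp (-t * x) =
      (Real.Gamma a)⁻¹ * (t ^ (a - 1) * Real.exp (-((1 + x) * t))) := by
    intro t
    have : -((1 + x) * t) = -t + -t * x := by ring
    rw [this, Real.exp_add, gammaWeight]
    ring
  simp_rw [e]
  rw [integral_const_mul, h, one_div, Real.inv_rpow (by linarith), Real.rpow_neg (by linarith)]
  field_simp

theorem exp_neg_mul_le_one {t x : ℝ} (ht : 0 ≤ t) (hx : 0 ≤ x) : Real.exp (-t * x) ≤ 1 := by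
  rw [Real.exp_le_one_iff]
  have := mul_nonneg ht hx
  linarith

theorem integrableOn_gammaWeight_mul_exp {a : ℝ} (ha : 0 < a) {x : ℝ} (hx : 0 ≤ x) :
    IntegrableOn (fun t => gammaWeight a t * Real.exp (-t * x)) (Set.Ioi 0) := by
  refine (integrableOn_gammaWeight ha).mul_bdd (c := 1)
    (Continuous.aestronglyMeasurable (by fun_prop)) ?_
  filter_upwards [ae_restrict_mem measurableSet_Ioi] with t ht
  rw [Real.norm_of_nonneg (Real.exp_pos _).le]
  exact exp_neg_mul_le_one (le_of_lt ht) hx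

/-- The Bessel potential is a superposition of heat flows. -/
theorem besselh_eq_integral_heat {d : ℕ} {k : ℝ} (hk : 0 < k) {u : E d → ℂ}
    (hFT : Integrable (FT d u)) (x : E d) :
    besselh d 1 (-k) u x = ∫ t in Set.Ioi (0 : ℝ), (gammaWeight (k / 2) t : ℂ) * heat d t u x := by
  have ha : 0 < k / 2 := by positivity
  have hi : Integrable (Function.uncurry fun (t : ℝ) (ξ : E d) => (gammaWeight (k / 2) t : ℂ) *
      (Complex.exp (Complex.I * (⟪x, ξ⟫ : ℂ)) * (Real.exp (-t * ‖ξ‖ ^ 2) : ℂ) * FT d u ξ))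
      ((volume.restrict (Set.Ioi 0)).prod volume) := by
    have h0 : Integrable (fun q : ℝ × E d => (gammaWeight (k / 2) q.1 : ℂ) * FT d u q.2)
        ((volume.restrict (Set.Ioi 0)).prod volume) :=
      (integrableOn_gammaWeight ha).ofReal.mul_prod hFT
    have h1 : AEStronglyMeasurable (fun q : ℝ × E d => Complex.exp (Complex.I * (⟪x, q.2⟫ : ℂ)) *
      (Real.exp (-q.1 * ‖q.2‖ ^ 2) : ℂ)) ((volume.restrict (Set.Ioi 0)).prod volume) :=
      Continuous.aestronglyMeasurable (by fun_prop)
    have h2 : ∀ᵐ q : ℝ × E d ∂((volume.restrict (Set.Ioi 0)).prod volume), 0 < q.1 :=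
      Measure.quasiMeasurePreserving_fst.ae (ae_restrict_mem measurableSet_Ioi)
    refine (h0.bdd_mul (c := 1) h1 ?_).congr (.of_forall fun q => ?_)
    · filter_upwards [h2] with q hq
      rw [norm_mul, norm_cexp_I_mul_real, one_mul, Complex.norm_real,
        Real.norm_of_nonneg (Real.exp_pos _).le]
      exact exp_neg_mul_le_one hq.le (by positivity)
    · simp only [Function.uncurry]; ring
  simp_rw [heat, besselh, mul_left_comm _ (((2 * π) ^ d : ℝ) : ℂ)⁻¹]
  rw [integral_const_mul]
  congr 1
  simp_rw [← integral_const_mul]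
  rw [integral_integral_swap hi]
  refine integral_congr_ae (.of_forall fun ξ => ?_)
  simp only
  have e : ∀ t : ℝ, (gammaWeight (k / 2) t : ℂ) *
      (Complex.exp (Complex.I * (⟪x, ξ⟫ : ℂ)) * (Real.exp (-t * ‖ξ‖ ^ 2) : ℂ) * FT d u ξ) =
      ((gammaWeight (k / 2) t * Real.exp (-t * ‖ξ‖ ^ 2) : ℝ) : ℂ) *
        (Complex.exp (Complex.I * (⟪x, ξ⟫ : ℂ)) * FT d u ξ) := by
    intro t; push_cast; ring
  simp_rw [e]
  rw [integral_mul_const, integral_complex_ofReal, integral_gammaWeight_mul_exp ha (by positivity),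
    one_mul, neg_div]
  ring

theorem measurable_heat {d : ℕ} {u : E d → ℂ} (hu : Integrable u) :
    Measurable fun q : ℝ × E d => heat d q.1 u q.2 := by
  have hm := (continuous_FT hu).measurable
  have : StronglyMeasurable fun q : (ℝ × E d) × E d =>
      Complex.exp (Complex.I * (⟪q.1.2, q.2⟫ : ℂ)) * (Real.exp (-q.1.1 * ‖q.2‖ ^ 2) : ℂ) *
        FT d u q.2 := by
    apply Measurable.stronglyMeasurable
    fun_prop
  exact (this.integral_prod_right'.measurable).const_mul _

theorem lintegral_enorm_heat_le {d : ℕ} {t : ℝ} (ht : 0 < t) {u : E d → ℂ} (hum : Measurable u)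
    (hu : Integrable u) : ∫⁻ x, ‖heat d t u x‖ₑ ≤ ∫⁻ y, ‖u y‖ₑ := by
  have ht4 : 0 < 1 / (4 * t) := by positivity
  set c : ℝ := ((2 * π) ^ d)⁻¹ * (π / t) ^ ((d : ℝ) / 2) with hc
  have hc0 : 0 ≤ c := by positivity
  have e : ∀ x, ‖heat d t u x‖ₑ ≤ ∫⁻ y, (ENNReal.ofReal c * ‖u y‖ₑ) *
      ENNReal.ofReal (Real.exp (-(1 / (4 * t)) * ‖x - y‖ ^ 2)) := by
    intro x
    have : heat d t u x = ∫ y, (c : ℂ) * (u y *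
        (Real.exp (-(1 / (4 * t)) * ‖x - y‖ ^ 2) : ℂ)) := by
      rw [heat_eq_integral_gaussian ht hu, integral_const_mul, hc]
      push_cast
      ring
    rw [this]
    refine (enorm_integral_le_lintegral_enorm _).trans (lintegral_mono fun y => le_of_eq ?_)
    rw [enorm_mul, enorm_mul, ← ofReal_norm (Complex.ofReal c), ← ofReal_norm (Complex.ofReal _),
      Complex.norm_real, Complex.norm_real, Real.norm_of_nonneg (Real.exp_pos _).le,
      Real.norm_of_nonneg hc0, mul_assoc]
  have c1 : c * (π / (1 / (4 * t))) ^ ((d : ℝ) / 2) = 1 := by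
    rw [hc, mul_assoc, ← Real.mul_rpow (by positivity) (by positivity)]
    have : π / t * (π / (1 / (4 * t))) = (2 * π) ^ (2 : ℝ) := by
      rw [Real.rpow_two]; field_simp; norm_num
    rw [this, ← Real.rpow_mul (by positivity), mul_div_cancel₀ _ two_ne_zero, Real.rpow_natCast]
    exact inv_mul_cancel₀ (by positivity)
  calc ∫⁻ x, ‖heat d t u x‖ₑ ≤ ∫⁻ x, ∫⁻ y, (ENNReal.ofReal c * ‖u y‖ₑ) *
      ENNReal.ofReal (Real.exp (-(1 / (4 * t)) * ‖x - y‖ ^ 2)) := lintegral_mono e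
    _ = ∫⁻ y, ∫⁻ x, (ENNReal.ofReal c * ‖u y‖ₑ) *
      ENNReal.ofReal (Real.exp (-(1 / (4 * t)) * ‖x - y‖ ^ 2)) :=
        lintegral_lintegral_swap (Measurable.aemeasurable (by fun_prop))
    _ = ∫⁻ y, ‖u y‖ₑ := by
        refine lintegral_congr fun y => ?_
        rw [lintegral_const_mul _ (by fun_prop), lintegral_gaussian_shift d ht4, mul_comm,
          ← mul_assoc, mul_comm (ENNReal.ofReal _), ← ENNReal.ofReal_mul hc0, c1]
        simp

theorem integrable_gammaWeight_mul {d : ℕ} {a : ℝ} (ha : 0 < a) {φ : E d → ℂ}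
    (hφ : Measurable φ) {M : ℝ} (hM : ∀ y, ‖φ y‖ ≤ M) {H : ℝ → E d → ℂ}
    (mH : Measurable fun q : ℝ × E d => H q.1 q.2) {K : ℝ≥0∞} (hK : K ≠ ∞)
    (hH : ∀ t, 0 < t → ∫⁻ y, ‖H t y‖ₑ ≤ K) :
    Integrable (Function.uncurry fun (y : E d) (t : ℝ) => (gammaWeight a t : ℂ) *
      (φ y * H t y)) (volume.prod (volume.restrict (Set.Ioi 0))) := by
  have mg := measurable_gammaWeight a
  have m : Measurable (Function.uncurry fun (y : E d) (t : ℝ) => (gammaWeight a t : ℂ) *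
    (φ y * H t y)) := by
    have : Measurable fun q : E d × ℝ => H q.2 q.1 := mH.comp measurable_swap
    exact (Complex.measurable_ofReal.comp (mg.comp measurable_snd)).mul
      ((hφ.comp measurable_fst).mul this)
  refine ⟨m.aestronglyMeasurable, ?_⟩
  rw [hasFiniteIntegral_iff_enorm, lintegral_prod_symm _ m.enorm.aemeasurable]
  calc ∫⁻ t in Set.Ioi (0 : ℝ), ∫⁻ y, ‖(gammaWeight a t : ℂ) * (φ y * H t y)‖ₑ
      ≤ ∫⁻ t in Set.Ioi (0 : ℝ), ‖gammaWeight a t‖ₑ *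
          (ENNReal.ofReal M * K) := by
        refine setLIntegral_mono' measurableSet_Ioi fun t ht => ?_
        have mt : Measurable fun y => H t y := mH.comp measurable_prodMk_left
        simp_rw [enorm_mul]
        rw [lintegral_const_mul _ (by fun_prop), ← ofReal_norm (Complex.ofReal _),
          Complex.norm_real, ofReal_norm]
        refine mul_le_mul' le_rfl ?_
        refine le_trans ?_ (mul_le_mul' le_rfl (hH t ht))
        rw [← lintegral_const_mul _ (by fun_prop)]
        refine lintegral_mono fun y => mul_le_mul' ?_ le_rfl
        rw [← ofReal_norm]
        exact ENNReal.ofReal_le_ofReal (hM y)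
    _ = (∫⁻ t in Set.Ioi (0 : ℝ), ‖gammaWeight a t‖ₑ) *
          (ENNReal.ofReal M * K) := lintegral_mul_const _ (by fun_prop)
    _ < ∞ := ENNReal.mul_lt_top (integrableOn_gammaWeight ha).2
        (ENNReal.mul_lt_top (by finiteness) hK.lt_top)

theorem enorm_integral_mul_besselh_le {d : ℕ} {k : ℝ} (hk : 0 < k) {φ u : E d → ℂ}
    (hφ : Measurable φ) {M : ℝ} (hM : ∀ y, ‖φ y‖ ≤ M) (hum : Measurable u) (hu : Integrable u)
    (hFT : Integrable (FT d u)) :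
    ‖∫ y, φ y * besselh d 1 (-k) u y‖ₑ ≤ ∫⁻ t in Set.Ioi (0 : ℝ),
      ENNReal.ofReal (gammaWeight (k / 2) t) * ‖∫ y, φ y * heat d t u y‖ₑ := by
  have ha : 0 < k / 2 := by positivity
  have hi := integrable_gammaWeight_mul ha hφ hM (measurable_heat hu) hu.2.ne
    fun t ht => lintegral_enorm_heat_le ht hum hu
  have e : ∫ y, φ y * besselh d 1 (-k) u y =
      ∫ t in Set.Ioi (0 : ℝ), (gammaWeight (k / 2) t : ℂ) * ∫ y, φ y * heat d t u y := by
    simp_rw [← integral_const_mul]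
    rw [← integral_integral_swap hi]
    refine integral_congr_ae (.of_forall fun y => ?_)
    simp only
    rw [besselh_eq_integral_heat hk hFT, ← integral_const_mul]
    refine integral_congr_ae (.of_forall fun t => ?_)
    simp only
    ring
  rw [e]
  refine (enorm_integral_le_lintegral_enorm _).trans
    (setLIntegral_mono' measurableSet_Ioi fun t ht => le_of_eq ?_)
  rw [enorm_mul, ← ofReal_norm (Complex.ofReal _), Complex.norm_real,
    Real.norm_of_nonneg (gammaWeight_nonneg ha ht)]

/-- The symbol `(1+|ξ|²)^{-a}` of the Bessel potential, with values in `[0, ∞]`. -/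
def besselWeight (d : ℕ) (a : ℝ) (ξ : E d) : ℝ≥0∞ := ENNReal.ofReal ((1 + ‖ξ‖ ^ 2) ^ (-a))

theorem measurable_besselWeight (d : ℕ) (a : ℝ) : Measurable (besselWeight d a) := by
  unfold besselWeight; fun_prop

theorem lintegral_rpow_ft_mul_besselWeight_le {d : ℕ} (hd : 1 ≤ d) {r : ℝ} (hr₁ : 1 < r)
    (hr₂ : r ≤ 2) {a : ℝ} (ha : a = d * (2 / r - 1) / 2) :
    ∃ C : ℝ≥0∞, C ≠ ∞ ∧ ∀ h : E d → ℂ, Measurable h → Integrable h →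
      ∫⁻ ξ, (‖ft d h ξ‖ₑ * besselWeight d a ξ) ^ r ≤ C * ∫⁻ y, ‖h y‖ₑ ^ r := by
  rcases hr₂.lt_or_eq with hr | hr
  · obtain ⟨C, hC, H⟩ := lintegral_rpow_ft_mul_norm_rpow_le hd hr₁ hr
    refine ⟨C, hC, fun h hm hi => le_trans (lintegral_mono_ae ?_) (H h hm hi)⟩
    have : Nonempty (Fin d) := ⟨⟨0, hd⟩⟩
    filter_upwards [compl_mem_ae_iff.2 (measure_singleton (0 : E d))] with ξ hξ
    have hξ' : 0 < ‖ξ‖ := norm_pos_iff.2 hξ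
    rw [ENNReal.mul_rpow_of_nonneg _ _ (by linarith)]
    refine mul_le_mul' le_rfl ?_
    rw [besselWeight, ENNReal.ofReal_rpow_of_nonneg (by positivity) (by linarith),
      ← Real.rpow_mul (by positivity)]
    have e : -a * r = d * (r - 2) / 2 := by rw [ha]; field_simp; ring
    have e2 : ‖ξ‖ ^ (d * (r - 2) : ℝ) = (‖ξ‖ ^ 2) ^ (d * (r - 2) / 2 : ℝ) := by
      rw [← Real.rpow_two, ← Real.rpow_mul hξ'.le]
      congr 1
      ring
    rw [e, e2]
    refine ENNReal.ofReal_le_ofReal (Real.rpow_le_rpow_of_nonpos (by positivity) (by linarith) ?_)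
    have : (0 : ℝ) ≤ d := by positivity
    nlinarith
  · subst hr
    refine ⟨ENNReal.ofReal ((2 * π) ^ d), by finiteness, fun h hm hi => ?_⟩
    have : a = 0 := by rw [ha]; norm_num
    simpa [this, besselWeight] using lintegral_sq_ft_le hi

theorem lintegral_rpow_locFT_mul_besselWeight_le {d : ℕ} (hd : 1 ≤ d) {r : ℝ} (hr₁ : 1 < r)
    (hr₂ : r ≤ 2) {a : ℝ} (ha : a = d * (2 / r - 1) / 2) :
    ∃ C : ℝ≥0∞, C ≠ ∞ ∧ ∀ (b : ℝ) (φ : E d → ℂ) (M : ℝ), 0 < b → Measurable φ →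
      (∀ y, ‖φ y‖ ≤ M) → ∫⁻ z : P d, (‖locFT d b φ z‖ₑ * besselWeight d a z.2) ^ r ≤
        C * (ENNReal.ofReal ((π / (r * b)) ^ ((d : ℝ) / 2)) * ∫⁻ y, ‖φ y‖ₑ ^ r) := by
  obtain ⟨C, hC, H⟩ := lintegral_rpow_ft_mul_besselWeight_le hd hr₁ hr₂ ha
  refine ⟨C, hC, fun b φ M hb hφ hM => ?_⟩
  have mL := measurable_locFT (b := b) hφ
  have mw := measurable_besselWeight d a
  have hrb : 0 < r * b := by positivity
  rw [Measure.volume_eq_prod, lintegral_prod _ (by fun_prop)]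
  calc ∫⁻ x, ∫⁻ ξ, (‖locFT d b φ (x, ξ)‖ₑ * besselWeight d a ξ) ^ r
      ≤ ∫⁻ x, C * ∫⁻ y, ‖φ y‖ₑ ^ r * ENNReal.ofReal (Real.exp (-(r * b) * ‖y - x‖ ^ 2)) := by
        refine lintegral_mono fun x => (H _ (by fun_prop)
          (integrable_of_bounded_mul_gaussian hφ hM hb x)).trans (le_of_eq ?_)
        congr 1
        refine lintegral_congr fun y => ?_
        rw [enorm_mul_gaussian, ENNReal.mul_rpow_of_nonneg _ _ (by linarith),
          ENNReal.ofReal_rpow_of_pos (Real.exp_pos _), ← Real.exp_mul]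
        congr 3
        ring
    _ = C * ∫⁻ x, ∫⁻ y, ‖φ y‖ₑ ^ r * ENNReal.ofReal (Real.exp (-(r * b) * ‖y - x‖ ^ 2)) :=
        lintegral_const_mul _ (Measurable.lintegral_prod_right (by fun_prop))
    _ = C * ∫⁻ y, ∫⁻ x, ‖φ y‖ₑ ^ r * ENNReal.ofReal (Real.exp (-(r * b) * ‖y - x‖ ^ 2)) := by
        rw [lintegral_lintegral_swap (Measurable.aemeasurable (by fun_prop))]
    _ = _ := by
        rw [← lintegral_const_mul (ENNReal.ofReal _) (hφ.enorm.pow_const r)]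
        congr 1
        refine lintegral_congr fun y => ?_
        rw [lintegral_const_mul _ (by fun_prop), lintegral_shift_gaussian d hrb y, mul_comm]

theorem lintegral_locFT_mul_stft_mul_besselWeight_le {d : ℕ} (hd : 1 ≤ d) {p r : ℝ}
    (hpr : p.HolderConjugate r) (hr₂ : r ≤ 2) {a : ℝ} (ha : a = d * (2 / r - 1) / 2) :
    ∃ C : ℝ≥0∞, C ≠ ∞ ∧ ∀ (b : ℝ) (φ u : E d → ℂ) (M : ℝ), 0 < b → Measurable φ →
      (∀ y, ‖φ y‖ ≤ M) → Measurable u →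
      ∫⁻ z : P d, ‖locFT d b φ z‖ₑ * ‖stft d u z‖ₑ * besselWeight d a z.2 ≤
        C * ENNReal.ofReal (b ^ (-(d / (2 * r)) : ℝ)) *
          ((∫⁻ z : P d, ‖stft d u z‖ₑ ^ p) ^ (1 / p) * (∫⁻ y, ‖φ y‖ₑ ^ r) ^ (1 / r)) := by
  have hr₁ : 1 < r := hpr.symm.lt
  obtain ⟨C, hC, H⟩ := lintegral_rpow_locFT_mul_besselWeight_le hd hr₁ hr₂ ha
  have hr0 : 0 ≤ 1 / r := by positivity
  refine ⟨C ^ (1 / r) * ENNReal.ofReal ((π / r) ^ (d / (2 * r) : ℝ)),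
    ENNReal.mul_ne_top (ENNReal.rpow_ne_top_of_nonneg hr0 hC) (by finiteness),
    fun b φ u M hb hφ hM hu => ?_⟩
  have mL := measurable_locFT (b := b) hφ
  have mS := measurable_stft hu
  have mw := measurable_besselWeight d a
  have hol := ENNReal.lintegral_mul_le_Lp_mul_Lq (volume : Measure (P d)) hpr
    (f := fun z => ‖stft d u z‖ₑ) (g := fun z => ‖locFT d b φ z‖ₑ * besselWeight d a z.2)
    (by fun_prop) (by fun_prop)
  simp only [Pi.mul_apply] at hol
  calc ∫⁻ z : P d, ‖locFT d b φ z‖ₑ * ‖stft d u z‖ₑ * besselWeight d a z.2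
      = ∫⁻ z : P d, ‖stft d u z‖ₑ * (‖locFT d b φ z‖ₑ * besselWeight d a z.2) := by
        refine lintegral_congr fun z => ?_; ring
    _ ≤ _ := hol
    _ ≤ (∫⁻ z : P d, ‖stft d u z‖ₑ ^ p) ^ (1 / p) *
        (C * (ENNReal.ofReal ((π / (r * b)) ^ ((d : ℝ) / 2)) * ∫⁻ y, ‖φ y‖ₑ ^ r)) ^ (1 / r) :=
        mul_le_mul' le_rfl (ENNReal.rpow_le_rpow (H b φ M hb hφ hM) hr0)
    _ = _ := by
        rw [ENNReal.mul_rpow_of_nonneg _ _ hr0, ENNReal.mul_rpow_of_nonneg _ _ hr0,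
          ENNReal.ofReal_rpow_of_nonneg (by positivity) hr0, ← Real.rpow_mul (by positivity)]
        have e : (π / (r * b)) ^ ((d : ℝ) / 2 * (1 / r)) =
            (π / r) ^ (d / (2 * r) : ℝ) * b ^ (-(d / (2 * r)) : ℝ) := by
          have : (d : ℝ) / 2 * (1 / r) = d / (2 * r) := by field_simp
          rw [this, ← div_div, Real.div_rpow (by positivity) hb.le, Real.rpow_neg hb.le,
            div_eq_mul_inv]
        rw [e, ENNReal.ofReal_mul (by positivity)]
        ring

theorem exp_neg_le_mul_one_add_rpow {a x : ℝ} (ha : 0 ≤ a) (hx : 0 ≤ x) :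
    Real.exp (-x) ≤ (1 + a) ^ a * (1 + x) ^ (-a) := by
  have h1 : (1 + x) ^ a ≤ (1 + a) ^ a * Real.exp x := by
    have h2 : 1 + x ≤ (1 + a) * Real.exp (x / (1 + a)) := by
      have h3 := Real.add_one_le_exp (x / (1 + a))
      calc 1 + x ≤ (1 + a) * (x / (1 + a) + 1) := by
            have : (1 + a) * (x / (1 + a) + 1) = x + (1 + a) := by field_simp
            rw [this]; linarith
        _ ≤ _ := by gcongr
    calc (1 + x) ^ a ≤ ((1 + a) * Real.exp (x / (1 + a))) ^ a :=
          Real.rpow_le_rpow (by linarith) h2 ha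
      _ = (1 + a) ^ a * Real.exp (x / (1 + a) * a) := by
          rw [Real.mul_rpow (by linarith) (Real.exp_pos _).le, ← Real.exp_mul]
      _ ≤ (1 + a) ^ a * Real.exp x := by
          gcongr
          rw [div_mul_eq_mul_div, div_le_iff₀ (by linarith)]
          nlinarith
  rw [Real.rpow_neg (by linarith), Real.exp_neg, ← div_eq_mul_inv, inv_eq_one_div,
    div_le_div_iff₀ (Real.exp_pos _) (by positivity)]
  linarith

theorem lintegral_gammaWeight_mul_exp {d : ℕ} {a : ℝ} (ha : 0 < a) (ξ : E d) :
    ∫⁻ t in Set.Ioi (0 : ℝ), ENNReal.ofReal (gammaWeight a t) *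
      ENNReal.ofReal (Real.exp (-t * ‖ξ‖ ^ 2)) = besselWeight d a ξ := by
  have hx : 0 ≤ ‖ξ‖ ^ 2 := by positivity
  rw [besselWeight, ← integral_gammaWeight_mul_exp ha hx,
    ofReal_integral_eq_lintegral_ofReal (integrableOn_gammaWeight_mul_exp ha hx)]
  · refine setLIntegral_congr_fun measurableSet_Ioi fun t ht => ?_
    rw [ENNReal.ofReal_mul (gammaWeight_nonneg ha ht)]
  · filter_upwards [ae_restrict_mem measurableSet_Ioi] with t ht
    exact mul_nonneg (gammaWeight_nonneg ha ht) (Real.exp_pos _).le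

theorem setLIntegral_gammaWeight_mul_pairing_small_le {d : ℕ} {a : ℝ} (ha : 0 < a)
    {φ u : E d → ℂ} (hφ : Measurable φ) {M : ℝ} (hM : ∀ y, ‖φ y‖ ≤ M) (hum : Measurable u)
    (hu : Integrable u) :
    ∫⁻ t in Set.Ioc (0 : ℝ) (1 / 2),
      ENNReal.ofReal (gammaWeight a t) * ‖∫ y, φ y * heat d t u y‖ₑ ≤
      ∫⁻ z : P d, ‖locFT d (1 / 2) φ z‖ₑ * ‖stft d u z‖ₑ * besselWeight d a z.2 := by
  have mg := measurable_gammaWeight a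
  have mS := measurable_stft hum
  have mL := measurable_locFT (b := 1 / 2) hφ
  calc ∫⁻ t in Set.Ioc (0 : ℝ) (1 / 2),
      ENNReal.ofReal (gammaWeight a t) * ‖∫ y, φ y * heat d t u y‖ₑ
      ≤ ∫⁻ t in Set.Ioc (0 : ℝ) (1 / 2), ∫⁻ z : P d, (‖locFT d (1 / 2) φ z‖ₑ * ‖stft d u z‖ₑ) *
          (ENNReal.ofReal (gammaWeight a t) * ENNReal.ofReal (Real.exp (-t * ‖z.2‖ ^ 2))) := by
        refine setLIntegral_mono' measurableSet_Ioc fun t ht => ?_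
        obtain ⟨h0, h1⟩ := ht
        have h2 : 0 < 1 - t := by linarith
        have h := enorm_integral_mul_heat_le hφ hM hum hu (b := 1 / 2) (s := t / (1 - t))
          (by norm_num) le_rfl (by positivity) h0
          (by rw [div_le_iff₀ h2]; nlinarith) (by field_simp; ring)
        refine (mul_le_mul' le_rfl h).trans ?_
        rw [← lintegral_const_mul _ (by fun_prop)]
        refine lintegral_mono fun z => ?_
        simp only
        rw [mul_left_comm]
        refine mul_le_mul' le_rfl (mul_le_mul' le_rfl (ENNReal.ofReal_le_ofReal
          (Real.exp_le_exp.2 ?_)))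
        have h3 : t ≤ t / (1 - t) := by rw [le_div_iff₀ h2]; nlinarith
        have h4 : 0 ≤ ‖z.2‖ ^ 2 := by positivity
        nlinarith
    _ ≤ ∫⁻ t in Set.Ioi (0 : ℝ), ∫⁻ z : P d, (‖locFT d (1 / 2) φ z‖ₑ * ‖stft d u z‖ₑ) *
          (ENNReal.ofReal (gammaWeight a t) * ENNReal.ofReal (Real.exp (-t * ‖z.2‖ ^ 2))) :=
        lintegral_mono_set fun t ht => ht.1
    _ = ∫⁻ z : P d, ∫⁻ t in Set.Ioi (0 : ℝ), (‖locFT d (1 / 2) φ z‖ₑ * ‖stft d u z‖ₑ) *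
          (ENNReal.ofReal (gammaWeight a t) * ENNReal.ofReal (Real.exp (-t * ‖z.2‖ ^ 2))) :=
        lintegral_lintegral_swap (Measurable.aemeasurable (by fun_prop))
    _ = _ := by
        refine lintegral_congr fun z => ?_
        rw [lintegral_const_mul _ (by fun_prop), lintegral_gammaWeight_mul_exp ha]

theorem pairing_heat_large_le {d : ℕ} {a : ℝ} (ha : 0 ≤ a)
    {φ u : E d → ℂ} (hφ : Measurable φ) {M : ℝ} (hM : ∀ y, ‖φ y‖ ≤ M) (hum : Measurable u)
    (hu : Integrable u) {t : ℝ} (ht : 1 / 2 < t) :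
    ‖∫ y, φ y * heat d t u y‖ₑ ≤ ENNReal.ofReal ((1 + a) ^ a) *
      ∫⁻ z : P d, ‖locFT d (1 / (8 * t - 2)) φ z‖ₑ * ‖stft d u z‖ₑ * besselWeight d a z.2 := by
  have mS := measurable_stft hum
  have mL := measurable_locFT (b := 1 / (8 * t - 2)) hφ
  have mw := measurable_besselWeight d a
  have h8 : 0 < 8 * t - 2 := by linarith
  have ht0 : 0 < t := by linarith
  refine (enorm_integral_mul_heat_le hφ hM hum hu (b := 1 / (8 * t - 2)) (s := 2 * t)
    (by positivity) ?_ (by positivity) ht0 le_rfl ?_).trans ?_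
  · exact one_div_le_one_div_of_le two_pos (by linarith)
  · have h9 : 8 * t - 2 + 2 ≠ 0 := by linarith
    have e : 1 / (8 * t - 2) / (1 + 2 * (1 / (8 * t - 2))) = 1 / (8 * t) := by
      field_simp
      ring
    rw [e]
    field_simp
    norm_num
  · rw [← lintegral_const_mul _ (by fun_prop)]
    refine lintegral_mono fun z => ?_
    simp only
    rw [mul_left_comm]
    refine mul_le_mul' le_rfl ?_
    rw [besselWeight, ← ENNReal.ofReal_mul (by positivity)]
    refine ENNReal.ofReal_le_ofReal (le_trans ?_
      (exp_neg_le_mul_one_add_rpow ha (by positivity : 0 ≤ ‖z.2‖ ^ 2)))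
    refine Real.exp_le_exp.2 ?_
    have h4 : 0 ≤ ‖z.2‖ ^ 2 := by positivity
    nlinarith

theorem lintegral_gammaWeight_mul_rpow_ne_top {a β : ℝ} (ha : 0 < a) (hβ : 0 ≤ β) :
    ∫⁻ t in Set.Ioi (1 / 2 : ℝ), ENNReal.ofReal (gammaWeight a t) *
      ENNReal.ofReal ((1 / (8 * t - 2)) ^ (-β)) ≠ ∞ := by
  have hG := Real.Gamma_pos_of_pos ha
  have hi : IntegrableOn (fun t => 8 ^ β / Real.Gamma a * (Real.exp (-t) * t ^ (a + β - 1)))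
      (Set.Ioi (1 / 2)) := IntegrableOn.mono_set
    ((Real.GammaIntegral_convergent (by linarith : 0 < a + β)).const_mul _)
      (Set.Ioi_subset_Ioi (by norm_num : (0 : ℝ) ≤ 1 / 2))
  refine ne_top_of_le_ne_top hi.2.ne (setLIntegral_mono' measurableSet_Ioi fun t ht => ?_)
  have ht' : 1 / 2 < t := ht
  have h0 : 0 < t := by linarith
  have h8 : 0 < 8 * t - 2 := by linarith
  rw [← ENNReal.ofReal_mul (gammaWeight_nonneg ha h0), ← ofReal_norm]
  refine ENNReal.ofReal_le_ofReal ?_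
  rw [Real.norm_of_nonneg (by positivity), one_div, Real.inv_rpow h8.le, Real.rpow_neg h8.le,
    inv_inv]
  calc gammaWeight a t * (8 * t - 2) ^ β ≤ gammaWeight a t * (8 * t) ^ β := by
        refine mul_le_mul_of_nonneg_left (Real.rpow_le_rpow h8.le (by linarith) hβ)
          (gammaWeight_nonneg ha h0)
    _ = _ := by
        simp only
        have : a + β - 1 = a - 1 + β := by ring
        rw [this, Real.rpow_add h0, Real.mul_rpow (by norm_num) h0.le, gammaWeight]
        ring

/-- The Bessel potential of `u`, tested against a bounded function, is controlled by the
`L^p`-norm of the short-time Fourier transform. -/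
theorem enorm_integral_mul_besselh_le_stft {d : ℕ} (hd : 1 ≤ d) {p r : ℝ}
    (hpr : p.HolderConjugate r) (hr₂ : r < 2) {k : ℝ} (hk : k = d * (2 / r - 1)) :
    ∃ C : ℝ≥0∞, C ≠ ∞ ∧ ∀ (φ u : E d → ℂ) (M : ℝ), Measurable φ →
      (∀ y, ‖φ y‖ ≤ M) → Measurable u → Integrable u → Integrable (FT d u) →
      ‖∫ y, φ y * besselh d 1 (-k) u y‖ₑ ≤
        C * ((∫⁻ z : P d, ‖stft d u z‖ₑ ^ p) ^ (1 / p) * (∫⁻ y, ‖φ y‖ₑ ^ r) ^ (1 / r)) := by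
  have hr₁ : 1 < r := hpr.symm.lt
  have hd' : (0 : ℝ) < d := by exact_mod_cast hd
  have h2r : 0 < 2 / r - 1 := by
    have : 1 < 2 / r := by rw [lt_div_iff₀ (by linarith)]; linarith
    linarith
  have hk0 : 0 < k := by rw [hk]; positivity
  have ha : 0 < k / 2 := by positivity
  have hβ : 0 ≤ d / (2 * r) := by positivity
  obtain ⟨C, hC, H⟩ := lintegral_locFT_mul_stft_mul_besselWeight_le hd hpr hr₂.le
    (a := k / 2) (by rw [hk])
  set I := ∫⁻ t in Set.Ioi (1 / 2 : ℝ), ENNReal.ofReal (gammaWeight (k / 2) t) *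
      ENNReal.ofReal ((1 / (8 * t - 2)) ^ (-(d / (2 * r)))) with hI
  have hIt : I ≠ ∞ := lintegral_gammaWeight_mul_rpow_ne_top ha hβ
  refine ⟨C * ENNReal.ofReal ((1 / 2) ^ (-(d / (2 * r)) : ℝ)) +
    ENNReal.ofReal ((1 + k / 2) ^ (k / 2)) * C * I, by finiteness,
    fun φ u M hφ hM hum hu hFT => ?_⟩
  set N := (∫⁻ z : P d, ‖stft d u z‖ₑ ^ p) ^ (1 / p) * (∫⁻ y, ‖φ y‖ₑ ^ r) ^ (1 / r) with hN
  have mg := measurable_gammaWeight (k / 2)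
  refine (enorm_integral_mul_besselh_le hk0 hφ hM hum hu hFT).trans ?_
  rw [← Set.Ioc_union_Ioi_eq_Ioi (by norm_num : (0 : ℝ) ≤ 1 / 2), add_mul]
  refine (lintegral_union_le _ _ _).trans (add_le_add ?_ ?_)
  · exact (setLIntegral_gammaWeight_mul_pairing_small_le ha hφ hM hum hu).trans
      (H (1 / 2) φ u M (by norm_num) hφ hM hum)
  · calc ∫⁻ t in Set.Ioi (1 / 2 : ℝ), ENNReal.ofReal (gammaWeight (k / 2) t) *
          ‖∫ y, φ y * heat d t u y‖ₑ
        ≤ ∫⁻ t in Set.Ioi (1 / 2 : ℝ), (ENNReal.ofReal ((1 + k / 2) ^ (k / 2)) * C * N) *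
            (ENNReal.ofReal (gammaWeight (k / 2) t) *
              ENNReal.ofReal ((1 / (8 * t - 2)) ^ (-(d / (2 * r))))) := by
          refine setLIntegral_mono' measurableSet_Ioi fun t ht => ?_
          have h8 : 0 < 8 * t - 2 := by linarith [Set.mem_Ioi.1 ht]
          refine (mul_le_mul' le_rfl ((pairing_heat_large_le ha.le hφ hM hum hu ht).trans
            (mul_le_mul' le_rfl (H _ φ u M (by positivity) hφ hM hum)))).trans (le_of_eq ?_)
          rw [← hN]
          ring
      _ = _ := by
          rw [lintegral_const_mul _ (by fun_prop), ← hI]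
          ring

theorem lintegral_rpow_le_of_pairing_le {d : ℕ} {p r : ℝ} (hpr : p.HolderConjugate r)
    {G : E d → ℂ} (hG : Measurable G) (hfin : ∫⁻ y, ‖G y‖ₑ ^ p ≠ ∞) {K : ℝ≥0∞}
    (H : ‖∫ y, ((starRingEnd ℂ) (G y) * (‖G y‖ ^ (p - 2) : ℝ)) * G y‖ₑ ≤
      K * (∫⁻ y, ‖(starRingEnd ℂ) (G y) * (‖G y‖ ^ (p - 2) : ℝ)‖ₑ ^ r) ^ (1 / r)) :
    (∫⁻ y, ‖G y‖ₑ ^ p) ^ (1 / p) ≤ K := by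
  have hp : 1 < p := hpr.lt
  have hr : 1 < r := hpr.symm.lt
  have hp0 : 0 < p := by linarith
  have hr0 : 0 < r := by linarith
  have key : ∀ y, ‖G y‖ₑ ^ p = ENNReal.ofReal (‖G y‖ ^ p) := fun y => by
    rw [← ofReal_norm, ENNReal.ofReal_rpow_of_nonneg (norm_nonneg _) hp0.le]
  have h1 : ∀ y, ((starRingEnd ℂ) (G y) * (‖G y‖ ^ (p - 2) : ℝ)) * G y = ((‖G y‖ ^ p : ℝ) : ℂ) := by
    intro y
    rw [mul_right_comm, mul_comm ((starRingEnd ℂ) (G y)), Complex.mul_conj, Complex.normSq_eq_norm_sq,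
      ← Complex.ofReal_mul]
    congr 1
    rcases (norm_nonneg (G y)).eq_or_lt with h0 | h0
    · rw [← h0, Real.zero_rpow hp0.ne']; simp
    · rw [← Real.rpow_two, ← Real.rpow_add h0]; congr 1; ring
  have h2 : ∀ y, ‖(starRingEnd ℂ) (G y) * (‖G y‖ ^ (p - 2) : ℝ)‖ₑ ^ r = ‖G y‖ₑ ^ p := by
    intro y
    rw [key, ← ofReal_norm, norm_mul, RCLike.norm_conj, Complex.norm_real,
      Real.norm_of_nonneg (by positivity), ENNReal.ofReal_rpow_of_nonneg (by positivity) hr0.le]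
    congr 1
    rcases (norm_nonneg (G y)).eq_or_lt with h0 | h0
    · rw [← h0, Real.zero_rpow hp0.ne', zero_mul, Real.zero_rpow hr0.ne']
    · rw [mul_comm, ← Real.rpow_add_one h0.ne', ← Real.rpow_mul h0.le]
      congr 1
      have := hpr.sub_one_mul_conj
      linarith
  simp_rw [h1, h2] at H
  have h3 : ‖∫ y, ((‖G y‖ ^ p : ℝ) : ℂ)‖ₑ = ∫⁻ y, ‖G y‖ₑ ^ p := by
    rw [integral_complex_ofReal, integral_eq_lintegral_of_nonneg_ae (.of_forall fun y => by positivity)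
      (hG.norm.pow_const p).aestronglyMeasurable, ← ofReal_norm,
      Complex.norm_real, Real.norm_of_nonneg ENNReal.toReal_nonneg]
    simp_rw [← key]
    exact ENNReal.ofReal_toReal hfin
  rw [h3] at H
  set X := ∫⁻ y, ‖G y‖ₑ ^ p with hX
  rcases eq_or_ne X 0 with h0 | h0
  · rw [h0, ENNReal.zero_rpow_of_pos (by positivity)]; exact zero_le
  have e : X = X ^ (1 / p) * X ^ (1 / r) := by
    rw [← ENNReal.rpow_add _ _ h0 hfin, one_div, one_div, hpr.inv_add_inv_eq_one, ENNReal.rpow_one]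
  have h5 : X ^ (1 / r) ≠ 0 := by
    simp [ENNReal.rpow_eq_zero_iff, h0, hfin]
  have h6 : X ^ (1 / r) ≠ ∞ := ENNReal.rpow_ne_top_of_nonneg (by positivity) hfin
  exact (ENNReal.mul_le_mul_iff_left h5 h6).1 (e.symm.le.trans H)

theorem measurable_heat_apply {d : ℕ} {u : E d → ℂ} (hu : Integrable u) (t : ℝ) :
    Measurable fun x => heat d t u x := by
  have hm := (continuous_FT hu).measurable
  have : StronglyMeasurable fun q : E d × E d =>
      Complex.exp (Complex.I * (⟪q.1, q.2⟫ : ℂ)) * (Real.exp (-t * ‖q.2‖ ^ 2) : ℂ) *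
        FT d u q.2 := by
    apply Measurable.stronglyMeasurable
    fun_prop
  exact (this.integral_prod_right'.measurable).const_mul _

theorem norm_heat_le {d : ℕ} {t : ℝ} (ht : 0 ≤ t) {u : E d → ℂ}
    (hFT : Integrable (FT d u)) (x : E d) :
    ‖heat d t u x‖ ≤ ((2 * π) ^ d)⁻¹ * ∫ ξ, ‖FT d u ξ‖ := by
  rw [heat, norm_mul, norm_inv, Complex.norm_real, Real.norm_of_nonneg (by positivity)]
  refine mul_le_mul_of_nonneg_left ?_ (by positivity)
  refine norm_integral_le_of_norm_le hFT.norm (.of_forall fun ξ => ?_)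
  rw [norm_mul, norm_mul, norm_cexp_I_mul_real, one_mul, Complex.norm_real,
    Real.norm_of_nonneg (Real.exp_pos _).le]
  exact mul_le_of_le_one_left (norm_nonneg _) (exp_neg_mul_le_one ht (by positivity))

theorem tendsto_heat {d : ℕ} {u : E d → ℂ} (hu : Integrable u) (hFT : Integrable (FT d u))
    {t : ℕ → ℝ} (ht0 : ∀ n, 0 ≤ t n) (ht : Filter.Tendsto t Filter.atTop (nhds 0)) (x : E d) :
    Filter.Tendsto (fun n => heat d (t n) u x) Filter.atTop (nhds (besselh d 1 0 u x)) := by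
  refine Filter.Tendsto.const_mul _ ?_
  have hc := continuous_FT hu
  refine tendsto_integral_of_dominated_convergence (fun ξ => ‖FT d u ξ‖) (fun n =>
    Continuous.aestronglyMeasurable (by fun_prop)) hFT.norm (fun n => .of_forall fun ξ => ?_)
    (.of_forall fun ξ => ?_)
  · rw [norm_mul, norm_mul, norm_cexp_I_mul_real, one_mul, Complex.norm_real,
      Real.norm_of_nonneg (Real.exp_pos _).le]
    exact mul_le_of_le_one_left (norm_nonneg _) (exp_neg_mul_le_one (ht0 n) (by positivity))
  · have h1 : Filter.Tendsto (fun n => Real.exp (-t n * ‖ξ‖ ^ 2)) Filter.atTop (nhds 1) := by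
      have h2 := (Real.continuous_exp.tendsto _).comp ((ht.neg).mul_const (‖ξ‖ ^ 2))
      simpa [Function.comp_def] using h2
    have h3 := ((Complex.continuous_ofReal.tendsto _).comp h1)
    simp only [zero_div, Real.rpow_zero]
    exact (h3.const_mul _).mul_const _

/-- The case of exponent two, where the potential has order zero. -/
theorem enorm_integral_mul_besselh_zero_le_stft {d : ℕ} (hd : 1 ≤ d) :
    ∃ C : ℝ≥0∞, C ≠ ∞ ∧ ∀ (φ u : E d → ℂ) (M : ℝ), Measurable φ → Integrable φ →
      (∀ y, ‖φ y‖ ≤ M) → Measurable u → Integrable u → Integrable (FT d u) →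
      ‖∫ y, φ y * besselh d 1 0 u y‖ₑ ≤
        C * ((∫⁻ z : P d, ‖stft d u z‖ₑ ^ (2 : ℝ)) ^ (1 / (2 : ℝ)) *
          (∫⁻ y, ‖φ y‖ₑ ^ (2 : ℝ)) ^ (1 / (2 : ℝ))) := by
  obtain ⟨C, hC, H⟩ := lintegral_locFT_mul_stft_mul_besselWeight_le hd Real.HolderConjugate.two_two
    le_rfl (a := 0) (by norm_num)
  refine ⟨C * ENNReal.ofReal ((1 / 2) ^ (-(d / (2 * 2)) : ℝ)), by finiteness,
    fun φ u M hφ hφi hM hum hu hFT => ?_⟩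
  set t : ℕ → ℝ := fun n => 1 / ((n : ℝ) + 1) / 2 with ht
  have ht0 : ∀ n, 0 < t n := fun n => by positivity
  have ht1 : ∀ n, t n ≤ 1 / 2 := fun n => by
    have : 1 / ((n : ℝ) + 1) ≤ 1 := by
      rw [div_le_one (by positivity)]; linarith [n.cast_nonneg (α := ℝ)]
    simp only [ht]; linarith
  have htt : Filter.Tendsto t Filter.atTop (nhds 0) := by
    simpa [ht] using (tendsto_one_div_add_atTop_nhds_zero_nat (𝕜 := ℝ)).div_const 2
  have lim : Filter.Tendsto (fun n => ∫ y, φ y * heat d (t n) u y) Filter.atTop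
      (nhds (∫ y, φ y * besselh d 1 0 u y)) := by
    refine tendsto_integral_of_dominated_convergence
      (fun y => ‖φ y‖ * (((2 * π) ^ d)⁻¹ * ∫ ξ, ‖FT d u ξ‖)) (fun n => ?_)
      (hφi.norm.mul_const _) (fun n => .of_forall fun y => ?_) (.of_forall fun y => ?_)
    · exact (hφ.mul (measurable_heat_apply hu (t n))).aestronglyMeasurable
    · rw [norm_mul]
      exact mul_le_mul_of_nonneg_left (norm_heat_le (ht0 n).le hFT y) (norm_nonneg _)
    · exact (tendsto_heat hu hFT (fun n => (ht0 n).le) htt y).const_mul _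
  refine le_of_tendsto lim.enorm (.of_forall fun n => ?_)
  have h2 : 0 < 1 - t n := by linarith [ht1 n]
  have h0 := ht0 n
  refine (enorm_integral_mul_heat_le hφ hM hum hu (b := 1 / 2) (s := t n / (1 - t n))
    (by norm_num) le_rfl (by positivity) h0
    (by rw [div_le_iff₀ h2]; nlinarith [ht1 n]) (by field_simp; ring)).trans
    (le_trans (lintegral_mono fun z => ?_) (H (1 / 2) φ u M (by norm_num) hφ hM hum))
  refine mul_le_mul' le_rfl ?_
  simp only [besselWeight, neg_zero, Real.rpow_zero]
  refine ENNReal.ofReal_le_ofReal (exp_neg_mul_le_one (by positivity) (by positivity))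

theorem continuous_besselh {d : ℕ} {k : ℝ} (hk : 0 ≤ k) {u : E d → ℂ} (hu : Integrable u)
    (hFT : Integrable (FT d u)) : Continuous (besselh d 1 (-k) u) := by
  refine continuous_const.mul ?_
  have hc := continuous_FT hu
  have hb : ∀ ξ : E d, (1 + 1 * ‖ξ‖ ^ 2) ^ (-k / 2) ≤ (1 : ℝ) := fun ξ =>
    Real.rpow_le_one_of_one_le_of_nonpos (by nlinarith [sq_nonneg ‖ξ‖]) (by linarith)
  refine continuous_of_dominated (bound := fun ξ => ‖FT d u ξ‖) (fun x => ?_)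
    (fun x => .of_forall fun ξ => ?_) hFT.norm (.of_forall fun ξ => by fun_prop)
  · exact Measurable.aestronglyMeasurable (by have := hc.measurable; fun_prop)
  · rw [norm_mul, norm_mul, norm_cexp_I_mul_real, one_mul, Complex.norm_real,
      Real.norm_of_nonneg (by positivity)]
    exact mul_le_of_le_one_left (norm_nonneg _) (hb ξ)

theorem norm_besselh_le {d : ℕ} {k : ℝ} (hk : 0 ≤ k) {u : E d → ℂ}
    (hFT : Integrable (FT d u)) (x : E d) :
    ‖besselh d 1 (-k) u x‖ ≤ ((2 * π) ^ d)⁻¹ * ∫ ξ, ‖FT d u ξ‖ := by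
  rw [besselh, norm_mul, norm_inv, Complex.norm_real, Real.norm_of_nonneg (by positivity)]
  refine mul_le_mul_of_nonneg_left ?_ (by positivity)
  refine norm_integral_le_of_norm_le hFT.norm (.of_forall fun ξ => ?_)
  rw [norm_mul, norm_mul, norm_cexp_I_mul_real, one_mul, Complex.norm_real,
    Real.norm_of_nonneg (by positivity)]
  exact mul_le_of_le_one_left (norm_nonneg _) (Real.rpow_le_one_of_one_le_of_nonpos
    (by nlinarith [sq_nonneg ‖ξ‖]) (by linarith))

theorem lintegral_rpow_besselh_le_stft {d : ℕ} (hd : 1 ≤ d) {p : ℝ} (hp : 2 ≤ p) {k : ℝ}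
    (hk : k = 2 * d * (1 / 2 - 1 / p)) :
    ∃ C : ℝ≥0∞, C ≠ ∞ ∧ ∀ u : E d → ℂ, Measurable u → Integrable u → Integrable (FT d u) →
      (k = 0 → Integrable (besselh d 1 (-k) u)) →
      ∫⁻ x, ‖besselh d 1 (-k) u x‖ₑ ^ p ≠ ∞ →
      (∫⁻ x, ‖besselh d 1 (-k) u x‖ₑ ^ p) ^ (1 / p) ≤
        C * (∫⁻ z : P d, ‖stft d u z‖ₑ ^ p) ^ (1 / p) := by
  have hp0 : 0 < p := by linarith
  have hpr : p.HolderConjugate (Real.conjExponent p) := .conjExponent (by linarith)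
  set r := Real.conjExponent p with hr
  have hinv : 1 / r = 1 - 1 / p := by
    have := hpr.inv_add_inv_eq_one
    rw [one_div, one_div]; linarith
  have hp1 : 1 / p ≤ 1 / 2 := one_div_le_one_div_of_le two_pos hp
  have hk0 : 0 ≤ k := by rw [hk]; have : (0 : ℝ) ≤ d := by positivity
                         nlinarith
  have hkr : k = d * (2 / r - 1) := by
    have : 2 / r = 2 * (1 / r) := by ring
    rw [this, hinv, hk]; ring
  have main : ∃ C : ℝ≥0∞, C ≠ ∞ ∧ ∀ (φ u : E d → ℂ) (M : ℝ), Measurable φ →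
      (p = 2 → Integrable φ) →
      (∀ y, ‖φ y‖ ≤ M) → Measurable u → Integrable u → Integrable (FT d u) →
      ‖∫ y, φ y * besselh d 1 (-k) u y‖ₑ ≤
        C * ((∫⁻ z : P d, ‖stft d u z‖ₑ ^ p) ^ (1 / p) * (∫⁻ y, ‖φ y‖ₑ ^ r) ^ (1 / r)) := by
    rcases hp.eq_or_lt with h2 | h2
    · subst h2
      have hr2 : r = 2 := by rw [hr, Real.conjExponent]; norm_num
      have hkz : k = 0 := by rw [hk]; norm_num
      obtain ⟨C, hC, H⟩ := enorm_integral_mul_besselh_zero_le_stft hd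
      refine ⟨C, hC, fun φ u M hφ hi hM hum hu hFT => ?_⟩
      rw [hr2, hkz, neg_zero]
      exact H φ u M hφ (hi rfl) hM hum hu hFT
    · have hr2 : r < 2 := by
        have h3 : 1 / p < 1 / 2 := one_div_lt_one_div_of_lt two_pos h2
        have h4 : 1 / 2 < 1 / r := by rw [hinv]; linarith
        exact lt_of_one_div_lt_one_div two_pos h4
      obtain ⟨C, hC, H⟩ := enorm_integral_mul_besselh_le_stft hd hpr hr2 hkr
      exact ⟨C, hC, fun φ u M hφ _ hM hum hu hFT => H φ u M hφ hM hum hu hFT⟩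
  obtain ⟨C, hC, H⟩ := main
  refine ⟨C, hC, fun u hum hu hFT hB hfin => ?_⟩
  set G := besselh d 1 (-k) u with hG
  have hGm : Measurable G := (continuous_besselh hk0 hu hFT).measurable
  set B := ((2 * π) ^ d)⁻¹ * ∫ ξ, ‖FT d u ξ‖ with hBdef
  have hGb : ∀ x, ‖G x‖ ≤ B := norm_besselh_le hk0 hFT
  refine lintegral_rpow_le_of_pairing_le hpr hGm hfin ?_
  rw [mul_assoc]
  refine H _ u (B * B ^ (p - 2)) (by fun_prop) (fun h2 => ?_) (fun y => ?_) hum hu hFT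
  · subst h2
    have hkz : k = 0 := by rw [hk]; norm_num
    have : Integrable fun y => (starRingEnd ℂ) (G y) := by
      simpa using! (Complex.conjCLE.toContinuousLinearMap.integrable_comp (hB hkz))
    simpa using this
  · rw [norm_mul, RCLike.norm_conj, Complex.norm_real, Real.norm_of_nonneg (by positivity)]
    exact mul_le_mul (hGb y) (Real.rpow_le_rpow (norm_nonneg _) (hGb y) (by linarith))
      (by positivity) ((norm_nonneg _).trans (hGb y))

theorem integral_comp_smul_of_pos {d : ℕ} {F : Type*} [NormedAddCommGroup F] [NormedSpace ℝ F]
    {R : ℝ} (hR : 0 < R) (f : E d → F) : ∫ x, f (R • x) = (R ^ d)⁻¹ • ∫ x, f x := by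
  rw [Measure.integral_comp_smul, finrank_euclideanSpace_fin, abs_of_pos (by positivity)]

theorem FT_const_mul_comp_smul {d : ℕ} (c : ℂ) {R : ℝ} (hR : 0 < R) (u : E d → ℂ) (ξ : E d) :
    FT d (fun x => c * u (R • x)) ξ = c * (((R ^ d)⁻¹ : ℝ) : ℂ) * FT d u (R⁻¹ • ξ) := by
  have h := integral_comp_smul_of_pos hR
    fun y : E d => Complex.exp (-Complex.I * (⟪y, R⁻¹ • ξ⟫ : ℂ)) * u y
  simp only [real_inner_smul_left, real_inner_smul_right, inv_mul_cancel_left₀ hR.ne'] at h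
  rw [Complex.real_smul] at h
  simp only [FT, real_inner_smul_right]
  rw [mul_assoc, ← h, ← integral_const_mul]
  congr 1 with x
  ring

theorem besselh_const_mul_comp_smul {d : ℕ} (k : ℝ) (c : ℂ) {R : ℝ} (hR : 0 < R)
    (u : E d → ℂ) (x : E d) :
    besselh d 1 k (fun x => c * u (R • x)) x = c * besselh d (R ^ 2) k u (R • x) := by
  have h := integral_comp_smul_of_pos (inv_pos.2 hR) fun η : E d =>
    Complex.exp (Complex.I * (⟪R • x, η⟫ : ℂ)) *
      (((1 + R ^ 2 * ‖η‖ ^ 2) ^ (k / 2) : ℝ) : ℂ) * FT d u η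
  simp only [real_inner_smul_left, real_inner_smul_right, inv_mul_cancel_left₀ hR.ne',
    norm_smul, norm_inv, Real.norm_of_nonneg hR.le, mul_pow, inv_pow,
    mul_inv_cancel_left₀ (pow_pos hR 2).ne', inv_inv, Complex.real_smul] at h
  simp only [besselh, real_inner_smul_left, one_mul]
  simp only [FT_const_mul_comp_smul c hR]
  have e : ∀ ξ : E d, Complex.exp (Complex.I * (⟪x, ξ⟫ : ℂ)) *
      (((1 + ‖ξ‖ ^ 2) ^ (k / 2) : ℝ) : ℂ) *
        (c * (((R ^ d)⁻¹ : ℝ) : ℂ) * FT d u (R⁻¹ • ξ)) =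
      (c * (((R ^ d)⁻¹ : ℝ) : ℂ)) * (Complex.exp (Complex.I * (⟪x, ξ⟫ : ℂ)) *
      (((1 + ‖ξ‖ ^ 2) ^ (k / 2) : ℝ) : ℂ) * FT d u (R⁻¹ • ξ)) := fun ξ => by ring
  simp only [e]
  rw [integral_const_mul, h]
  have hRd : ((R ^ d : ℝ) : ℂ) ≠ 0 := by exact_mod_cast (pow_pos hR d).ne'
  rw [Complex.ofReal_inv]
  field_simp

open FourierTransform in
theorem FT_eq_fourier {d : ℕ} (u : E d → ℂ) (ξ : E d) : FT d u ξ = 𝓕 u ((2 * π)⁻¹ • ξ) := by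
  rw [Real.fourier_eq', FT]
  congr 1 with x
  rw [real_inner_smul_right, smul_eq_mul]
  congr 2
  push_cast
  field_simp

open FourierTransform in
theorem integrable_FT_schwartz {d : ℕ} (f : SchwartzMap (E d) ℂ) : Integrable (FT d f) := by
  have h : FT d f = fun ξ => (𝓕 f : SchwartzMap (E d) ℂ) ((2 * π)⁻¹ • ξ) := by
    ext ξ
    rw [FT_eq_fourier, SchwartzMap.fourier_coe]
  rw [h]
  exact (𝓕 f : SchwartzMap (E d) ℂ).integrable.comp_smul (by positivity)

open FourierTransform in
theorem besselh_zero {d : ℕ} (h : ℝ) (f : SchwartzMap (E d) ℂ) : besselh d h 0 f = f := by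
  ext x
  have hinv : 𝓕⁻ (𝓕 (f : E d → ℂ)) = f :=
    f.continuous.fourierInv_fourier_eq f.integrable (by
      rw [← SchwartzMap.fourier_coe]; exact (𝓕 f : SchwartzMap (E d) ℂ).integrable)
  have hs := integral_comp_smul_of_pos (d := d) (R := (2 * π)⁻¹) (by positivity) fun η : E d =>
    Complex.exp (↑(2 * π * ⟪η, x⟫) * Complex.I) • 𝓕 (f : E d → ℂ) η
  rw [← Real.fourierInv_eq', hinv, Complex.real_smul, inv_pow, inv_inv] at hs
  rw [besselh]
  have e : ∀ ξ : E d, Complex.exp (Complex.I * (⟪x, ξ⟫ : ℂ)) *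
      (((1 + h * ‖ξ‖ ^ 2) ^ ((0 : ℝ) / 2) : ℝ) : ℂ) * FT d f ξ =
      Complex.exp (↑(2 * π * ⟪(2 * π)⁻¹ • ξ, x⟫) * Complex.I) •
        𝓕 (f : E d → ℂ) ((2 * π)⁻¹ • ξ) := fun ξ => by
    rw [FT_eq_fourier, zero_div, Real.rpow_zero, Complex.ofReal_one, mul_one, smul_eq_mul,
      real_inner_smul_left, mul_inv_cancel_left₀ (by positivity), real_inner_comm,
      mul_comm Complex.I]
  simp only [e]
  rw [hs, inv_mul_cancel_left₀]
  exact_mod_cast (by positivity : ((2 * π) ^ d : ℝ) ≠ 0)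

theorem integral_norm_rpow_rpow_eq_toReal {α F : Type*} [MeasurableSpace α] {μ : Measure α}
    [NormedAddCommGroup F] {f : α → F} (hf : AEStronglyMeasurable f μ) {p : ℝ} (hp : 0 < p) :
    (∫ x, ‖f x‖ ^ p ∂μ) ^ (1 / p) = ((∫⁻ x, ‖f x‖ₑ ^ p ∂μ) ^ (1 / p)).toReal := by
  rw [integral_eq_lintegral_of_nonneg_ae (Filter.Eventually.of_forall fun x => by positivity)
    (hf.norm.aemeasurable.pow_const p).aestronglyMeasurable, ENNReal.toReal_rpow]
  congr 3 with x
  rw [← ENNReal.ofReal_rpow_of_nonneg (norm_nonneg _) hp.le, ofReal_norm]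

/-- How the `L^p` norm scales under `u ↦ c • u (R • ·)`. -/
theorem integral_norm_const_mul_comp_smul_rpow {d : ℕ} {p c R : ℝ} (hp : 0 < p) (hc : 0 ≤ c)
    (hR : 0 < R) (u : E d → ℂ) :
    (∫ x, ‖(c : ℂ) * u (R • x)‖ ^ p) ^ (1 / p) =
      c * R ^ (-(d : ℝ) / p) * (∫ x, ‖u x‖ ^ p) ^ (1 / p) := by
  have e : ∀ x : E d, ‖(c : ℂ) * u (R • x)‖ ^ p = c ^ p * ‖u (R • x)‖ ^ p := fun x => by
    rw [norm_mul, Complex.norm_real, Real.norm_of_nonneg hc,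
      Real.mul_rpow hc (norm_nonneg _)]
  have hI : 0 ≤ ∫ x, ‖u x‖ ^ p := integral_nonneg fun x => by positivity
  simp only [e]
  rw [integral_const_mul, integral_comp_smul_of_pos hR fun x => ‖u x‖ ^ p, smul_eq_mul,
    Real.mul_rpow (by positivity) (by positivity), Real.mul_rpow (by positivity) hI,
    ← Real.rpow_mul hc, mul_one_div_cancel hp.ne', Real.rpow_one, ← mul_assoc,
    ← Real.rpow_natCast, ← Real.rpow_neg hR.le, ← Real.rpow_mul hR.le, mul_one_div]

theorem lintegral_rpow_enorm_schwartz_ne_top {d : ℕ} {p c R : ℝ} (hp : 1 ≤ p)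
    (hR : 0 < R) (f : SchwartzMap (E d) ℂ) :
    ∫⁻ x, ‖(c : ℂ) * f (R • x)‖ₑ ^ p ≠ ∞ := by
  have hp0 : 0 < p := by linarith
  have hi := ((f.memLp (ENNReal.ofReal p) volume).integrable_norm_rpow
    (by simpa using hp0) ENNReal.ofReal_ne_top).comp_smul hR.ne'
  rw [ENNReal.toReal_ofReal hp0.le] at hi
  have hl := (hi.const_mul (|c| ^ p)).lintegral_lt_top.ne
  refine ne_of_eq_of_ne (lintegral_congr fun x => ?_) hl
  rw [← ofReal_norm, ENNReal.ofReal_rpow_of_nonneg (norm_nonneg _) hp0.le, norm_mul,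
    Complex.norm_real, Real.norm_eq_abs, Real.mul_rpow (abs_nonneg _) (norm_nonneg _)]

/-- the semiclassical embeddings `L^p ↪ M^p_ℏ ↪ L^p_{-k} (scaled)` for
`2 ≤ p < ∞`, `k = 2d(1/2 - 1/p)`, with constants uniform in `0 < ℏ ≤ 1`:
`‖V_g(D_{ℏ^{-1/2}}f)‖_{L^p(ℝ^{2d})} ≤ C·ℏ^{d(1/2-1/p)/2}·‖f‖_{L^p}` and
`‖(1-ℏΔ)^{-k/2}f‖_{L^p} ≤ C·ℏ^{d(1/p-1/2)/2}·‖V_g(D_{ℏ^{-1/2}}f)‖_{L^p(ℝ^{2d})}`. -/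
theorem stmt10 (d : ℕ) (hd : 1 ≤ d) (p : ℝ) (hp : 2 ≤ p)
    (k : ℝ) (hk : k = 2 * d * (1 / 2 - 1 / p)) :
    ∃ C > (0 : ℝ), ∀ h : ℝ, 0 < h → h ≤ 1 → ∀ f : SchwartzMap (E d) ℂ,
      (∫ z : P d, ‖stft d (dil d h (⇑f)) z‖ ^ p) ^ (1 / p) ≤
          C * h ^ ((d : ℝ) * (1 / 2 - 1 / p) / 2) *
            (∫ x : E d, ‖f x‖ ^ p) ^ (1 / p) ∧
      (∫ x : E d, ‖besselh d h (-k) (⇑f) x‖ ^ p) ^ (1 / p) ≤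
          C * h ^ ((d : ℝ) * (1 / p - 1 / 2) / 2) *
            (∫ z : P d, ‖stft d (dil d h (⇑f)) z‖ ^ p) ^ (1 / p) := by
  have hp0 : 0 < p := by linarith
  have hk0 : 0 ≤ k := by
    rw [hk]
    have : 1 / p ≤ 1 / 2 := one_div_le_one_div_of_le two_pos hp
    exact mul_nonneg (by positivity) (by linarith)
  obtain ⟨C₁, hC₁, H₁⟩ := lintegral_rpow_stft_le d hp
  obtain ⟨C₂, hC₂, H₂⟩ := lintegral_rpow_besselh_le_stft hd hp hk
  refine ⟨(C₁ ^ (1 / p)).toReal + C₂.toReal + 1, by positivity, fun h hh _ f => ?_⟩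
  set c : ℝ := h ^ ((d : ℝ) / 4) with hc
  set R : ℝ := h ^ ((1 : ℝ) / 2) with hRdef
  have hc0 : 0 < c := Real.rpow_pos_of_pos hh _
  have hR : 0 < R := Real.rpow_pos_of_pos hh _
  have hR2 : R ^ 2 = h := by
    rw [hRdef, ← Real.rpow_natCast, ← Real.rpow_mul hh.le]; norm_num
  set u : E d → ℂ := dil d h f with hu
  have hu' : u = fun x => (c : ℂ) * f (R • x) := rfl
  have hum : Measurable u := by
    rw [hu']
    exact (f.continuous.measurable.comp (measurable_const_smul R)).const_mul _
  have hui : Integrable u := (f.integrable.comp_smul hR.ne').const_mul _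
  have huFT : Integrable (FT d u) := by
    have e : FT d u = fun ξ => (c : ℂ) * (((R ^ d)⁻¹ : ℝ) : ℂ) * FT d f (R⁻¹ • ξ) := by
      ext ξ; exact FT_const_mul_comp_smul _ hR f ξ
    rw [e]
    exact ((integrable_FT_schwartz f).comp_smul (inv_ne_zero hR.ne')).const_mul _
  have hB : besselh d 1 (-k) u = fun x => (c : ℂ) * besselh d h (-k) f (R • x) := by
    ext x
    rw [hu', besselh_const_mul_comp_smul _ _ hR, hR2]
  have hBi : k = 0 → Integrable (besselh d 1 (-k) u) := fun h0 => by
    rw [hB, h0, neg_zero, besselh_zero]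
    exact hui
  have hul : ∫⁻ x, ‖u x‖ₑ ^ p ≠ ∞ :=
    lintegral_rpow_enorm_schwartz_ne_top (by linarith) hR f
  have hsl : ∫⁻ z, ‖stft d u z‖ₑ ^ p ≠ ∞ :=
    ((H₁ u hum hui).trans_lt (ENNReal.mul_lt_top hC₁.lt_top hul.lt_top)).ne
  have hscale : c * R ^ (-(d : ℝ) / p) = h ^ ((d : ℝ) * (1 / 2 - 1 / p) / 2) := by
    rw [hc, hRdef, ← Real.rpow_mul hh.le, ← Real.rpow_add hh]
    congr 1
    field_simp
    ring
  have hscale' : h ^ ((d : ℝ) * (1 / p - 1 / 2) / 2) * (c * R ^ (-(d : ℝ) / p)) = 1 := by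
    rw [hscale, ← Real.rpow_add hh, ← Real.rpow_zero h]
    congr 1
    ring
  have hnu : (∫ x, ‖u x‖ ^ p) ^ (1 / p) = _ :=
    integral_norm_const_mul_comp_smul_rpow hp0 hc0.le hR f
  have hnB := integral_norm_const_mul_comp_smul_rpow hp0 hc0.le hR (besselh d h (-k) f)
  have hS := integral_norm_rpow_rpow_eq_toReal (μ := (volume : Measure (P d)))
    (measurable_stft hum).aestronglyMeasurable hp0
  constructor
  · rw [mul_assoc, ← hscale, ← hnu, hS]
    refine le_trans ?_ (mul_le_mul_of_nonneg_right
      (by linarith [ENNReal.toReal_nonneg (a := C₂)] : (C₁ ^ (1 / p)).toReal ≤ _)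
      (by positivity))
    rw [integral_norm_rpow_rpow_eq_toReal hum.aestronglyMeasurable hp0,
      ← ENNReal.toReal_mul, ← ENNReal.mul_rpow_of_nonneg _ _ (by positivity)]
    exact ENNReal.toReal_mono
      (ENNReal.rpow_ne_top_of_nonneg (by positivity) (ENNReal.mul_ne_top hC₁ hul))
      (ENNReal.rpow_le_rpow (H₁ u hum hui) (by positivity))
  · have key : (∫ x, ‖besselh d 1 (-k) u x‖ ^ p) ^ (1 / p) ≤
        C₂.toReal * (∫ z, ‖stft d u z‖ ^ p) ^ (1 / p) := by
      rw [hS, integral_norm_rpow_rpow_eq_toReal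
        (continuous_besselh hk0 hui huFT).aestronglyMeasurable hp0, ← ENNReal.toReal_mul]
      by_cases hfin : ∫⁻ x, ‖besselh d 1 (-k) u x‖ₑ ^ p = ∞
      · rw [hfin, ENNReal.top_rpow_of_pos (by positivity), ENNReal.toReal_top]
        exact ENNReal.toReal_nonneg
      · exact ENNReal.toReal_mono
          (ENNReal.mul_ne_top hC₂ (ENNReal.rpow_ne_top_of_nonneg (by positivity) hsl))
          (H₂ u hum hui huFT hBi hfin)
    rw [hB, hnB] at key
    have hI : 0 ≤ (∫ z, ‖stft d u z‖ ^ p) ^ (1 / p) := by positivity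
    have hpos : 0 ≤ h ^ ((d : ℝ) * (1 / p - 1 / 2) / 2) := by positivity
    calc (∫ x, ‖besselh d h (-k) f x‖ ^ p) ^ (1 / p)
        = h ^ ((d : ℝ) * (1 / p - 1 / 2) / 2) * (c * R ^ (-(d : ℝ) / p) *
            (∫ x, ‖besselh d h (-k) f x‖ ^ p) ^ (1 / p)) := by
          rw [← mul_assoc, hscale', one_mul]
      _ ≤ h ^ ((d : ℝ) * (1 / p - 1 / 2) / 2) *
            (C₂.toReal * (∫ z, ‖stft d u z‖ ^ p) ^ (1 / p)) :=
          mul_le_mul_of_nonneg_left key hpos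
      _ = C₂.toReal * (h ^ ((d : ℝ) * (1 / p - 1 / 2) / 2) *
            (∫ z, ‖stft d u z‖ ^ p) ^ (1 / p)) := by ring
      _ ≤ _ := by
          rw [mul_assoc]
          exact mul_le_mul_of_nonneg_right
            (by linarith [ENNReal.toReal_nonneg (a := C₁ ^ (1 / p))]) (mul_nonneg hpos hI)
end
end

section
/- Let d ≥ 1 and m > 2d a real number. Let T₁ : 𝒮(ℝ^d) → 𝒮′(ℝ^d) and T₂ : 𝒮(ℝ^d) → 𝒮(ℝ^d) be continuous linear operators and 0 < ℏ ≤ 1. Let χ₁ : ℝ^{2d} → ℝ^{2d} be a Lipschitz bijection with Lipschitz constant L > 0 which preserves Lebesgue measure, and χ₂ : ℝ^{2d} → ℝ^{2d} any map. Suppose that the rescaled operators T_{i,ℏ} = D_{ℏ^{−1/2}} ∘ T_i ∘ D_{ℏ^{1/2}} satisfy |⟨T_{1,ℏ}(π(z)g), π(w)g⟩| ≤ A₁·(1+|w−χ₁(z)|²)^{−m/2} and |⟨T_{2,ℏ}(π(z)g), π(w)g⟩| ≤ A₂·(1+|w−χ₂(z)|²)^{−m/2} for all z, w ∈ ℝ^{2d},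 with A₁, A₂ ≥ 0. Then there exists a constant C > 0, depending only on m, d and L (not on ℏ), such that the rescaling of the composition satisfies |⟨D_{ℏ^{−1/2}}(T₁(T₂(D_{ℏ^{1/2}}(π(z)g)))), π(w)g⟩| ≤ C·A₁·A₂·(1+|w−χ₁(χ₂(z))|²)^{−m/2} for all z, w ∈ ℝ^{2d}. -/
open MeasureTheory Complex Real
open scoped ENNReal RealInnerProductSpace

noncomputable section

/-- The Schwartz space `𝒮(ℝ^d)` of complex valued functions. -/
abbrev SCH (d : ℕ) : Type := SchwartzMap (E d) ℂ

/-- Square of the Euclidean norm on the phase space `ℝ^{2d}`. -/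
def ensq {d : ℕ} (z : P d) : ℝ := ‖z.1‖ ^ 2 + ‖z.2‖ ^ 2

open scoped SchwartzMap BoundedContinuousFunction

/-- A linear functional dominated by finitely many linear maps into Banach spaces commutes with
every integral that those maps commute with. -/
lemma LinearMap.apply_eq_integral_of_forall_le {S ι X : Type*} [AddCommGroup S] [Module ℂ S]
    [Fintype ι] {B : ι → Type*} [∀ i, NormedAddCommGroup (B i)] [∀ i, NormedSpace ℂ (B i)]
    [∀ i, CompleteSpace (B i)] [MeasurableSpace X] {μ : Measure X} (J : ∀ i, S →ₗ[ℂ] B i)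
    (ℓ : S →ₗ[ℂ] ℂ) (C : ℝ) (hℓ : ∀ f, ‖ℓ f‖ ≤ C * ‖fun i => J i f‖) {F : X → S} {u : S}
    (hint : ∀ i, Integrable (fun x => J i (F x)) μ) (hu : ∀ i, J i u = ∫ x, J i (F x) ∂μ) :
    Integrable (fun x => ℓ (F x)) μ ∧ ℓ u = ∫ x, ℓ (F x) ∂μ := by
  let K : S →ₗ[ℂ] ((i : ι) → B i) := LinearMap.pi J
  have hK : ∀ f, ‖ℓ f‖ ≤ C * ‖K f‖ := hℓ
  have hker : LinearMap.ker K ≤ LinearMap.ker ℓ := fun f hf => by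
    have := hK f
    rw [LinearMap.mem_ker.1 hf, norm_zero, mul_zero] at this
    exact LinearMap.mem_ker.2 (norm_le_zero_iff.1 this)
  let Λ₀ : LinearMap.range K →ₗ[ℂ] ℂ :=
    ((LinearMap.ker K).liftQ ℓ hker) ∘ₗ K.quotKerEquivRange.symm.toLinearMap
  have hΛ₀ : ∀ f, Λ₀ ⟨K f, LinearMap.mem_range_self K f⟩ = ℓ f := fun f => by
    have h : K.quotKerEquivRange.symm ⟨K f, LinearMap.mem_range_self K f⟩
        = (LinearMap.ker K).mkQ f := by
      rw [LinearEquiv.symm_apply_eq]; rfl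
    simp [Λ₀, h]
  obtain ⟨Λ, hΛ, -⟩ := exists_extension_norm_eq (𝕜 := ℂ) (LinearMap.range K)
    (Λ₀.mkContinuous C (by rintro ⟨_, f, rfl⟩; rw [hΛ₀]; exact hK f))
  have hΛK : ∀ f, ℓ f = Λ (K f) := fun f => by
    rw [← hΛ₀ f]; exact (hΛ ⟨K f, LinearMap.mem_range_self K f⟩).symm
  have hI : Integrable (fun x => K (F x)) μ := Integrable.of_eval hint
  simp only [hΛK]
  refine ⟨Λ.integrable_comp hI, ?_⟩
  rw [Λ.integral_comp_comm hI]
  congr 1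
  ext1 i
  exact (hu i).trans (eval_integral hint i).symm

lemma BoundedContinuousFunction.integral_apply {V X M : Type*} [TopologicalSpace V]
    [NormedAddCommGroup M] [NormedSpace ℝ M] [CompleteSpace M] [MeasurableSpace X] {μ : Measure X}
    {φ : X → V →ᵇ M} (hφ : Integrable φ μ) (y : V) :
    Integrable (fun x => φ x y) μ ∧ (∫ x, φ x ∂μ) y = ∫ x, φ x y ∂μ :=
  ⟨(BoundedContinuousFunction.evalCLM ℝ y).integrable_comp hφ,
    ((BoundedContinuousFunction.evalCLM ℝ y).integral_comp_comm hφ).symm⟩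

lemma LinearIsometryEquiv.fderiv_integral {V X M N : Type*} [NormedAddCommGroup V]
    [NormedSpace ℝ V] [NormedAddCommGroup M] [NormedSpace ℝ M] [NormedAddCommGroup N]
    [NormedSpace ℝ N] [MeasurableSpace X] {μ : Measure X} (e : (V →L[ℝ] M) ≃ₗᵢ[ℝ] N)
    {Φ : X → V → M} {b : X → ℝ} (hb : Integrable b μ) (hdiff : ∀ x, Differentiable ℝ (Φ x))
    (hΦ : ∀ y, Integrable (fun x => Φ x y) μ)
    (hΦ' : ∀ y, Integrable (fun x => e (fderiv ℝ (Φ x) y)) μ)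
    (hle : ∀ x y, ‖fderiv ℝ (Φ x) y‖ ≤ b x) (y : V) :
    e (fderiv ℝ (fun y => ∫ x, Φ x y ∂μ) y) = ∫ x, e (fderiv ℝ (Φ x) y) ∂μ := by
  have hmeas : Integrable (fun x => fderiv ℝ (Φ x) y) μ := by
    simpa using e.symm.toContinuousLinearEquiv.toContinuousLinearMap.integrable_comp (hΦ' y)
  have key := hasFDerivAt_integral_of_dominated_of_fderiv_le (𝕜 := ℝ) (μ := μ) (x₀ := y)
    (F := fun y x => Φ x y) (F' := fun y x => fderiv ℝ (Φ x) y) Filter.univ_mem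
    (.of_forall fun y => (hΦ y).aestronglyMeasurable) (hΦ y) hmeas.aestronglyMeasurable
    (.of_forall fun x y _ => hle x y) hb (.of_forall fun x y _ => (hdiff x y).hasFDerivAt)
  rw [key.fderiv]
  exact (e.toContinuousLinearEquiv.integral_comp_comm _).symm

namespace SchwartzMap

section WeakIntegral

variable {V : Type*} [NormedAddCommGroup V] [NormedSpace ℝ V]

local instance (n : ℕ) : NormedAddCommGroup (V →ᵇ (V [×n]→L[ℝ] ℂ)) :=
  BoundedContinuousFunction.instNormedAddCommGroup

/-- The bounded continuous function `x ↦ ‖x‖ ^ k • D^n f x` attached to a Schwartz function. -/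
def weightedDeriv (k n : ℕ) : 𝓢(V, ℂ) →ₗ[ℂ] V →ᵇ (V [×n]→L[ℝ] ℂ) where
  toFun f := BoundedContinuousFunction.ofNormedAddCommGroup
    (fun x => ‖x‖ ^ k • iteratedFDeriv ℝ n f x)
    ((continuous_norm.pow k).smul
      ((f.smooth ⊤).continuous_iteratedFDeriv (by exact_mod_cast le_top)))
    (SchwartzMap.seminorm ℂ k n f) fun x => by
      simpa [norm_smul] using f.le_seminorm ℂ k n x
  map_add' f g := by
    apply BoundedContinuousFunction.ext
    intro x
    have h : iteratedFDeriv ℝ n (⇑f + ⇑g) x = _ :=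
      iteratedFDeriv_add_apply (f.contDiffAt n) (g.contDiffAt n)
    simp [h, smul_add]
  map_smul' a f := by
    apply BoundedContinuousFunction.ext
    intro x
    have h : iteratedFDeriv ℝ n (a • ⇑f) x = _ :=
      iteratedFDeriv_const_smul_apply (f.contDiffAt n)
    simp [h, smul_comm a]

lemma weightedDeriv_apply (k n : ℕ) (f : 𝓢(V, ℂ)) (x : V) :
    weightedDeriv k n f x = ‖x‖ ^ k • iteratedFDeriv ℝ n f x := rfl

lemma norm_weightedDeriv (k n : ℕ) (f : 𝓢(V, ℂ)) :
    ‖weightedDeriv k n f‖ = SchwartzMap.seminorm ℂ k n f := by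
  apply le_antisymm
  · exact BoundedContinuousFunction.norm_ofNormedAddCommGroup_le _ (apply_nonneg _ _) fun x => by
      simpa [norm_smul] using f.le_seminorm ℂ k n x
  · refine seminorm_le_bound ℂ k n f (norm_nonneg (weightedDeriv k n f)) fun x => ?_
    simpa [weightedDeriv_apply, norm_smul] using (weightedDeriv k n f).norm_coe_le_norm x

lemma continuous_seminorm (k n : ℕ) :
    Continuous fun f : 𝓢(V, ℂ) => SchwartzMap.seminorm ℂ k n f :=
  (schwartz_withSeminorms ℂ V ℂ).continuous_seminorm (k, n)

lemma continuous_weightedDeriv (k n : ℕ) :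
    Continuous (weightedDeriv k n : 𝓢(V, ℂ) → V →ᵇ (V [×n]→L[ℝ] ℂ)) := by
  rw [continuous_iff_continuousAt]
  intro f
  rw [ContinuousAt, tendsto_iff_norm_sub_tendsto_zero]
  simp only [← map_sub, norm_weightedDeriv]
  have h := ((continuous_seminorm (V := V) k n).comp (continuous_id.sub continuous_const)).tendsto
    (x := f) (f := fun g => SchwartzMap.seminorm ℂ k n (g - f))
  simpa using h

variable {X : Type*} [TopologicalSpace X] [MeasurableSpace X] [OpensMeasurableSpace X]
  [SecondCountableTopology X] {μ : Measure X} {F : X → 𝓢(V, ℂ)}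

lemma integrable_weightedDeriv (hF : Continuous F)
    (hint : ∀ k n, Integrable (fun x => SchwartzMap.seminorm ℂ k n (F x)) μ) (k n : ℕ) :
    Integrable (fun x => weightedDeriv k n (F x)) μ :=
  (hint k n).mono' ((continuous_weightedDeriv k n).comp hF).aestronglyMeasurable
    (.of_forall fun x => (norm_weightedDeriv k n (F x)).le)

lemma integrable_iteratedFDeriv (hF : Continuous F)
    (hint : ∀ k n, Integrable (fun x => SchwartzMap.seminorm ℂ k n (F x)) μ) (n : ℕ) (y : V) :
    Integrable (fun x => iteratedFDeriv ℝ n (F x) y) μ := by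
  simpa [weightedDeriv_apply] using (BoundedContinuousFunction.integral_apply
    (integrable_weightedDeriv hF hint 0 n) y).1

lemma iteratedFDeriv_eq_integral (hF : Continuous F)
    (hint : ∀ k n, Integrable (fun x => SchwartzMap.seminorm ℂ k n (F x)) μ)
    {u : V → ℂ} (hu : ∀ y, u y = ∫ x, F x y ∂μ) (n : ℕ) (y : V) :
    iteratedFDeriv ℝ n u y = ∫ x, iteratedFDeriv ℝ n (F x) y ∂μ := by
  induction n generalizing y with
  | zero =>
    simp only [iteratedFDeriv_zero_eq_comp, Function.comp_apply, hu]
    exact ((continuousMultilinearCurryFin0 ℝ V ℂ).symm.toContinuousLinearEquiv.integral_comp_comm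
      _).symm
  | succ n ih =>
    have hn : iteratedFDeriv ℝ n u = fun y => ∫ x, iteratedFDeriv ℝ n (F x) y ∂μ := funext ih
    rw [iteratedFDeriv_succ_eq_comp_left, Function.comp_apply, hn]
    exact LinearIsometryEquiv.fderiv_integral
      (continuousMultilinearCurryLeftEquiv ℝ (fun _ : Fin (n + 1) => V) ℂ).symm
      (Φ := fun x => iteratedFDeriv ℝ n (F x)) (hint 0 (n + 1))
      (fun x => ((F x).smooth ⊤).differentiable_iteratedFDeriv
        (by exact_mod_cast ENat.natCast_lt_top n))
      (integrable_iteratedFDeriv hF hint n) (integrable_iteratedFDeriv hF hint (n + 1))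
      (fun x y => norm_fderiv_iteratedFDeriv.trans_le
        ((F x).norm_iteratedFDeriv_le_seminorm ℂ (n + 1) y)) y

/-- A continuous functional on the Schwartz space commutes with pointwise integrals of continuous
families whose Schwartz seminorms are all integrable. -/
theorem clm_apply_eq_integral (hF : Continuous F)
    (hint : ∀ k n, Integrable (fun x => SchwartzMap.seminorm ℂ k n (F x)) μ)
    {u : 𝓢(V, ℂ)} (hu : ∀ y, u y = ∫ x, F x y ∂μ) (ℓ : 𝓢(V, ℂ) →L[ℂ] ℂ) :
    Integrable (fun x => ℓ (F x)) μ ∧ ℓ u = ∫ x, ℓ (F x) ∂μ := by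
  obtain ⟨s, C, -, hC⟩ := Seminorm.bound_of_continuous (schwartz_withSeminorms ℂ V ℂ)
    ((normSeminorm ℂ ℂ).comp ℓ.toLinearMap) (by exact ℓ.continuous.norm)
  refine LinearMap.apply_eq_integral_of_forall_le (ι := s)
    (B := fun i => V →ᵇ (V [×i.1.2]→L[ℝ] ℂ)) (fun i => weightedDeriv i.1.1 i.1.2)
    ℓ.toLinearMap C (fun f => ?_) (fun i => integrable_weightedDeriv hF hint i.1.1 i.1.2)
    fun i => ?_
  · refine (hC f).trans ?_
    change (C : ℝ) * _ ≤ _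
    refine mul_le_mul_of_nonneg_left ?_ C.2
    refine Seminorm.finset_sup_apply_le (norm_nonneg _) fun i hi => ?_
    refine (norm_weightedDeriv i.1 i.2 f).symm.trans_le ?_
    exact norm_le_pi_norm (fun i : s => weightedDeriv i.1.1 i.1.2 f) ⟨i, hi⟩
  · apply BoundedContinuousFunction.ext
    intro y
    rw [(BoundedContinuousFunction.integral_apply
      (integrable_weightedDeriv hF hint i.1.1 i.1.2) y).2]
    simp only [weightedDeriv_apply]
    rw [integral_smul, iteratedFDeriv_eq_integral hF hint hu]

end WeakIntegral

section WavePacket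

open Filter Topology

lemma continuous_of_eventually_seminorm_le {V W : Type*} [NormedAddCommGroup V] [NormedSpace ℝ V]
    [ProperSpace V] [TopologicalSpace W] {H : W → 𝓢(V, ℂ)}
    (hbdd : ∀ k n w₀, ∃ C, ∀ᶠ w in 𝓝 w₀, SchwartzMap.seminorm ℂ k n (H w) ≤ C)
    (hcont : ∀ n : ℕ, Continuous fun p : W × V => iteratedFDeriv ℝ n (H p.1) p.2) :
    Continuous H := by
  rw [continuous_iff_continuousAt]
  intro w₀
  rw [ContinuousAt, (schwartz_withSeminorms ℂ V ℂ).tendsto_nhds]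
  rintro ⟨k, n⟩ ε hε
  obtain ⟨C, hC⟩ := hbdd (k + 1) n w₀
  have hC₀ : 0 ≤ C := (apply_nonneg _ _).trans hC.self_of_nhds
  set R : ℝ := 4 * C / ε + 1 with hR
  have hRpos : 0 < R := by positivity
  have hRC : 2 * C ≤ ε / 2 * R := by
    rw [hR]; field_simp; nlinarith
  set δ : ℝ := ε / (2 * R ^ k) with hδ
  have hδpos : 0 < δ := by positivity
  have hK : ∀ᶠ w in 𝓝 w₀, ∀ y ∈ Metric.closedBall (0 : V) R,
      ‖iteratedFDeriv ℝ n (H w) y - iteratedFDeriv ℝ n (H w₀) y‖ < δ := by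
    refine (isCompact_closedBall (0 : V) R).eventually_forall_of_forall_eventually fun y _ => ?_
    have hc : Continuous fun p : W × V =>
        ‖iteratedFDeriv ℝ n (H p.1) p.2 - iteratedFDeriv ℝ n (H w₀) p.2‖ :=
      ((hcont n).sub ((hcont n).comp (continuous_const.prodMk continuous_snd))).norm
    exact hc.continuousAt.eventually_lt continuousAt_const (by simpa using hδpos)
  filter_upwards [hC, hK] with w hw hwK
  refine lt_of_le_of_lt ?_ (half_lt_self hε)
  refine seminorm_le_bound ℂ k n _ (by positivity) fun y => ?_
  have hsub : iteratedFDeriv ℝ n (⇑(H w - H w₀)) y =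
      iteratedFDeriv ℝ n (H w) y - iteratedFDeriv ℝ n (H w₀) y := by
    have h : iteratedFDeriv ℝ n (⇑(H w) - ⇑(H w₀)) y = _ :=
      iteratedFDeriv_sub_apply ((H w).contDiffAt n) ((H w₀).contDiffAt n)
    exact h
  by_cases hy : ‖y‖ ≤ R
  · rw [hsub]
    have h1 := (hwK y (by simpa using hy)).le
    calc ‖y‖ ^ k * _ ≤ R ^ k * δ := by gcongr
      _ = ε / 2 := by rw [hδ]; field_simp
  · push Not at hy
    have h2 := (H w - H w₀).le_seminorm ℂ (k + 1) n y
    have h3 : SchwartzMap.seminorm ℂ (k + 1) n (H w - H w₀) ≤ 2 * C := by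
      refine (map_sub_le_add _ _ _).trans ?_
      have := hC.self_of_nhds
      linarith
    have h4 : R * (‖y‖ ^ k * ‖iteratedFDeriv ℝ n (⇑(H w - H w₀)) y‖) ≤ ε / 2 * R := by
      refine le_trans ?_ ((h2.trans h3).trans hRC)
      rw [pow_succ', mul_assoc]
      gcongr
    exact le_of_mul_le_mul_left (by linarith) hRpos

lemma contDiff_apply_fderiv_param {V W M N : Type*} [NormedAddCommGroup V] [NormedSpace ℝ V]
    [NormedAddCommGroup W] [NormedSpace ℝ W] [NormedAddCommGroup M] [NormedSpace ℝ M]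
    [NormedAddCommGroup N] [NormedSpace ℝ N] (e : (V →L[ℝ] M) ≃ₗᵢ[ℝ] N) {Φ : W → V → M}
    (hΦ : ContDiff ℝ (⊤ : ℕ∞) (Function.uncurry Φ)) :
    ContDiff ℝ (⊤ : ℕ∞) fun p : W × V => e (fderiv ℝ (Φ p.1) p.2) := by
  refine e.contDiff.comp (ContDiff.fderiv (m := (⊤ : ℕ∞)) (f := fun p : W × V => Φ p.1) ?_
    contDiff_snd (by simp))
  exact hΦ.comp ((contDiff_fst.comp contDiff_fst).prodMk contDiff_snd)

lemma contDiff_iteratedFDeriv_param {V W M : Type*} [NormedAddCommGroup V] [NormedSpace ℝ V]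
    [NormedAddCommGroup W] [NormedSpace ℝ W] [NormedAddCommGroup M] [NormedSpace ℝ M]
    {Φ : W → V → M} (hΦ : ContDiff ℝ (⊤ : ℕ∞) (Function.uncurry Φ)) (n : ℕ) :
    ContDiff ℝ (⊤ : ℕ∞) fun p : W × V => iteratedFDeriv ℝ n (Φ p.1) p.2 := by
  induction n with
  | zero =>
    simp only [iteratedFDeriv_zero_eq_comp, Function.comp_apply]
    exact (continuousMultilinearCurryFin0 ℝ V M).symm.contDiff.comp hΦ
  | succ n ih =>
    simp only [iteratedFDeriv_succ_eq_comp_left, Function.comp_apply]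
    exact contDiff_apply_fderiv_param
      (continuousMultilinearCurryLeftEquiv ℝ (fun _ : Fin (n + 1) => V) M).symm
      (Φ := fun w => iteratedFDeriv ℝ n (Φ w)) ih

variable {V : Type*} [NormedAddCommGroup V] [InnerProductSpace ℝ V]

lemma contDiff_cexp_inner (ξ : V) {n : WithTop ℕ∞} :
    ContDiff ℝ n fun y : V => cexp (I * (⟪y, ξ⟫ : ℂ)) :=
  (contDiff_const.mul (ofRealCLM.contDiff.comp (contDiff_id.inner ℝ contDiff_const))).cexp

lemma norm_iteratedFDeriv_cexp_inner_le (ξ y : V) (j : ℕ) :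
    ‖iteratedFDeriv ℝ j (fun y : V => cexp (I * (⟪y, ξ⟫ : ℂ))) y‖ ≤ ‖ξ‖ ^ j := by
  have hE : ContDiff ℝ j fun t : ℝ => cexp (I * t) :=
    (contDiff_const.mul ofRealCLM.contDiff).cexp
  have hcomp : (fun y : V => cexp (I * (⟪y, ξ⟫ : ℂ))) =
      (fun t : ℝ => cexp (I * t)) ∘ (innerSL ℝ ξ) := by
    ext y; simp [real_inner_comm]
  have hder : ∀ i : ℕ, iteratedDeriv i (fun t : ℝ => cexp (I * t)) =
      fun t : ℝ => I ^ i * cexp (I * t) := by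
    intro i
    induction i with
    | zero => simp
    | succ i ih =>
      rw [iteratedDeriv_succ, ih]
      ext t
      have h : HasDerivAt (fun t : ℝ => I ^ i * cexp (I * t))
          (I ^ i * (cexp (I * t) * (I * 1))) t :=
        (((ofRealCLM.hasDerivAt (x := t)).const_mul I).cexp).const_mul _
      rw [h.deriv]; ring
  rw [hcomp, ContinuousLinearMap.iteratedFDeriv_comp_right _ hE _ le_rfl]
  refine (ContinuousMultilinearMap.norm_compContinuousLinearMap_le _ _).trans ?_
  rw [norm_iteratedFDeriv_eq_norm_iteratedDeriv, hder]
  simp [mul_comm I, Complex.norm_exp_ofReal_mul_I]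

lemma one_add_norm_le_mul {V : Type*} [NormedAddCommGroup V] (x y : V) :
    1 + ‖x‖ ≤ (1 + ‖y‖) * (1 + ‖y - x‖) := by
  have h : ‖x‖ ≤ ‖y‖ + ‖y - x‖ := by
    simpa [norm_sub_rev] using norm_add_le y (x - y)
  nlinarith [mul_nonneg (norm_nonneg y) (norm_nonneg (y - x))]

lemma exists_forall_one_add_norm_pow_mul_le (g : 𝓢(V, ℂ)) (k n : ℕ) :
    ∃ C, 0 ≤ C ∧ ∀ i ≤ n, ∀ y, (1 + ‖y‖) ^ k * ‖iteratedFDeriv ℝ i g y‖ ≤ C :=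
  ⟨_, by positivity, fun i hi y =>
    one_add_le_sup_seminorm_apply (𝕜 := ℂ) (m := (k, n)) le_rfl hi g y⟩

/-- The wave packets `y ↦ e^{i y·ξ} g(y - x)`, as a family of Schwartz functions. -/
def IsWavePacket (g : 𝓢(V, ℂ)) (G : V × V → 𝓢(V, ℂ)) : Prop :=
  ∀ z y, G z y = cexp (I * (⟪y, z.2⟫ : ℂ)) * g (y - z.1)

variable {g : 𝓢(V, ℂ)} {G : V × V → 𝓢(V, ℂ)}

lemma sum_choose_mul_le {n : ℕ} {a : ℕ → ℝ} {S : ℝ} (h : ∀ i ≤ n, a i ≤ S) :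
    ∑ i ∈ Finset.range (n + 1), (n.choose i : ℝ) * a i ≤ 2 ^ n * S := by
  have hsum : ∑ i ∈ Finset.range (n + 1), (n.choose i : ℝ) = 2 ^ n := by
    exact_mod_cast Nat.sum_range_choose n
  rw [← hsum, Finset.sum_mul]
  refine Finset.sum_le_sum fun i hi => ?_
  exact mul_le_mul_of_nonneg_left (h i (by grind)) (by positivity)

lemma IsWavePacket.exists_seminorm_le (hG : IsWavePacket g G) (k n : ℕ) :
    ∃ C, 0 ≤ C ∧ ∀ z : V × V, SchwartzMap.seminorm ℂ k n (G z) ≤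
      C * ((1 + ‖z.1‖) ^ k * (1 + ‖z.2‖) ^ n) := by
  obtain ⟨S, hS₀, hS⟩ := exists_forall_one_add_norm_pow_mul_le g k n
  refine ⟨2 ^ n * S, by positivity, fun ⟨x, ξ⟩ => ?_⟩
  refine seminorm_le_bound ℂ k n _ (by positivity) fun y => ?_
  have hfun : ⇑(G (x, ξ)) = fun y => cexp (I * (⟪y, ξ⟫ : ℂ)) * g (y - x) := funext (hG (x, ξ))
  have hg : ContDiff ℝ n fun y => g (y - x) := (g.smooth n).comp (contDiff_id.sub contDiff_const)
  have hyx : ‖y‖ ≤ (1 + ‖x‖) * (1 + ‖y - x‖) := by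
    have := one_add_norm_le_mul y x
    rw [norm_sub_rev] at this
    linarith
  rw [hfun]
  have key := norm_iteratedFDeriv_mul_le (contDiff_cexp_inner ξ) hg y (n := n) le_rfl
  calc ‖y‖ ^ k * _ ≤ ((1 + ‖x‖) * (1 + ‖y - x‖)) ^ k *
        ∑ i ∈ Finset.range (n + 1), (n.choose i : ℝ) *
          ‖iteratedFDeriv ℝ i (fun y : V => cexp (I * (⟪y, ξ⟫ : ℂ))) y‖ *
            ‖iteratedFDeriv ℝ (n - i) (fun y => g (y - x)) y‖ := by gcongr
    _ = (1 + ‖x‖) ^ k * ∑ i ∈ Finset.range (n + 1), (n.choose i : ℝ) *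
          (‖iteratedFDeriv ℝ i (fun y : V => cexp (I * (⟪y, ξ⟫ : ℂ))) y‖ *
            ((1 + ‖y - x‖) ^ k * ‖iteratedFDeriv ℝ (n - i) (fun y => g (y - x)) y‖)) := by
        rw [mul_pow, mul_assoc, Finset.mul_sum]
        congr 1
        exact Finset.sum_congr rfl fun i _ => by ring
    _ ≤ (1 + ‖x‖) ^ k * (2 ^ n * ((1 + ‖ξ‖) ^ n * S)) := by
        gcongr
        refine sum_choose_mul_le fun i hi => ?_
        rw [iteratedFDeriv_comp_sub]
        refine mul_le_mul ?_ (hS _ (Nat.sub_le _ _) _) (by positivity) (by positivity)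
        refine (norm_iteratedFDeriv_cexp_inner_le ξ y i).trans ?_
        calc ‖ξ‖ ^ i ≤ (1 + ‖ξ‖) ^ i := by gcongr; linarith
          _ ≤ (1 + ‖ξ‖) ^ n := by gcongr; linarith [norm_nonneg ξ]
    _ = _ := by ring

lemma IsWavePacket.continuous [ProperSpace V] (hG : IsWavePacket g G) : Continuous G := by
  refine continuous_of_eventually_seminorm_le (fun k n w₀ => ?_) fun n => ?_
  · obtain ⟨C, hC₀, hC⟩ := hG.exists_seminorm_le k n
    have hc : Continuous fun z : V × V => C * ((1 + ‖z.1‖) ^ k * (1 + ‖z.2‖) ^ n) := by fun_prop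
    refine ⟨C * ((1 + ‖w₀.1‖) ^ k * (1 + ‖w₀.2‖) ^ n) + 1, ?_⟩
    filter_upwards [hc.continuousAt.eventually_lt continuousAt_const (lt_add_one _)] with z hz
    exact (hC z).trans hz.le
  · refine (contDiff_iteratedFDeriv_param (Φ := fun z y => G z y) ?_ n).continuous
    have : (Function.uncurry fun z y => G z y) = fun p : (V × V) × V =>
        cexp (I * (⟪p.2, p.1.2⟫ : ℂ)) * g (p.2 - p.1.1) := by
      ext ⟨z, y⟩; exact hG z y
    rw [this]
    refine ContDiff.mul (contDiff_const.mul (ofRealCLM.contDiff.comp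
      (contDiff_snd.inner ℝ contDiff_fst.snd))).cexp ?_
    exact (g.smooth ⊤).comp (contDiff_snd.sub contDiff_fst.fst)

end WavePacket

section ShortTimeFourier

open scoped FourierTransform
open Filter Topology

variable {V : Type*} [NormedAddCommGroup V] [InnerProductSpace ℝ V]

/-- The product `y ↦ u y * g (y - x)` of `u` with a translate of the window `g`. -/
def localize (g u : 𝓢(V, ℂ)) (x : V) : 𝓢(V, ℂ) :=
  pairing (ContinuousLinearMap.mul ℂ ℂ) u (compSubConstCLM ℂ x g)

lemma localize_apply (g u : 𝓢(V, ℂ)) (x y : V) : localize g u x y = u y * g (y - x) := rfl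

lemma exists_seminorm_localize_le (g u : 𝓢(V, ℂ)) (M k n : ℕ) :
    ∃ C, 0 ≤ C ∧ ∀ x, (1 + ‖x‖) ^ M * SchwartzMap.seminorm ℂ k n (localize g u x) ≤ C := by
  obtain ⟨Su, hSu₀, hSu⟩ := exists_forall_one_add_norm_pow_mul_le u (k + M) n
  obtain ⟨Sg, hSg₀, hSg⟩ := exists_forall_one_add_norm_pow_mul_le g M n
  refine ⟨2 ^ n * (Su * Sg), by positivity, fun x => ?_⟩
  rw [mul_comm, ← le_div_iff₀ (by positivity)]
  refine seminorm_le_bound ℂ k n _ (by positivity) fun y => ?_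
  rw [le_div_iff₀ (by positivity)]
  have hfun : ⇑(localize g u x) = fun y => u y * g (y - x) := rfl
  have hg : ContDiff ℝ n fun y => g (y - x) := (g.smooth n).comp (contDiff_id.sub contDiff_const)
  have hx : 1 + ‖x‖ ≤ (1 + ‖y‖) * (1 + ‖y - x‖) := one_add_norm_le_mul x y
  have hy : ‖y‖ ≤ 1 + ‖y‖ := by linarith
  have key := norm_iteratedFDeriv_mul_le (u.smooth n) hg y (n := n) le_rfl
  rw [hfun]
  calc ‖y‖ ^ k * ‖iteratedFDeriv ℝ n (fun y => u y * g (y - x)) y‖ * (1 + ‖x‖) ^ M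
      ≤ (1 + ‖y‖) ^ k * (∑ i ∈ Finset.range (n + 1), (n.choose i : ℝ) *
          ‖iteratedFDeriv ℝ i u y‖ * ‖iteratedFDeriv ℝ (n - i) (fun y => g (y - x)) y‖) *
          ((1 + ‖y‖) * (1 + ‖y - x‖)) ^ M := by gcongr
    _ = ∑ i ∈ Finset.range (n + 1), (n.choose i : ℝ) *
          (((1 + ‖y‖) ^ (k + M) * ‖iteratedFDeriv ℝ i u y‖) *
            ((1 + ‖y - x‖) ^ M * ‖iteratedFDeriv ℝ (n - i) (fun y => g (y - x)) y‖)) := by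
        rw [Finset.mul_sum, Finset.sum_mul, mul_pow]
        exact Finset.sum_congr rfl fun i _ => by ring
    _ ≤ 2 ^ n * (Su * Sg) := by
        refine sum_choose_mul_le fun i hi => ?_
        rw [iteratedFDeriv_comp_sub]
        exact mul_le_mul (hSu _ hi _) (hSg _ (Nat.sub_le _ _) _) (by positivity) hSu₀

variable [FiniteDimensional ℝ V] [MeasurableSpace V] [BorelSpace V]

/-- The short-time Fourier transform `(x, ξ) ↦ ∫ y, e^{-i y·ξ} u y * g (y - x)`. -/
def shortTimeFourier (g u : 𝓢(V, ℂ)) (z : V × V) : ℂ :=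
  𝓕 (localize g u z.1) ((2 * π)⁻¹ • z.2)

lemma exists_norm_fourier_le (b : ℕ) :
    ∃ (s : Finset (ℕ × ℕ)) (C : ℝ), 0 ≤ C ∧ ∀ (f : 𝓢(V, ℂ)) (η : V),
      (1 + ‖η‖) ^ b * ‖𝓕 f η‖ ≤ C * ∑ i ∈ s, SchwartzMap.seminorm ℂ i.1 i.2 f := by
  let p : Seminorm ℂ 𝓢(V, ℂ) :=
    ((Finset.Iic ((b, 0) : ℕ × ℕ)).sup fun m => SchwartzMap.seminorm ℂ m.1 m.2).comp
      (fourierTransformCLM ℂ (V := V) (E := ℂ)).toLinearMap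
  have hp : Continuous p := by
    have h := Seminorm.continuous_finsetSup (s := Finset.Iic ((b, 0) : ℕ × ℕ))
      (p := fun m => SchwartzMap.seminorm ℂ (E := V) (F := ℂ) m.1 m.2)
      fun m _ => continuous_seminorm m.1 m.2
    exact h.comp (fourierTransformCLM ℂ).continuous
  obtain ⟨s, C, -, hC⟩ := Seminorm.bound_of_continuous (schwartz_withSeminorms ℂ V ℂ) p hp
  refine ⟨s, 2 ^ b * C, by positivity, fun f η => ?_⟩
  have h1 := one_add_le_sup_seminorm_apply (𝕜 := ℂ) (m := (b, 0)) le_rfl le_rfl (𝓕 f) η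
  rw [norm_iteratedFDeriv_zero] at h1
  refine h1.trans ?_
  rw [mul_assoc]
  refine mul_le_mul_of_nonneg_left ((hC f).trans ?_) (by positivity)
  rw [smul_apply, NNReal.smul_def, smul_eq_mul]
  refine mul_le_mul_of_nonneg_left ?_ C.2
  refine (Seminorm.finset_sup_le_sum (schwartzSeminormFamily ℂ V ℂ) s f).trans_eq ?_
  simp only [sum_apply]
  rfl

lemma exists_norm_shortTimeFourier_le (g u : 𝓢(V, ℂ)) (a b : ℕ) :
    ∃ C, 0 ≤ C ∧ ∀ z : V × V,
      (1 + ‖z.1‖) ^ a * (1 + ‖z.2‖) ^ b * ‖shortTimeFourier g u z‖ ≤ C := by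
  obtain ⟨s, C, hC₀, hC⟩ := exists_norm_fourier_le (V := V) b
  choose K hK₀ hK using fun i : ℕ × ℕ => exists_seminorm_localize_le g u a i.1 i.2
  refine ⟨(2 * π) ^ b * (C * ∑ i ∈ s, K i), mul_nonneg (by positivity)
    (mul_nonneg hC₀ (Finset.sum_nonneg fun i _ => hK₀ i)), fun ⟨x, ξ⟩ => ?_⟩
  have hξ : 1 + ‖ξ‖ ≤ 2 * π * (1 + ‖(2 * π)⁻¹ • ξ‖) := by
    rw [norm_smul, norm_inv, Real.norm_of_nonneg (by positivity : 0 ≤ 2 * π), mul_add,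
      mul_inv_cancel_left₀ (by positivity)]
    linarith [Real.pi_gt_three]
  calc (1 + ‖x‖) ^ a * (1 + ‖ξ‖) ^ b * ‖shortTimeFourier g u (x, ξ)‖
      ≤ (1 + ‖x‖) ^ a * (2 * π * (1 + ‖(2 * π)⁻¹ • ξ‖)) ^ b *
          ‖shortTimeFourier g u (x, ξ)‖ := by gcongr
    _ = (2 * π) ^ b * ((1 + ‖x‖) ^ a * ((1 + ‖(2 * π)⁻¹ • ξ‖) ^ b *
          ‖𝓕 (localize g u x) ((2 * π)⁻¹ • ξ)‖)) := by rw [shortTimeFourier, mul_pow]; ring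
    _ ≤ (2 * π) ^ b * ((1 + ‖x‖) ^ a * (C * ∑ i ∈ s,
          SchwartzMap.seminorm ℂ i.1 i.2 (localize g u x))) := by
        gcongr (2 * π) ^ b * ((1 + ‖x‖) ^ a * ?_); exact hC _ _
    _ = (2 * π) ^ b * (C * ∑ i ∈ s,
          (1 + ‖x‖) ^ a * SchwartzMap.seminorm ℂ i.1 i.2 (localize g u x)) := by
        rw [← Finset.mul_sum]; ring
    _ ≤ (2 * π) ^ b * (C * ∑ i ∈ s, K i) := by gcongr with i; exact hK i x

variable {g : 𝓢(V, ℂ)} {G : V × V → 𝓢(V, ℂ)}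

lemma IsWavePacket.shortTimeFourier_eq_integral (hG : IsWavePacket g G) (u : 𝓢(V, ℂ)) (z : V × V) :
    shortTimeFourier g u z = ∫ y, u y * G (z.1, -z.2) y := by
  rw [shortTimeFourier, fourier_coe, Real.fourier_eq']
  refine integral_congr_ae (.of_forall fun y => ?_)
  simp only [localize_apply, hG _ _, smul_eq_mul, inner_smul_right, inner_neg_right]
  rw [show (((-2 * π * ((2 * π)⁻¹ * ⟪y, z.2⟫) : ℝ) : ℂ) * I) = I * ((-⟪y, z.2⟫ : ℝ) : ℂ) by
    push_cast; field_simp]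
  ring

lemma IsWavePacket.continuous_shortTimeFourier (hG : IsWavePacket g G) (u : 𝓢(V, ℂ)) :
    Continuous (shortTimeFourier g u) := by
  have h : shortTimeFourier g u = fun z : V × V => integralCLM ℂ volume
      (pairing (ContinuousLinearMap.mul ℂ ℂ) u (G (z.1, -z.2))) := by
    ext z
    exact hG.shortTimeFourier_eq_integral u z
  rw [h]
  exact (integralCLM ℂ volume).continuous.comp ((ContinuousLinearMap.continuous _).comp
    (hG.continuous.comp (continuous_fst.prodMk continuous_snd.neg)))

lemma IsWavePacket.integrable_shortTimeFourier_mul_seminorm (hG : IsWavePacket g G) (u : 𝓢(V, ℂ))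
    (k n : ℕ) :
    Integrable fun z : V × V => ‖shortTimeFourier g u z‖ * SchwartzMap.seminorm ℂ k n (G z) := by
  set r : ℕ := Module.finrank ℝ (V × V) + 1 with hr
  obtain ⟨B, hB₀, hB⟩ := hG.exists_seminorm_le k n
  obtain ⟨C, hC₀, hC⟩ := exists_norm_shortTimeFourier_le g u (r + k) (r + n)
  have : (volume : Measure (V × V)).IsAddHaarMeasure :=
    Measure.prod.instIsAddHaarMeasure volume volume
  have hint : Integrable fun z : V × V => B * C * (1 + ‖z‖) ^ (-(r : ℝ)) :=
    (integrable_one_add_norm (by rw [hr]; push_cast; linarith)).const_mul _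
  refine hint.mono' ((hG.continuous_shortTimeFourier u).norm.mul
    ((continuous_seminorm k n).comp hG.continuous)).aestronglyMeasurable (.of_forall fun z => ?_)
  rw [Real.norm_of_nonneg (by positivity), Real.rpow_neg (by positivity), Real.rpow_natCast,
    ← div_eq_mul_inv, le_div_iff₀ (by positivity)]
  have hz : 1 + ‖z‖ ≤ (1 + ‖z.1‖) * (1 + ‖z.2‖) := by
    have : ‖z‖ ≤ ‖z.1‖ + ‖z.2‖ := max_le_add_of_nonneg (norm_nonneg _) (norm_nonneg _)
    nlinarith [mul_nonneg (norm_nonneg z.1) (norm_nonneg z.2)]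
  calc ‖shortTimeFourier g u z‖ * SchwartzMap.seminorm ℂ k n (G z) * (1 + ‖z‖) ^ r
      ≤ ‖shortTimeFourier g u z‖ * (B * ((1 + ‖z.1‖) ^ k * (1 + ‖z.2‖) ^ n)) *
          ((1 + ‖z.1‖) * (1 + ‖z.2‖)) ^ r := by gcongr; exact hB z
    _ = B * ((1 + ‖z.1‖) ^ (r + k) * (1 + ‖z.2‖) ^ (r + n) * ‖shortTimeFourier g u z‖) := by
        rw [mul_pow]; ring
    _ ≤ B * C := by gcongr; exact hC z

/-- Inversion formula for the short-time Fourier transform. -/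
lemma IsWavePacket.integral_shortTimeFourier_mul (hG : IsWavePacket g G) (u : 𝓢(V, ℂ)) (y : V) :
    ∫ z : V × V, shortTimeFourier g u z * G z y =
      (2 * π) ^ Module.finrank ℝ V * (∫ t, g t * g t) * u y := by
  have hint : Integrable fun z : V × V => shortTimeFourier g u z * G z y := by
    refine (hG.integrable_shortTimeFourier_mul_seminorm u 0 0).mono' ?_ (.of_forall fun z => ?_)
    · refine ((hG.continuous_shortTimeFourier u).mul ?_).aestronglyMeasurable
      simp only [hG _ _]
      fun_prop
    · rw [norm_mul]
      gcongr
      exact norm_le_seminorm ℂ _ _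
  rw [Measure.volume_eq_prod] at hint ⊢
  rw [integral_prod _ hint]
  have hinner : ∀ x : V, ∫ ξ, shortTimeFourier g u (x, ξ) * G (x, ξ) y =
      (2 * π) ^ Module.finrank ℝ V * (u y * (g (y - x) * g (y - x))) := by
    intro x
    let φ : V → ℂ := fun η =>
      g (y - x) * (cexp (((2 * π * ⟪η, y⟫ : ℝ) : ℂ) * I) • 𝓕 (localize g u x) η)
    have h1 : ∀ ξ, shortTimeFourier g u (x, ξ) * G (x, ξ) y = φ ((2 * π)⁻¹ • ξ) := by
      intro ξ
      simp only [φ, shortTimeFourier, hG _ _, smul_eq_mul, inner_smul_left, RCLike.conj_to_real,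
        real_inner_comm ξ y]
      rw [show (((2 * π * ((2 * π)⁻¹ * ⟪ξ, y⟫) : ℝ) : ℂ) * I) = I * ((⟪ξ, y⟫ : ℝ) : ℂ) by
        push_cast; field_simp]
      ring
    refine (integral_congr_ae (.of_forall h1)).trans
      ((Measure.integral_comp_smul volume φ _).trans ?_)
    rw [ integral_const_mul, ← Real.fourierInv_eq',
      ← fourierInv_coe, FourierTransform.fourierInv_fourier_eq, localize_apply,
      ← inv_pow, inv_inv, abs_of_pos (by positivity), Complex.real_smul]
    push_cast
    ring
  simp only [hinner]
  rw [integral_const_mul, integral_const_mul, integral_sub_left_eq_self (fun t => g t * g t)]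
  ring

/-- Every continuous linear functional can be computed from its values on wave packets. -/
theorem IsWavePacket.clm_apply_eq_integral (hG : IsWavePacket g G) (ℓ : 𝓢(V, ℂ) →L[ℂ] ℂ)
    (u : 𝓢(V, ℂ)) :
    (2 * π) ^ Module.finrank ℝ V * (∫ t, g t * g t) * ℓ u =
      ∫ z : V × V, shortTimeFourier g u z * ℓ (G z) := by
  have h := SchwartzMap.clm_apply_eq_integral (μ := volume)
    (F := fun z : V × V => shortTimeFourier g u z • G z)
    (u := ((2 * π) ^ Module.finrank ℝ V * (∫ t, g t * g t) : ℂ) • u)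
    ((hG.continuous_shortTimeFourier u).smul hG.continuous)
    (fun k n => ?_) (fun y => ?_) ℓ
  · simpa using h.2
  · simpa only [map_smul_eq_mul] using hG.integrable_shortTimeFourier_mul_seminorm u k n
  · simpa using (hG.integral_shortTimeFourier_mul u y).symm

end ShortTimeFourier

end SchwartzMap

lemma ensq_nonneg {d : ℕ} (z : P d) : 0 ≤ ensq z := by unfold ensq; positivity

lemma ensq_add_le {d : ℕ} (a b : P d) : ensq (a + b) ≤ 2 * (ensq a + ensq b) := by
  simp only [ensq, Prod.fst_add, Prod.snd_add]
  have h : ∀ x y : E d, ‖x + y‖ ^ 2 ≤ 2 * (‖x‖ ^ 2 + ‖y‖ ^ 2) := fun x y =>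
    (pow_le_pow_left₀ (norm_nonneg _) (norm_add_le x y) 2).trans add_sq_le
  linarith [h a.1 b.1, h a.2 b.2]

lemma ensq_sub_comm {d : ℕ} (a b : P d) : ensq (a - b) = ensq (b - a) := by
  simp [ensq, norm_sub_rev]

lemma continuous_one_add_ensq_rpow {d : ℕ} (s : ℝ) :
    Continuous fun z : P d => (1 + ensq z) ^ (-s) := by
  have h : Continuous (ensq : P d → ℝ) := by unfold ensq; fun_prop
  exact (continuous_const.add h).rpow_const fun z => .inl
    (add_pos_of_pos_of_nonneg one_pos (ensq_nonneg z)).ne'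

lemma integrable_one_add_ensq_rpow {d : ℕ} {m : ℝ} (hm : 2 * (d : ℝ) < m) :
    Integrable fun z : P d => (1 + ensq z) ^ (-(m / 2)) := by
  have : (volume : Measure (P d)).IsAddHaarMeasure :=
    Measure.prod.instIsAddHaarMeasure volume volume
  have hd : (Module.finrank ℝ (P d) : ℝ) < m := by
    simp only [Module.finrank_prod, finrank_euclideanSpace, Fintype.card_fin]
    push_cast; linarith
  refine (integrable_rpow_neg_one_add_norm_sq hd).mono'
    (continuous_one_add_ensq_rpow _).aestronglyMeasurable (.of_forall fun z => ?_)
  have h0 := ensq_nonneg z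
  rw [Real.norm_of_nonneg (by positivity), neg_div]
  have hm0 : 0 < m := lt_of_le_of_lt (by positivity) hm
  refine Real.rpow_le_rpow_of_nonpos (by positivity) ?_ (by linarith)
  have hz : ‖z‖ ^ 2 ≤ ensq z := by
    rw [Prod.norm_def, ensq]
    rcases max_choice ‖z.1‖ ‖z.2‖ with h | h <;> rw [h] <;>
      nlinarith [sq_nonneg ‖z.1‖, sq_nonneg ‖z.2‖]
  linarith

/-- Peetre-type inequality: two brackets centred at `a` and `b` are dominated by the bracket of
`a - b`, up to a sum of brackets. -/
lemma one_add_ensq_rpow_mul_le {d : ℕ} {s : ℝ} (hs : 0 ≤ s) (w a b : P d) :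
    (1 + ensq (w - a)) ^ (-s) * (1 + ensq (a - b)) ^ (-s) ≤
      4 ^ s * (1 + ensq (w - b)) ^ (-s) *
        ((1 + ensq (w - a)) ^ (-s) + (1 + ensq (a - b)) ^ (-s)) := by
  have key : ∀ p q r : ℝ, 0 < p → 0 < q → p ≤ 4 * q → 0 ≤ r →
      r * q ^ (-s) ≤ 4 ^ s * p ^ (-s) * r := fun p q r hp hq hpq hr => by
    have h1 : q ^ (-s) ≤ 4 ^ s * p ^ (-s) := by
      have h := Real.rpow_le_rpow_of_nonpos (by positivity : 0 < p / 4) (by linarith : p / 4 ≤ q)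
        (neg_nonpos.2 hs)
      rwa [Real.div_rpow hp.le (by norm_num), Real.rpow_neg (by norm_num : (0 : ℝ) ≤ 4),
        div_inv_eq_mul, mul_comm] at h
    rw [mul_comm r]
    gcongr
  have h1 := ensq_nonneg (w - a)
  have h2 := ensq_nonneg (a - b)
  have h3 := ensq_nonneg (w - b)
  have h4 : ensq (w - b) ≤ 2 * (ensq (w - a) + ensq (a - b)) := by
    simpa using ensq_add_le (w - a) (a - b)
  rcases le_total (ensq (w - a)) (ensq (a - b)) with h | h
  · refine (key (1 + ensq (w - b)) _ _ (by positivity) (by positivity) (by linarith)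
      (by positivity)).trans ?_
    gcongr
    exact le_add_of_nonneg_right (by positivity)
  · rw [mul_comm]
    refine (key (1 + ensq (w - b)) _ _ (by positivity) (by positivity) (by linarith)
      (by positivity)).trans ?_
    gcongr
    exact le_add_of_nonneg_left (by positivity)

lemma one_add_ensq_rpow_le_of_lipschitz {d : ℕ} {s L : ℝ} (hs : 0 ≤ s)
    {a b : P d} (h : Real.sqrt (ensq b) ≤ L * Real.sqrt (ensq a)) :
    (1 + ensq a) ^ (-s) ≤ (1 + L ^ 2) ^ s * (1 + ensq b) ^ (-s) := by
  have ha := ensq_nonneg a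
  have hb := ensq_nonneg b
  have h1 : ensq b ≤ L ^ 2 * ensq a := by
    have := pow_le_pow_left₀ (Real.sqrt_nonneg _) h 2
    rwa [mul_pow, Real.sq_sqrt hb, Real.sq_sqrt ha] at this
  have h2 : (1 + ensq b) / (1 + L ^ 2) ≤ 1 + ensq a := by
    rw [div_le_iff₀ (by positivity)]
    nlinarith [sq_nonneg L]
  have h3 := Real.rpow_le_rpow_of_nonpos (by positivity) h2 (neg_nonpos.2 hs)
  rwa [Real.div_rpow (by positivity) (by positivity), Real.rpow_neg (by positivity : 0 ≤ 1 + L ^ 2),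
    div_inv_eq_mul, mul_comm] at h3

/-- A convolution of brackets along a measure preserving Lipschitz map is again a bracket. -/
lemma exists_integrable_dominating_one_add_ensq_rpow {d : ℕ} {m : ℝ} (hm : 2 * (d : ℝ) < m)
    {L : ℝ} {χ : P d → P d}
    (hlip : ∀ a b : P d, Real.sqrt (ensq (χ a - χ b)) ≤ L * Real.sqrt (ensq (a - b)))
    (hχ : MeasurePreserving χ volume volume) (w b : P d) :
    ∃ k : P d → ℝ, Integrable k ∧
      (∀ z, (1 + ensq (z - b)) ^ (-(m / 2)) * (1 + ensq (w - χ z)) ^ (-(m / 2)) ≤ k z) ∧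
      ∫ z, k z = 2 * 4 ^ (m / 2) * (1 + L ^ 2) ^ (m / 2) *
        (∫ z : P d, (1 + ensq z) ^ (-(m / 2))) * (1 + ensq (w - χ b)) ^ (-(m / 2)) := by
  have hs : 0 ≤ m / 2 := by
    have : (0 : ℝ) ≤ d := by positivity
    linarith
  set s := m / 2 with hs_def
  have : (volume : Measure (P d)).IsAddHaarMeasure :=
    Measure.prod.instIsAddHaarMeasure volume volume
  have hI : Integrable fun z : P d => (1 + ensq z) ^ (-s) := integrable_one_add_ensq_rpow hm
  have h1 : Integrable fun a : P d => (1 + ensq (w - a)) ^ (-s) := by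
    simpa only [ensq_sub_comm w] using hI.comp_sub_right w
  have h2 : Integrable fun a : P d => (1 + ensq (a - χ b)) ^ (-s) := hI.comp_sub_right (χ b)
  set H : P d → ℝ := fun a => (1 + ensq (w - a)) ^ (-s) + (1 + ensq (a - χ b)) ^ (-s) with hH
  have hHint : Integrable H := h1.add h2
  have hHval : ∫ a, H a = 2 * ∫ z : P d, (1 + ensq z) ^ (-s) := by
    simp only [hH]
    rw [integral_add h1 h2]
    simp only [ensq_sub_comm w]
    rw [integral_sub_right_eq_self (fun z : P d => (1 + ensq z) ^ (-s)),
      integral_sub_right_eq_self (fun z : P d => (1 + ensq z) ^ (-s))]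
    ring
  refine ⟨fun z => (1 + L ^ 2) ^ s * (4 ^ s * (1 + ensq (w - χ b)) ^ (-s)) * H (χ z),
    (hχ.integrable_comp_of_integrable hHint).const_mul _, fun z => ?_, ?_⟩
  · have hw := ensq_nonneg (w - χ z)
    calc (1 + ensq (z - b)) ^ (-s) * (1 + ensq (w - χ z)) ^ (-s)
        ≤ (1 + L ^ 2) ^ s * (1 + ensq (χ z - χ b)) ^ (-s) * (1 + ensq (w - χ z)) ^ (-s) := by
          gcongr
          exact one_add_ensq_rpow_le_of_lipschitz hs (hlip z b)
      _ = (1 + L ^ 2) ^ s * ((1 + ensq (w - χ z)) ^ (-s) * (1 + ensq (χ z - χ b)) ^ (-s)) := by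
          ring
      _ ≤ (1 + L ^ 2) ^ s * (4 ^ s * (1 + ensq (w - χ b)) ^ (-s) * H (χ z)) := by
          gcongr (1 + L ^ 2) ^ s * ?_
          exact one_add_ensq_rpow_mul_le hs _ _ _
      _ = _ := by ring
  · have hmap : ∫ z, H (χ z) = ∫ a, H a := by
      have h := integral_map (μ := volume) hχ.aemeasurable (f := H)
        (by rw [hχ.map_eq]; exact hHint.aestronglyMeasurable)
      rw [hχ.map_eq] at h
      exact h.symm
    rw [integral_const_mul, hmap, hHval]
    ring

namespace SchwartzMap

variable {d : ℕ}

/-- The dilation `φ ↦ c * φ (a • ·)` of Schwartz functions. -/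
def dilation (c : ℂ) {a : ℝ} (ha : a ≠ 0) : SCH d →L[ℂ] SCH d :=
  c • compCLMOfContinuousLinearEquiv ℂ (ContinuousLinearEquiv.smulLeft (Units.mk0 a ha))

lemma dilation_apply (c : ℂ) {a : ℝ} (ha : a ≠ 0) (φ : SCH d) (x : E d) :
    dilation c ha φ x = c * φ (a • x) := rfl

lemma dilation_dilation_inv {c : ℂ} (hc : c ≠ 0) {a : ℝ} (ha : a ≠ 0) (φ : SCH d) :
    dilation c ha (dilation c⁻¹ (inv_ne_zero ha) φ) = φ := by
  ext x
  simp [dilation_apply, smul_smul, ha, hc]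

lemma integral_dilation_mul_dilation (c : ℂ) {a : ℝ} (ha : a ≠ 0)
    (hca : c * c = (|a| ^ d : ℝ)) (φ ψ : SCH d) :
    ∫ x, dilation c ha φ x * dilation c ha ψ x = ∫ x, φ x * ψ x := by
  have h : ∀ x, dilation c ha φ x * dilation c ha ψ x =
      (c * c) * (fun y => φ y * ψ y) (a • x) := fun x => by
    simp only [dilation_apply]; ring
  rw [integral_congr_ae (.of_forall h), integral_const_mul,
    Measure.integral_comp_smul volume (fun y => φ y * ψ y), hca, finrank_euclideanSpace,
    Fintype.card_fin, abs_inv, abs_pow, Complex.real_smul, ← mul_assoc, ← Complex.ofReal_mul,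
    mul_inv_cancel₀ (by positivity), Complex.ofReal_one, one_mul]

end SchwartzMap

lemma integral_gaussian_mul_self (d : ℕ) :
    ∫ t : E d, ((Real.exp (-‖t‖ ^ 2 / 2) : ℂ) * Real.exp (-‖t‖ ^ 2 / 2)) =
      ((π ^ ((d : ℝ) / 2) : ℝ) : ℂ) := by
  have h : ∀ t : E d, ((Real.exp (-‖t‖ ^ 2 / 2) : ℂ) * Real.exp (-‖t‖ ^ 2 / 2)) =
      ((Real.exp (-1 * ‖t‖ ^ 2) : ℝ) : ℂ) := fun t => by
    rw [← Complex.ofReal_mul, ← Real.exp_add]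
    congr 2
    ring
  simp only [h]
  rw [integral_complex_ofReal, GaussianFourier.integral_rexp_neg_mul_sq_norm one_pos]
  simp

/-- the semiclassical composition theorem: if `T₁ ∈ FIO_ℏ(χ₁)` and
`T₂ ∈ FIO_ℏ(χ₂)` (wave-packet matrices of the rescaled operators
`T_{i,ℏ} = D_{ℏ^{-1/2}} T_i D_{ℏ^{1/2}}` dominated by `A_i·⟨w - χ_i z⟩^{-m}`, `m > 2d`),
with `χ₁` a Lipschitz (constant `L`) measure preserving bijection and `χ₂` any map, then
the rescaling of `T₁ T₂` has wave-packet matrix dominated by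
`C·A₁·A₂·⟨w - χ₁(χ₂ z)⟩^{-m}` with `C = C(m,d,L)` independent of `ℏ ∈ (0,1]`.
Here `G z = π(z)g`, `Gbar z = conj (π(z)g)` (Gaussian window), `Dh` is the dilation
`D_{ℏ^{1/2}}` on Schwartz functions, so that
`⟨D_{ℏ^{-1/2}}(T₁(T₂(D_{ℏ^{1/2}} π(z)g))), π(w)g⟩ = T₁ (T₂ (Dh (G z))) (Dh (Gbar w))`. -/
theorem stmt13 (d : ℕ) (hd : 1 ≤ d) (m : ℝ) (hm : 2 * (d : ℝ) < m) (L : ℝ) (hL : 0 < L) :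
    ∃ C > (0 : ℝ), ∀ (G Gbar : P d → SCH d),
      (∀ (z : P d) (y : E d), G z y =
        Complex.exp (Complex.I * (⟪y, z.2⟫ : ℂ)) * Real.exp (-‖y - z.1‖ ^ 2 / 2)) →
      (∀ (z : P d) (y : E d), Gbar z y =
        Complex.exp (-Complex.I * (⟪y, z.2⟫ : ℂ)) * Real.exp (-‖y - z.1‖ ^ 2 / 2)) →
      ∀ (χ₁ : P d → P d), Function.Bijective χ₁ →
        (∀ a b : P d, Real.sqrt (ensq (χ₁ a - χ₁ b)) ≤ L * Real.sqrt (ensq (a - b))) →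
        MeasurePreserving χ₁ volume volume →
      ∀ (χ₂ : P d → P d),
      ∀ h : ℝ, 0 < h → h ≤ 1 →
      ∀ Dh : SCH d → SCH d,
        (∀ (φ : SCH d) (x : E d), Dh φ x =
          (h ^ (-(d : ℝ) / 4) : ℝ) * φ ((h ^ (-(1 : ℝ) / 2) : ℝ) • x)) →
      ∀ (T₁ : SCH d →L[ℂ] (SCH d →L[ℂ] ℂ)) (T₂ : SCH d →L[ℂ] SCH d) (A₁ A₂ : ℝ),
        0 ≤ A₁ → 0 ≤ A₂ →
      (∀ z w : P d, ‖T₁ (Dh (G z)) (Dh (Gbar w))‖ ≤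
          A₁ * (1 + ensq (w - χ₁ z)) ^ (-(m / 2))) →
      (∀ z w : P d, ‖∫ y, T₂ (Dh (G z)) y * Dh (Gbar w) y‖ ≤
          A₂ * (1 + ensq (w - χ₂ z)) ^ (-(m / 2))) →
      ∀ z w : P d, ‖T₁ (T₂ (Dh (G z))) (Dh (Gbar w))‖ ≤
          C * A₁ * A₂ * (1 + ensq (w - χ₁ (χ₂ z))) ^ (-(m / 2)) := by
  set I : ℝ := ∫ z : P d, (1 + ensq z) ^ (-(m / 2)) with hI
  have hI₀ : 0 ≤ I := integral_nonneg fun z => by have := ensq_nonneg z; positivity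
  set κ : ℝ := (2 * π) ^ d * π ^ ((d : ℝ) / 2) with hκ
  have hκ₀ : 0 < κ := by positivity
  set K : ℝ := 2 * 4 ^ (m / 2) * (1 + L ^ 2) ^ (m / 2) * I with hK
  have hK₀ : 0 ≤ K := by positivity
  refine ⟨K / κ + 1, by positivity, ?_⟩
  intro G Gbar hG hGbar χ₁ _ hlip hχ₁ χ₂ h hh _ Dh hDh T₁ T₂ A₁ A₂ hA₁ hA₂ hT₁ hT₂ z w
  have hg : ∀ y, G 0 y = Real.exp (-‖y‖ ^ 2 / 2) := fun y => by simp [hG]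
  have hGw : SchwartzMap.IsWavePacket (G 0) G := fun z y => by rw [hG, hg]
  have hbar : ∀ z, Gbar z = G (z.1, -z.2) := fun z => by
    ext y
    simp [hG, hGbar]
  have ha : (h ^ (-(1 : ℝ) / 2) : ℝ) ≠ 0 := by positivity
  have hc : ((h ^ (-(d : ℝ) / 4) : ℝ) : ℂ) ≠ 0 := by
    exact_mod_cast (by positivity : (h ^ (-(d : ℝ) / 4) : ℝ) ≠ 0)
  have hca : ((h ^ (-(d : ℝ) / 4) : ℝ) : ℂ) * ((h ^ (-(d : ℝ) / 4) : ℝ) : ℂ) =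
      (|h ^ (-(1 : ℝ) / 2)| ^ d : ℝ) := by
    rw [← Complex.ofReal_mul, ← Real.rpow_add hh, abs_of_pos (by positivity),
      ← Real.rpow_natCast, ← Real.rpow_mul hh.le]
    congr 2
    ring
  have hD : ∀ φ, Dh φ = SchwartzMap.dilation ((h ^ (-(d : ℝ) / 4) : ℝ) : ℂ) ha φ := fun φ => by
    ext x
    rw [hDh, SchwartzMap.dilation_apply]
  set D : SCH d →L[ℂ] SCH d := SchwartzMap.dilation ((h ^ (-(d : ℝ) / 4) : ℝ) : ℂ) ha with hDdef
  simp only [hD] at hT₁ hT₂ ⊢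
  let ℓ : SCH d →L[ℂ] ℂ :=
    { toFun := fun φ => T₁ (D φ) (D (Gbar w))
      map_add' := fun φ ψ => by simp
      map_smul' := fun c φ => by simp
      cont := (continuous_eval_const (D (Gbar w))).comp (T₁.continuous.comp D.continuous) }
  set v : SCH d := SchwartzMap.dilation ((h ^ (-(d : ℝ) / 4) : ℝ) : ℂ)⁻¹ (inv_ne_zero ha)
    (T₂ (D (G z))) with hv
  have hDv : D v = T₂ (D (G z)) := SchwartzMap.dilation_dilation_inv hc ha _
  have hstft : ∀ z', ‖SchwartzMap.shortTimeFourier (G 0) v z'‖ ≤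
      A₂ * (1 + ensq (z' - χ₂ z)) ^ (-(m / 2)) := fun z' => by
    rw [hGw.shortTimeFourier_eq_integral, ← hbar,
      ← SchwartzMap.integral_dilation_mul_dilation _ ha hca, ← hDdef, hDv]
    exact hT₂ z z'
  obtain ⟨k, hk, hle, hval⟩ := exists_integrable_dominating_one_add_ensq_rpow hm hlip hχ₁ w
    (χ₂ z)
  have hmain := hGw.clm_apply_eq_integral ℓ v
  have hκg : ((2 * π) ^ Module.finrank ℝ (E d) * (∫ t, G 0 t * G 0 t) : ℂ) = κ := by
    simp only [hg]
    rw [integral_gaussian_mul_self, finrank_euclideanSpace, Fintype.card_fin, hκ]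
    push_cast
    rfl
  have hbound : κ * ‖ℓ v‖ ≤ A₁ * A₂ * (K * (1 + ensq (w - χ₁ (χ₂ z))) ^ (-(m / 2))) := by
    rw [hκg] at hmain
    rw [← Real.norm_of_nonneg hκ₀.le, ← Complex.norm_real, ← norm_mul, hmain, ← hval,
      ← integral_const_mul]
    refine norm_integral_le_of_norm_le (hk.const_mul _) (.of_forall fun z' => ?_)
    have h1 := ensq_nonneg (z' - χ₂ z)
    rw [norm_mul]
    calc _ ≤ (A₂ * (1 + ensq (z' - χ₂ z)) ^ (-(m / 2))) *
          (A₁ * (1 + ensq (w - χ₁ z')) ^ (-(m / 2))) :=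
        mul_le_mul (hstft z') (hT₁ z' w) (norm_nonneg _) (by positivity)
      _ = A₁ * A₂ * ((1 + ensq (z' - χ₂ z)) ^ (-(m / 2)) *
          (1 + ensq (w - χ₁ z')) ^ (-(m / 2))) := by ring
      _ ≤ A₁ * A₂ * k z' := by gcongr; exact hle z'
  have hw := ensq_nonneg (w - χ₁ (χ₂ z))
  rw [← hDv]
  calc ‖T₁ (D v) (D (Gbar w))‖
      ≤ A₁ * A₂ * (K * (1 + ensq (w - χ₁ (χ₂ z))) ^ (-(m / 2))) / κ := by
        rw [le_div_iff₀ hκ₀, mul_comm]; exact hbound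
    _ = K / κ * A₁ * A₂ * (1 + ensq (w - χ₁ (χ₂ z))) ^ (-(m / 2)) := by ring
    _ ≤ _ := by gcongr; linarith
end
end
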